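/- arXiv:2308.09384 — 2 statements merged into one kernel-verified Lean document; each statement's English description precedes it below -/
import Mathlib

section
/- Let R be a reduced commutative ring and n ≥ 1. If φ: A_n(R) → A_n(R) is an automorphism of R-algebras, then deg(φ^{-1}) ≤ deg(φ)^{2n−1}. -/
/-- The commutation relations defining the `n`-th Weyl algebra over `R`:
`[x_i, x_j] = 0`, `[∂_i, ∂_j] = 0`, `[∂_i, x_j] = δ_{ij}`.  Generators are indexed by
`Fin n ⊕ Fin n`, with `.inl i` corresponding to `x_i` and `.inr i` to `∂_i`. -/
inductive WeylRel (R : Type*) [CommRing R] (n : ℕ) :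
    FreeAlgebra R (Fin n ⊕ Fin n) → FreeAlgebra R (Fin n ⊕ Fin n) → Prop
  | xx (i j : Fin n) : WeylRel R n
      (FreeAlgebra.ι R (.inl i) * FreeAlgebra.ι R (.inl j))
      (FreeAlgebra.ι R (.inl j) * FreeAlgebra.ι R (.inl i))
  | dd (i j : Fin n) : WeylRel R n
      (FreeAlgebra.ι R (.inr i) * FreeAlgebra.ι R (.inr j))
      (FreeAlgebra.ι R (.inr j) * FreeAlgebra.ι R (.inr i))
  | dx (i j : Fin n) : WeylRel R n
      (FreeAlgebra.ι R (.inr i) * FreeAlgebra.ι R (.inl j))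
      (FreeAlgebra.ι R (.inl j) * FreeAlgebra.ι R (.inr i) + if i = j then 1 else 0)

/-- The `n`-th Weyl algebra `A_n(R)` over a commutative ring `R`, as the quotient of the
free `R`-algebra on `x_1, …, x_n, ∂_1, …, ∂_n` by the Weyl relations. -/
abbrev WeylAlgebra (R : Type*) [CommRing R] (n : ℕ) : Type _ := RingQuot (WeylRel R n)

/-- The generator `x_i` of the Weyl algebra. -/
noncomputable def wX (R : Type*) [CommRing R] {n : ℕ} (i : Fin n) : WeylAlgebra R n :=
  RingQuot.mkAlgHom R (WeylRel R n) (FreeAlgebra.ι R (.inl i))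

/-- The generator `∂_i` of the Weyl algebra. -/
noncomputable def wD (R : Type*) [CommRing R] {n : ℕ} (i : Fin n) : WeylAlgebra R n :=
  RingQuot.mkAlgHom R (WeylRel R n) (FreeAlgebra.ι R (.inr i))

/-- The standard monomial `x^u ∂^v = x_1^{u_1} ⋯ x_n^{u_n} ∂_1^{v_1} ⋯ ∂_n^{v_n}`. -/
noncomputable def stdMon (R : Type*) [CommRing R] {n : ℕ} (u v : Fin n → ℕ) :
    WeylAlgebra R n :=
  (List.ofFn fun i => wX R i ^ u i).prod * (List.ofFn fun i => wD R i ^ v i).prod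

/-- The degree of an element of the Weyl algebra: the least `d` such that the element is an
`R`-linear combination of standard monomials `x^u ∂^v` with `|u| + |v| ≤ d`. -/
noncomputable def wdeg {R : Type*} [CommRing R] {n : ℕ} (f : WeylAlgebra R n) : ℕ :=
  sInf {d : ℕ | f ∈ Submodule.span R {g | ∃ u v : Fin n → ℕ,
      (∑ i, u i) + (∑ i, v i) ≤ d ∧ g = stdMon R u v}}

/-- The degree of an endomorphism of the Weyl algebra: the maximum of the degrees of the
images of the generators `x_1, …, x_n, ∂_1, …, ∂_n`. -/
noncomputable def weylHomDeg {R : Type*} [CommRing R] {n : ℕ}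
    (φ : WeylAlgebra R n →ₐ[R] WeylAlgebra R n) : ℕ :=
  Finset.univ.sup fun i : Fin n => max (wdeg (φ (wX R i))) (wdeg (φ (wD R i)))

open MvPolynomial in
/-- polynomials all of whose monomials have degree `< k` -/
noncomputable def degLt (R : Type*) [CommRing R] (s : Type*) (k : ℕ) :
    Submodule R (MvPolynomial s R) := restrictSupport R {m | m.degree < k}

namespace WeylAux

open MvPolynomial

section DegLt
variable {R : Type*} [CommRing R] {s : Type*}

lemma mem_degLt {k : ℕ} {p : MvPolynomial s R} :
    p ∈ degLt R s k ↔ ∀ m, coeff m p ≠ 0 → m.degree < k := by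
  unfold degLt
  rw [mem_restrictSupport_iff]
  constructor
  · intro h m hm
    exact h (by simpa using hm)
  · intro h m hm
    exact h m (by simpa using hm)

lemma degLt_mono {j k : ℕ} (h : j ≤ k) {p : MvPolynomial s R} (hp : p ∈ degLt R s j) :
    p ∈ degLt R s k := by
  rw [mem_degLt] at *
  intro m hm
  exact (hp m hm).trans_le h

lemma mem_degLt_succ {k : ℕ} {p : MvPolynomial s R} :
    p ∈ degLt R s (k + 1) ↔ p.totalDegree ≤ k := by
  rw [mem_degLt, totalDegree, Finset.sup_le_iff]
  simp only [mem_support_iff, Nat.lt_succ_iff]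
  rfl

lemma mul_mem_degLt {a b : ℕ} {p q : MvPolynomial s R} (hp : p ∈ degLt R s (a + 1))
    (hq : q ∈ degLt R s b) : p * q ∈ degLt R s (a + b) := by
  classical
  rw [mem_degLt] at *
  intro m hm
  rw [coeff_mul] at hm
  obtain ⟨⟨i, j⟩, hij, h⟩ := Finset.exists_ne_zero_of_sum_ne_zero hm
  have h1 := hp i (left_ne_zero_of_mul h)
  have h2 := hq j (right_ne_zero_of_mul h)
  rw [Finset.HasAntidiagonal.mem_antidiagonal] at hij
  simp only at hij h1 h2
  rw [← hij, map_add]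
  omega

lemma X_mem_degLt (i : s) : (X i : MvPolynomial s R) ∈ degLt R s (1 + 1) := by
  classical
  rw [mem_degLt]
  intro m hm
  rw [coeff_X] at hm
  split_ifs at hm with h
  · subst h; simp
  · simp at hm

lemma pderiv_mem_degLt {k : ℕ} (i : s) {p : MvPolynomial s R} (hp : p ∈ degLt R s (k + 1)) :
    pderiv i p ∈ degLt R s k := by
  rw [mem_degLt] at *
  intro m hm
  rw [coeff_pderiv] at hm
  have := hp _ (left_ne_zero_of_mul hm)
  simp at this
  omega

end DegLt

section Rep
variable {R : Type*} [CommRing R] {n : ℕ}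

/-- universal property -/
noncomputable def wlift {B : Type*} [Ring B] [Algebra R B] (a b : Fin n → B)
    (hxx : ∀ i j, a i * a j = a j * a i) (hdd : ∀ i j, b i * b j = b j * b i)
    (hdx : ∀ i j, b i * a j = a j * b i + if i = j then 1 else 0) :
    WeylAlgebra R n →ₐ[R] B :=
  RingQuot.liftAlgHom R ⟨FreeAlgebra.lift R (Sum.elim a b), by
    intro x y h
    cases h with
    | xx i j => simpa using hxx i j
    | dd i j => simpa using hdd i j
    | dx i j =>
      have := hdx i j
      split_ifs at * <;> simpa using this⟩

lemma wlift_X {B : Type*} [Ring B] [Algebra R B] (a b : Fin n → B) (hxx hdd hdx) (i : Fin n) :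
    wlift (R := R) a b hxx hdd hdx (wX R i) = a i := by
  simp [wlift, wX]

lemma wlift_D {B : Type*} [Ring B] [Algebra R B] (a b : Fin n → B) (hxx hdd hdx) (i : Fin n) :
    wlift (R := R) a b hxx hdd hdx (wD R i) = b i := by
  simp [wlift, wD]

lemma wX_comm (i j : Fin n) : wX R i * wX R j = wX R j * wX R i := by
  unfold wX
  rw [← map_mul, ← map_mul]
  exact RingQuot.mkAlgHom_rel R (WeylRel.xx i j)

lemma wD_comm (i j : Fin n) : wD R i * wD R j = wD R j * wD R i := by
  unfold wD
  rw [← map_mul, ← map_mul]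
  exact RingQuot.mkAlgHom_rel R (WeylRel.dd i j)

lemma wDX (i j : Fin n) : wD R i * wX R j = wX R j * wD R i + if i = j then 1 else 0 := by
  have := RingQuot.mkAlgHom_rel R (WeylRel.dx (R := R) i j)
  unfold wD wX
  rw [← map_mul, ← map_mul, this]
  split_ifs <;> simp

lemma weyl_ind {p : WeylAlgebra R n → Prop} (hr : ∀ r, p (algebraMap R _ r))
    (hX : ∀ i, p (wX R i)) (hD : ∀ i, p (wD R i)) (hadd : ∀ a b, p a → p b → p (a + b))
    (hmul : ∀ a b, p a → p b → p (a * b)) (a : WeylAlgebra R n) : p a := by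
  obtain ⟨f, rfl⟩ := RingQuot.mkAlgHom_surjective R (WeylRel R n) a
  induction f using FreeAlgebra.induction with
  | grade0 r => simpa using hr r
  | grade1 x =>
    cases x with
    | inl i => exact hX i
    | inr i => exact hD i
  | mul a b ha hb => rw [map_mul]; exact hmul _ _ ha hb
  | add a b ha hb => rw [map_add]; exact hadd _ _ ha hb

lemma weyl_hom_ext {B : Type*} [Ring B] [Algebra R B] {f g : WeylAlgebra R n →ₐ[R] B}
    (hX : ∀ i, f (wX R i) = g (wX R i)) (hD : ∀ i, f (wD R i) = g (wD R i)) (a) : f a = g a := by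
  induction a using weyl_ind with
  | hr r => simp
  | hX i => exact hX i
  | hD i => exact hD i
  | hadd a b ha hb => simp [ha, hb]
  | hmul a b ha hb => simp [ha, hb]

/-- the representation on polynomials -/
noncomputable def rep (R : Type*) [CommRing R] (n : ℕ) :
    WeylAlgebra R n →ₐ[R] Module.End R (MvPolynomial (Fin n ⊕ Fin n) R) :=
  wlift (fun i => LinearMap.mulLeft R (X (.inl i)))
    (fun i => (pderiv (.inl i)).toLinearMap + LinearMap.mulLeft R (X (.inr i)))
    (by intro i j; refine LinearMap.ext fun p => ?_; simp [mul_left_comm])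
    (by
      intro i j
      refine LinearMap.ext fun p => ?_
      have h : pderiv (.inl i) (pderiv (.inl j) p) =
        (pderiv (.inl j) (pderiv (.inl i) p) : MvPolynomial (Fin n ⊕ Fin n) R) := by
        classical
        ext m
        simp only [coeff_pderiv]
        by_cases hij : i = j
        · subst hij; ring
        · have hji : ¬ j = i := fun h => hij h.symm
          rw [add_right_comm]; simp [hij, hji]; ring
      simp [h]
      ring)
    (by
      intro i j
      refine LinearMap.ext fun p => ?_
      by_cases h : i = j
      · subst h; simp [mul_left_comm]; ring
      · have : (Sum.inl j : Fin n ⊕ Fin n) ≠ .inl i := fun h' => h (Sum.inl.inj h').symm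
        simp [h, mul_left_comm, pderiv_X_of_ne this]; ring)

lemma rep_X (i : Fin n) (p) : rep R n (wX R i) p = X (.inl i) * p := by
  simp [rep, wlift_X]

lemma rep_D (i : Fin n) (p) :
    rep R n (wD R i) p = pderiv (.inl i) p + X (.inr i) * p := by
  simp [rep, wlift_D]

/-- the symbol -/
noncomputable def sym (R : Type*) [CommRing R] (n : ℕ) :
    WeylAlgebra R n →ₗ[R] MvPolynomial (Fin n ⊕ Fin n) R where
  toFun a := rep R n a 1
  map_add' a b := by simp
  map_smul' r a := by simp

lemma sym_apply (a : WeylAlgebra R n) : sym R n a = rep R n a 1 := rfl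

lemma sym_mul (a b : WeylAlgebra R n) : sym R n (a * b) = rep R n a (sym R n b) := by
  simp [sym_apply]

/-- inverse of symbol -/
noncomputable def tau (R : Type*) [CommRing R] (n : ℕ) :
    MvPolynomial (Fin n ⊕ Fin n) R →ₗ[R] WeylAlgebra R n :=
  (basisMonomials (Fin n ⊕ Fin n) R).constr R
    (fun m => stdMon R (fun i => m (.inl i)) (fun i => m (.inr i)))

lemma tau_monomial (m : (Fin n ⊕ Fin n) →₀ ℕ) :
    tau R n (monomial m 1) = stdMon R (fun i => m (.inl i)) (fun i => m (.inr i)) := by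
  have := (basisMonomials (Fin n ⊕ Fin n) R).constr_basis R
    (fun m => stdMon R (fun i => m (.inl i)) (fun i => m (.inr i))) m
  simpa [tau] using this

end Rep

section Prods

lemma ofFn_mul_self {B : Type*} [Ring B] {n : ℕ} (g : Fin n → B)
    (hg : ∀ i j, g i * g j = g j * g i) (u : Fin n → ℕ) (i : Fin n) :
    (List.ofFn fun j => g j ^ ((u + Pi.single i 1 : Fin n → ℕ) j)).prod
      = g i * (List.ofFn fun j => g j ^ u j).prod := by
  induction n with
  | zero => exact i.elim0
  | succ n ih =>
    simp only [List.ofFn_succ, List.prod_cons]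
    induction i using Fin.cases with
    | zero =>
      simp [pow_succ', mul_assoc]
    | succ i =>
      have := ih (fun j => g j.succ) (fun i j => hg _ _) (fun j => u j.succ) i
      have h2 : ∀ j : Fin n, (u + Pi.single i.succ 1 : Fin (n+1) → ℕ) j.succ
          = ((fun j => u j.succ) + Pi.single i 1 : Fin n → ℕ) j := by
        intro j; simp [Pi.single_apply]
      simp only [h2, this]
      have h3 : Commute (g i.succ) (g 0) := hg _ _
      rw [← mul_assoc, ← mul_assoc, (h3.pow_right (u 0)).eq]
      simp

lemma commute_ofFn {B : Type*} [Ring B] {n : ℕ} (g : Fin n → B) (D : B)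
    (hD : ∀ j, Commute D (g j)) (u : Fin n → ℕ) :
    Commute D (List.ofFn fun j => g j ^ u j).prod := by
  apply Commute.list_prod_right
  intro x hx
  rw [List.mem_ofFn] at hx
  obtain ⟨j, rfl⟩ := hx
  exact (hD j).pow_right _

lemma D_mul_pow {B : Type*} [Ring B] (D x : B) (h : D * x = x * D + 1) (k : ℕ) :
    D * x ^ k = x ^ k * D + k * x ^ (k - 1) := by
  induction k with
  | zero => simp
  | succ k ih =>
    rw [pow_succ, ← mul_assoc, ih, add_mul, mul_assoc, h]
    rcases k with _ | k
    · simp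
    · simp [pow_succ, mul_add, add_mul, mul_assoc]; abel

lemma D_mul_ofFn {B : Type*} [Ring B] {n : ℕ} (g : Fin n → B) (D : B) (i : Fin n)
    (hD : ∀ j, D * g j = g j * D + if i = j then 1 else 0) (u : Fin n → ℕ) :
    D * (List.ofFn fun j => g j ^ u j).prod = (List.ofFn fun j => g j ^ u j).prod * D
      + u i * (List.ofFn fun j => g j ^ ((u - Pi.single i 1 : Fin n → ℕ) j)).prod := by
  induction n with
  | zero => exact i.elim0
  | succ n ih =>
    simp only [List.ofFn_succ, List.prod_cons]
    induction i using Fin.cases with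
    | zero =>
      have h1 := D_mul_pow D (g 0) (by simpa using hD 0) (u 0)
      have h2 := commute_ofFn (fun j : Fin n => g j.succ) D
        (fun j => by
          have := hD j.succ
          rw [if_neg (Fin.succ_ne_zero j).symm, add_zero] at this
          exact this) (fun j => u j.succ)
      rw [← mul_assoc, h1, add_mul, mul_assoc, h2.eq]
      simp [mul_assoc]
    | succ i =>
      have := ih (fun j => g j.succ) i (fun j => by simpa using hD j.succ) (fun j => u j.succ)
      have h2 : ∀ j : Fin n, (u - Pi.single i.succ 1 : Fin (n+1) → ℕ) j.succ
          = ((fun j => u j.succ) - Pi.single i 1 : Fin n → ℕ) j := by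
        intro j; simp [Pi.single_apply]
      have h3 : Commute D (g 0) := by
        have := hD 0
        rw [if_neg (Fin.succ_ne_zero i), add_zero] at this
        exact this
      simp only [h2]
      rw [← mul_assoc, (h3.pow_right (u 0)).eq, mul_assoc, this, mul_add, mul_assoc]
      congr 1
      rw [← mul_assoc, (Nat.commute_cast (g 0 ^ u 0) (u i.succ)).eq, mul_assoc]
      simp

end Prods

section Sym
variable {R : Type*} [CommRing R] {n : ℕ}

lemma X_mul_stdMon (u v : Fin n → ℕ) (i : Fin n) :
    wX R i * stdMon R u v = stdMon R (u + Pi.single i 1) v := by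
  unfold stdMon
  rw [ofFn_mul_self _ wX_comm, mul_assoc]

lemma D_mul_stdMon (u v : Fin n → ℕ) (i : Fin n) :
    wD R i * stdMon R u v = stdMon R u (v + Pi.single i 1)
      + (u i : R) • stdMon R (u - Pi.single i 1) v := by
  unfold stdMon
  rw [ofFn_mul_self _ wD_comm, ← mul_assoc, D_mul_ofFn (wX R) (wD R i) i (wDX i) u, add_mul,
    mul_assoc, Algebra.smul_def, mul_assoc, map_natCast]

lemma tau_X (i : Fin n) (p) : tau R n (X (.inl i) * p) = wX R i * tau R n p := by
  have : (tau R n) ∘ₗ (LinearMap.mulLeft R (X (.inl i)))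
      = (LinearMap.mulLeft R (wX R i)) ∘ₗ tau R n := by
    apply (basisMonomials (Fin n ⊕ Fin n) R).ext
    intro m
    simp only [coe_basisMonomials, LinearMap.comp_apply, LinearMap.mulLeft_apply, tau_monomial,
      X_mul_stdMon]
    rw [X, monomial_mul, one_mul, tau_monomial]
    congr 1
    · funext j
      simp [add_comm, Finsupp.single_apply, Pi.single_apply, eq_comm]
    · funext j
      simp
  exact LinearMap.congr_fun this p

lemma tau_D (i : Fin n) (p) :
    tau R n (pderiv (.inl i) p + X (.inr i) * p) = wD R i * tau R n p := by
  have : (tau R n) ∘ₗ ((pderiv (.inl i)).toLinearMap + LinearMap.mulLeft R (X (.inr i)))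
      = (LinearMap.mulLeft R (wD R i)) ∘ₗ tau R n := by
    apply (basisMonomials (Fin n ⊕ Fin n) R).ext
    intro m
    simp only [coe_basisMonomials, LinearMap.comp_apply, LinearMap.mulLeft_apply, tau_monomial,
      D_mul_stdMon, LinearMap.add_apply, map_add, Derivation.coeFn_coe]
    rw [X, monomial_mul, one_mul, tau_monomial, pderiv_monomial, one_mul, add_comm]
    congr 1
    · congr 1
      · funext j
        simp
      · funext j
        simp [add_comm, Finsupp.single_apply, Pi.single_apply, eq_comm]
    · have : (monomial (m - Finsupp.single (.inl i) 1) ((m (.inl i) : ℕ) : R)) =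
        ((m (.inl i) : ℕ) : R) • monomial (m - Finsupp.single (.inl i) 1) (1 : R) := by
        rw [smul_monomial, smul_eq_mul, mul_one]
      rw [this, map_smul, tau_monomial]
      congr 2
      · funext j
        simp [Finsupp.single_apply, Pi.single_apply, eq_comm]
      · funext j
        simp
  exact LinearMap.congr_fun this p

lemma tau_rep (a : WeylAlgebra R n) (p) : tau R n (rep R n a p) = a * tau R n p := by
  induction a using weyl_ind generalizing p with
  | hr r => rw [AlgHom.commutes, Module.algebraMap_end_apply, map_smul, Algebra.smul_def]
  | hX i => rw [rep_X, tau_X]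
  | hD i => rw [rep_D, tau_D]
  | hadd a b ha hb => simp [ha, hb, add_mul]
  | hmul a b ha hb => simp [ha, hb, mul_assoc]

lemma stdMon_zero : stdMon R (0 : Fin n → ℕ) 0 = 1 := by
  have : ∀ k, (List.replicate k (1 : WeylAlgebra R n)).prod = 1 := by simp
  simp [stdMon]

lemma tau_one : tau R n 1 = 1 := by
  have := tau_monomial (R := R) (n := n) 0
  rw [show (monomial 0 (1 : R) : MvPolynomial (Fin n ⊕ Fin n) R) = 1 from rfl] at this
  rw [this]
  exact stdMon_zero

lemma tau_sym (a : WeylAlgebra R n) : tau R n (sym R n a) = a := by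
  rw [sym_apply, tau_rep, tau_one, mul_one]

lemma rep_Y (a : WeylAlgebra R n) (i : Fin n) (p) :
    rep R n a (X (.inr i) * p) = X (.inr i) * rep R n a p := by
  induction a using weyl_ind generalizing p with
  | hr r => simp [Module.algebraMap_end_apply]
  | hX i => simp [rep_X, mul_left_comm]
  | hD i => simp [rep_D, mul_left_comm, mul_add]
  | hadd a b ha hb => simp [ha, hb, mul_add]
  | hmul a b ha hb => simp [ha, hb]

lemma sym_X_mul (i : Fin n) (a) : sym R n (wX R i * a) = X (.inl i) * sym R n a := by
  rw [sym_mul, rep_X]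

lemma sym_mul_D (i : Fin n) (a) : sym R n (a * wD R i) = X (.inr i) * sym R n a := by
  rw [sym_mul, sym_apply, rep_D]
  simp only [pderiv_one, zero_add]
  rw [rep_Y, sym_apply]

lemma stdMon_mul_D (u v : Fin n → ℕ) (i : Fin n) :
    stdMon R u v * wD R i = stdMon R u (v + Pi.single i 1) := by
  unfold stdMon
  rw [ofFn_mul_self _ wD_comm, mul_assoc]
  congr 1
  exact (commute_ofFn (wD R) (wD R i) (fun j => wD_comm i j) v).eq.symm

lemma tau_Y (i : Fin n) (p) : tau R n (X (.inr i) * p) = tau R n p * wD R i := by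
  have : (tau R n) ∘ₗ (LinearMap.mulLeft R (X (.inr i)))
      = (LinearMap.mulRight R (wD R i)) ∘ₗ tau R n := by
    apply (basisMonomials (Fin n ⊕ Fin n) R).ext
    intro m
    simp only [coe_basisMonomials, LinearMap.comp_apply, LinearMap.mulLeft_apply, tau_monomial,
      LinearMap.mulRight_apply, stdMon_mul_D]
    rw [X, monomial_mul, one_mul, tau_monomial]
    congr 1
    · funext j
      simp
    · funext j
      simp [add_comm, Finsupp.single_apply, Pi.single_apply, eq_comm]
  exact LinearMap.congr_fun this p

lemma sym_one : sym R n 1 = 1 := by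
  simp [sym_apply]

lemma sym_tau (p) : sym R n (tau R n p) = p := by
  induction p using MvPolynomial.induction_on with
  | C r =>
    rw [show (C r : MvPolynomial (Fin n ⊕ Fin n) R) = r • 1 by rw [smul_eq_C_mul, mul_one],
      map_smul, map_smul, tau_one, sym_one]
  | add p q hp hq => simp [hp, hq]
  | mul_X p i hp =>
    rw [mul_comm]
    cases i with
    | inl i => rw [tau_X, sym_X_mul, hp]
    | inr i => rw [tau_Y, sym_mul_D, hp]

lemma sym_inj {a b : WeylAlgebra R n} (h : sym R n a = sym R n b) : a = b := by
  rw [← tau_sym a, h, tau_sym]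

/-- symbol approximates the action, up to lower terms -/
def Good (a : WeylAlgebra R n) (d : ℕ) : Prop :=
  sym R n a ∈ degLt R _ (d + 1) ∧ ∀ e, ∀ p ∈ degLt R _ (e + 1),
    rep R n a p - sym R n a * p ∈ degLt R _ (d + e)

lemma Good.rep_mem {a : WeylAlgebra R n} {d : ℕ} (h : Good a d) {e : ℕ} {p}
    (hp : p ∈ degLt R _ (e + 1)) : rep R n a p ∈ degLt R _ (d + e + 1) := by
  have h1 := degLt_mono (Nat.le_succ _) (h.2 e p hp)
  have h2 := mul_mem_degLt h.1 hp
  have := Submodule.add_mem _ h1 h2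
  simpa using this

lemma good_one : Good (1 : WeylAlgebra R n) 0 := by
  constructor
  · rw [sym_one, mem_degLt_succ]; simp
  · intro e p hp
    simp [sym_one]

lemma Good.mono {a : WeylAlgebra R n} {d e : ℕ} (h : Good a d) (hde : d ≤ e) : Good a e :=
  ⟨degLt_mono (by omega) h.1, fun k p hp => degLt_mono (by omega) (h.2 k p hp)⟩

lemma Good.add {a b : WeylAlgebra R n} {d : ℕ} (ha : Good a d) (hb : Good b d) :
    Good (a + b) d := by
  constructor
  · rw [map_add]; exact Submodule.add_mem _ ha.1 hb.1
  · intro e p hp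
    have := Submodule.add_mem _ (ha.2 e p hp) (hb.2 e p hp)
    convert this using 1
    simp; ring

lemma Good.smul {a : WeylAlgebra R n} {d : ℕ} (r : R) (ha : Good a d) :
    Good (r • a) d := by
  constructor
  · rw [map_smul]; exact Submodule.smul_mem _ _ ha.1
  · intro e p hp
    have := Submodule.smul_mem _ r (ha.2 e p hp)
    convert this using 1
    simp [smul_sub]

lemma Good.X_mul {a : WeylAlgebra R n} {d : ℕ} (i : Fin n) (ha : Good a d) :
    Good (wX R i * a) (d + 1) := by
  constructor
  · rw [sym_X_mul]; exact degLt_mono (by omega) (mul_mem_degLt (X_mem_degLt _) ha.1)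
  · intro e p hp
    have := mul_mem_degLt (X_mem_degLt (.inl i)) (ha.2 e p hp)
    rw [sym_X_mul, map_mul, Module.End.mul_apply, rep_X]
    rw [mul_sub, ← mul_assoc] at this
    exact degLt_mono (by omega) this

lemma Good.D_mul {a : WeylAlgebra R n} {d : ℕ} (i : Fin n) (ha : Good a d) :
    Good (wD R i * a) (d + 1) := by
  have h1 := pderiv_mem_degLt (.inl i) ha.1
  constructor
  · rw [sym_mul, rep_D]
    refine Submodule.add_mem _ (degLt_mono (by omega) h1) ?_
    exact degLt_mono (by omega) (mul_mem_degLt (X_mem_degLt _) ha.1)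
  · intro e p hp
    have h2 := mul_mem_degLt (X_mem_degLt (.inr i)) (ha.2 e p hp)
    have h3 := pderiv_mem_degLt (.inl i) (ha.rep_mem hp)
    have h4 := mul_mem_degLt (degLt_mono (Nat.le_succ _) h1) hp
    rw [sym_mul, map_mul, Module.End.mul_apply, rep_D, rep_D]
    have h5 := Submodule.sub_mem _ (Submodule.add_mem _
      (degLt_mono (show 1 + (d + e) ≤ d + 1 + e by omega) h2)
      (degLt_mono (show d + e ≤ d + 1 + e by omega) h3))
      (degLt_mono (show d + (e + 1) ≤ d + 1 + e by omega) h4)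
    convert h5 using 1
    ring

lemma Good.mul {a b : WeylAlgebra R n} {d e : ℕ} (ha : Good a d) (hb : Good b e) :
    Good (a * b) (d + e) := by
  constructor
  · rw [sym_mul]; exact ha.rep_mem hb.1
  · intro k p hp
    have h1 := ha.2 _ _ (hb.rep_mem hp)
    have h2 := mul_mem_degLt ha.1 (hb.2 k p hp)
    have h3 := mul_mem_degLt hp (ha.2 _ _ hb.1)
    rw [sym_mul, map_mul, Module.End.mul_apply]
    have h5 := Submodule.sub_mem _ (Submodule.add_mem _
      (degLt_mono (show d + (e + k) ≤ d + e + k by omega) h1)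
      (degLt_mono (show d + (e + k) ≤ d + e + k by omega) h2))
      (degLt_mono (show k + (d + e) ≤ d + e + k by omega) h3)
    convert h5 using 1
    ring

lemma good_X (i : Fin n) : Good (wX R i) 1 := by
  simpa using good_one.X_mul (R := R) i

lemma good_D (i : Fin n) : Good (wD R i) 1 := by
  simpa using good_one.D_mul (R := R) i

lemma filt_ind {Q : WeylAlgebra R n → ℕ → Prop} (one : Q 1 0)
    (X_mul : ∀ a k i, Q a k → Q (wX R i * a) (k + 1))
    (mul_D : ∀ a k i, Q a k → Q (a * wD R i) (k + 1))
    (add : ∀ a b k, Q a k → Q b k → Q (a + b) k)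
    (smul : ∀ (r : R) a k, Q a k → Q (r • a) k)
    (mono : ∀ a j k, j ≤ k → Q a j → Q a k)
    {f : WeylAlgebra R n} {d : ℕ} (h : (sym R n f).totalDegree ≤ d) : Q f d := by
  have hm : ∀ m : (Fin n ⊕ Fin n) →₀ ℕ, Q (tau R n (monomial m 1)) m.degree := by
    intro m
    induction m using Finsupp.induction with
    | zero =>
      rw [show (monomial 0 (1 : R) : MvPolynomial (Fin n ⊕ Fin n) R) = 1 from rfl, tau_one]
      simpa using one
    | single_add i b m hi hb ih =>
      clear hb
      induction b with
      | zero => simpa using ih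
      | succ b ihb =>
        have h1 : Finsupp.single i (b + 1) + m = Finsupp.single i 1 + (Finsupp.single i b + m) := by
          rw [← add_assoc, ← Finsupp.single_add, add_comm 1 b]
        have h2 : (monomial (Finsupp.single i (b + 1) + m) (1 : R))
            = X i * monomial (Finsupp.single i b + m) 1 := by
          rw [h1, X, monomial_mul, one_mul]
        have h3 : (Finsupp.single i (b + 1) + m).degree
            = (Finsupp.single i b + m).degree + 1 := by
          rw [h1, map_add, add_comm, Finsupp.degree_single]
        rw [h2, h3]
        cases i with
        | inl i => rw [tau_X]; exact X_mul _ _ _ ihb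
        | inr i => rw [tau_Y]; exact mul_D _ _ _ ihb
  have h0 : ∀ s : Finset ((Fin n ⊕ Fin n) →₀ ℕ), (∀ m ∈ s, m.degree ≤ d) →
      Q (tau R n (∑ m ∈ s, monomial m (coeff m (sym R n f)))) d := by
    classical
    intro s
    induction s using Finset.induction_on with
    | empty =>
      intro _
      have := mono _ _ _ (Nat.zero_le d) (smul 0 _ _ one)
      simpa using this
    | insert a s ha ih =>
      intro hs
      rw [Finset.sum_insert ha, map_add]
      refine add _ _ _ ?_ (ih fun m hm => hs m (Finset.mem_insert_of_mem hm))
      have := mono _ _ _ (hs a (Finset.mem_insert_self _ _))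
        (smul (coeff a (sym R n f)) _ _ (hm a))
      rwa [← map_smul, smul_monomial, smul_eq_mul, mul_one] at this
  have := h0 (sym R n f).support (by
    intro m hm
    exact Nat.lt_succ_iff.mp (mem_degLt.mp (mem_degLt_succ.mpr h) m (by simpa using hm)))
  rwa [← as_sum, tau_sym] at this

lemma good_of_le {f : WeylAlgebra R n} {d : ℕ} (h : (sym R n f).totalDegree ≤ d) : Good f d :=
  filt_ind (Q := Good) good_one (fun _ _ i h => h.X_mul i) (fun _ _ i h => h.mul (good_D i))
    (fun _ _ _ h h' => h.add h') (fun r _ _ h => h.smul r) (fun _ _ _ hjk h => h.mono hjk) h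

lemma sym_mul_le (a b : WeylAlgebra R n) : (sym R n (a * b)).totalDegree ≤
    (sym R n a).totalDegree + (sym R n b).totalDegree :=
  mem_degLt_succ.mp ((good_of_le le_rfl).mul (good_of_le le_rfl)).1

lemma sym_mul_eq [IsDomain R] {a b : WeylAlgebra R n} (ha : a ≠ 0) (hb : b ≠ 0) :
    (sym R n (a * b)).totalDegree = (sym R n a).totalDegree + (sym R n b).totalDegree := by
  apply le_antisymm (sym_mul_le a b)
  have ha' : sym R n a ≠ 0 := fun h => ha (sym_inj (by simpa using h))
  have hb' : sym R n b ≠ 0 := fun h => hb (sym_inj (by simpa using h))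
  have h1 := (good_of_le (le_refl (sym R n a).totalDegree)).2 _ _
    (mem_degLt_succ.mpr (le_refl (sym R n b).totalDegree))
  rw [← sym_mul] at h1
  by_contra hlt
  push Not at hlt
  have h2 : sym R n (a * b) ∈ degLt R _ ((sym R n a).totalDegree + (sym R n b).totalDegree) :=
    degLt_mono hlt (mem_degLt_succ.mpr le_rfl)
  have h3 := Submodule.sub_mem _ h2 h1
  rw [sub_sub_cancel] at h3
  have h4 := totalDegree_mul_of_isDomain ha' hb'
  have h5 : sym R n a * sym R n b ≠ 0 := mul_ne_zero ha' hb'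
  obtain ⟨m, hm, hm2⟩ := Finset.exists_mem_eq_sup (sym R n a * sym R n b).support
    (by simpa using h5) (fun s => s.sum fun _ e => e)
  have h6 := mem_degLt.mp h3 m (by simpa using hm)
  rw [← h4, totalDegree, hm2] at h6
  exact lt_irrefl _ h6

lemma wdeg_eq (f : WeylAlgebra R n) : wdeg f = (sym R n f).totalDegree := by
  have key : ∀ d, (f ∈ Submodule.span R {g | ∃ u v : Fin n → ℕ,
      (∑ i, u i) + (∑ i, v i) ≤ d ∧ g = stdMon R u v}) ↔ (sym R n f).totalDegree ≤ d := by
    intro d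
    rw [← mem_restrictTotalDegree, restrictTotalDegree, restrictSupport_eq_span]
    have : {g | ∃ u v : Fin n → ℕ, (∑ i, u i) + (∑ i, v i) ≤ d ∧ g = stdMon R u v}
      = (tau R n) '' ((monomial · (1 : R)) '' {m | (m.sum fun _ e => e) ≤ d}) := by
      ext g
      simp only [Set.mem_ofPred_eq, Set.mem_image, exists_exists_and_eq_and]
      constructor
      · rintro ⟨u, v, h, rfl⟩
        refine ⟨Finsupp.equivFunOnFinite.symm (Sum.elim u v), ?_, ?_⟩
        · rw [Finsupp.sum_fintype _ _ (by simp)]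
          simpa using h
        · rw [tau_monomial]; simp
      · rintro ⟨m, h, rfl⟩
        refine ⟨_, _, ?_, tau_monomial m⟩
        rw [Finsupp.sum_fintype _ _ (by simp)] at h
        simpa using h
    rw [this, Submodule.span_image]
    constructor
    · rintro ⟨p, hp, rfl⟩
      rw [sym_tau]; exact hp
    · intro h
      exact ⟨_, h, tau_sym f⟩
  unfold wdeg
  simp only [key]
  exact IsLeast.csInf_eq ⟨Set.mem_ofPred_eq ▸ le_rfl, fun d hd => hd⟩

lemma hom_deg_le (φ : WeylAlgebra R n →ₐ[R] WeylAlgebra R n) {f : WeylAlgebra R n} {N : ℕ}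
    (h : (sym R n f).totalDegree ≤ N) :
    (sym R n (φ f)).totalDegree ≤ weylHomDeg φ * N := by
  have hX : ∀ i, (sym R n (φ (wX R i))).totalDegree ≤ weylHomDeg φ := fun i => by
    rw [← wdeg_eq]
    exact (le_max_left _ _).trans (Finset.le_sup (f := fun i : Fin n =>
      max (wdeg (φ (wX R i))) (wdeg (φ (wD R i)))) (Finset.mem_univ i))
  have hD : ∀ i, (sym R n (φ (wD R i))).totalDegree ≤ weylHomDeg φ := fun i => by
    rw [← wdeg_eq]
    exact (le_max_right _ _).trans (Finset.le_sup (f := fun i : Fin n =>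
      max (wdeg (φ (wX R i))) (wdeg (φ (wD R i)))) (Finset.mem_univ i))
  refine filt_ind (Q := fun a k => (sym R n (φ a)).totalDegree ≤ weylHomDeg φ * k)
    ?_ ?_ ?_ ?_ ?_ ?_ h
  · simp [sym_one]
  · intro a k i h
    rw [map_mul]
    refine (sym_mul_le _ _).trans ?_
    have := hX i
    rw [mul_add]; omega
  · intro a k i h
    rw [map_mul]
    refine (sym_mul_le _ _).trans ?_
    have := hD i
    rw [mul_add]; omega
  · intro a b k ha hb
    rw [map_add, map_add]
    exact (totalDegree_add _ _).trans (max_le ha hb)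
  · intro r a k ha
    rw [map_smul, map_smul]
    exact (totalDegree_smul_le _ _).trans ha
  · intro a j k hjk h
    exact h.trans (Nat.mul_le_mul_left _ hjk)

end Sym

section BaseChange
variable {R : Type*} [CommRing R] {n : ℕ} (K : Type*) [CommRing K] [Algebra R K]

/-- base change -/
noncomputable def bc : WeylAlgebra R n →ₐ[R] WeylAlgebra K n :=
  wlift (wX K) (wD K) wX_comm wD_comm wDX

lemma bc_stdMon (u v : Fin n → ℕ) : bc K (stdMon R u v) = stdMon K u v := by
  simp [stdMon, bc, map_list_prod, List.map_ofFn, Function.comp_def, wlift_X, wlift_D]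

lemma bc_tau (p) : bc K (tau R n p) = tau K n (map (algebraMap R K) p) := by
  induction p using MvPolynomial.induction_on' with
  | monomial m r =>
    have h1 : (monomial m r : MvPolynomial (Fin n ⊕ Fin n) R) = r • monomial m 1 := by
      rw [smul_monomial, smul_eq_mul, mul_one]
    have h2 : (monomial m (algebraMap R K r) : MvPolynomial (Fin n ⊕ Fin n) K)
        = algebraMap R K r • monomial m 1 := by
      rw [smul_monomial, smul_eq_mul, mul_one]
    rw [map_monomial, h1, h2, map_smul, map_smul, map_smul, tau_monomial, tau_monomial, bc_stdMon,
      algebraMap_smul]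
  | add p q hp hq => simp [hp, hq]

lemma sym_bc (f : WeylAlgebra R n) : sym K n (bc K f) = map (algebraMap R K) (sym R n f) := by
  conv_lhs => rw [← tau_sym f, bc_tau, sym_tau]

/-- base change of an endomorphism -/
noncomputable def bcHom (φ : WeylAlgebra R n →ₐ[R] WeylAlgebra R n) :
    WeylAlgebra K n →ₐ[K] WeylAlgebra K n :=
  wlift (fun i => bc K (φ (wX R i))) (fun i => bc K (φ (wD R i)))
    (fun i j => by simp only [← map_mul, wX_comm])
    (fun i j => by simp only [← map_mul, wD_comm])
    (fun i j => by
      rw [← map_mul, ← map_mul, wDX, map_add, map_add, map_mul, map_mul]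
      split_ifs <;> simp)

lemma bcHom_bc (φ : WeylAlgebra R n →ₐ[R] WeylAlgebra R n) (a : WeylAlgebra R n) :
    bcHom K φ (bc K a) = bc K (φ a) := by
  refine weyl_hom_ext (f := ((bcHom K φ).restrictScalars R).comp (bc K))
    (g := (bc K).comp φ) ?_ ?_ a
  · intro i
    simp [bc, wlift_X, bcHom]
  · intro i
    simp [bc, wlift_D, bcHom]

lemma bc_X (i : Fin n) : bc K (wX R i) = wX K i := by simp [bc, wlift_X]
lemma bc_D (i : Fin n) : bc K (wD R i) = wD K i := by simp [bc, wlift_D]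

lemma bcHom_comp (φ ψ : WeylAlgebra R n →ₐ[R] WeylAlgebra R n) (h : ∀ a, φ (ψ a) = a) (a) :
    bcHom K φ (bcHom K ψ a) = a := by
  refine weyl_hom_ext (f := (bcHom K φ).comp (bcHom K ψ)) (g := AlgHom.id K _) ?_ ?_ a
  · intro i
    rw [AlgHom.comp_apply, ← bc_X (R := R), bcHom_bc, bcHom_bc, h]; rfl
  · intro i
    rw [AlgHom.comp_apply, ← bc_D (R := R), bcHom_bc, bcHom_bc, h]; rfl

/-- base change of an automorphism -/
noncomputable def bcEquiv (φ : WeylAlgebra R n ≃ₐ[R] WeylAlgebra R n) :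
    WeylAlgebra K n ≃ₐ[K] WeylAlgebra K n :=
  AlgEquiv.ofAlgHom (bcHom K φ.toAlgHom) (bcHom K φ.symm.toAlgHom)
    (AlgHom.ext fun a => bcHom_comp K _ _ (by simp) a)
    (AlgHom.ext fun a => bcHom_comp K _ _ (by simp) a)

lemma bcHom_deg (φ : WeylAlgebra R n →ₐ[R] WeylAlgebra R n) :
    weylHomDeg (bcHom K φ) ≤ weylHomDeg φ := by
  unfold weylHomDeg
  apply Finset.sup_mono_fun
  intro i _
  apply max_le_max
  · rw [← bc_X (R := R), bcHom_bc, wdeg_eq, wdeg_eq, sym_bc]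
    exact Finset.sup_mono (support_map_subset _ _)
  · rw [← bc_D (R := R), bcHom_bc, wdeg_eq, wdeg_eq, sym_bc]
    exact Finset.sup_mono (support_map_subset _ _)

end BaseChange

section Reduce
variable {R : Type*} [CommRing R] [IsReduced R] {s : Type*}

lemma exists_residue (p : MvPolynomial s R) (hp : p ≠ 0) : ∃ (I : Ideal R) (_ : I.IsPrime),
    p.totalDegree ≤ (map (algebraMap R I.ResidueField) p).totalDegree := by
  obtain ⟨m, hm, hm2⟩ := Finset.exists_mem_eq_sup p.support
    (by simpa using hp) (fun s => s.sum fun _ e => e)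
  have hc : coeff m p ∉ nilradical R := by
    rw [nilradical_eq_zero]; simpa using hm
  rw [nilradical_eq_sInf, Ideal.mem_sInf] at hc
  push Not at hc
  obtain ⟨I, hI, hI2⟩ := hc
  have hI' : I.IsPrime := hI
  refine ⟨I, hI', ?_⟩
  rw [totalDegree, hm2]
  apply le_totalDegree
  rw [mem_support_iff, coeff_map, Ne, Ideal.algebraMap_residueField_eq_zero]
  exact hI2

end Reduce

section Count

lemma numerics (k d e : ℕ)
    (h : ∀ M : ℕ, e * (M + k).choose k ≤ (d * (M + e) + k).choose k) : e ≤ d ^ k := by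
  have h1 : ∀ M : ℕ, e * M ^ k ≤ (d * M + (d * e + k)) ^ k := by
    intro M
    calc e * M ^ k ≤ e * (M + 1).ascFactorial k :=
          Nat.mul_le_mul_left _ ((Nat.pow_le_pow_left (Nat.le_succ M) k).trans
            (Nat.pow_succ_le_ascFactorial _ _))
      _ = k.factorial * (e * (M + k).choose k) := by
          rw [Nat.ascFactorial_eq_factorial_mul_choose]; ring
      _ ≤ k.factorial * (d * (M + e) + k).choose k := Nat.mul_le_mul_left _ (h M)
      _ = (d * (M + e) + 1).ascFactorial k := by
          rw [Nat.ascFactorial_eq_factorial_mul_choose]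
      _ ≤ (d * (M + e) + k) ^ k := Nat.ascFactorial_le_pow_add _ _
      _ = _ := by ring
  have h2 : ∀ M : ℕ, 1 ≤ M → (e : ℝ) ≤ ((d : ℝ) + ((d * e + k : ℕ) : ℝ) / (M : ℝ)) ^ k := by
    intro M hM
    have hM' : (0 : ℝ) < M := by exact_mod_cast hM
    have h3 : (e : ℝ) * (M : ℝ) ^ k ≤ ((d : ℝ) * M + ((d * e + k : ℕ) : ℝ)) ^ k := by
      exact_mod_cast h1 M
    have h4 : (d : ℝ) + ((d * e + k : ℕ) : ℝ) / (M : ℝ)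
        = ((d : ℝ) * M + ((d * e + k : ℕ) : ℝ)) / M := by
      field_simp
    rw [h4, div_pow, le_div_iff₀ (by positivity)]
    exact h3
  have h5 : Filter.Tendsto (fun M : ℕ => ((d : ℝ) + ((d * e + k : ℕ) : ℝ) / (M : ℝ)) ^ k)
      Filter.atTop (nhds (((d : ℝ) + 0) ^ k)) :=
    (tendsto_const_nhds.add (tendsto_const_div_atTop_nhds_zero_nat _)).pow k
  have h6 := ge_of_tendsto h5 (Filter.eventually_atTop.mpr ⟨1, h2⟩)
  rw [add_zero] at h6
  exact_mod_cast h6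

/-- exponents supported in `t` of total degree at most `N` -/
noncomputable def expo {s : Type*} [DecidableEq s] (t : Finset s) (N : ℕ) : Finset (s →₀ ℕ) :=
  (Finset.range (N + 1)).biUnion fun j => t.finsuppAntidiag j

lemma mem_expo {s : Type*} [DecidableEq s] {t : Finset s} {N : ℕ} {m : s →₀ ℕ} :
    m ∈ expo t N ↔ m.degree ≤ N ∧ m.support ⊆ t := by
  simp only [expo, Finset.mem_biUnion, Finset.mem_range, Finset.mem_finsuppAntidiag]
  constructor
  · rintro ⟨j, hj, h1, h2⟩
    refine ⟨?_, h2⟩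
    have : m.degree = t.sum m := by
      rw [Finsupp.degree_apply]
      exact Finset.sum_subset h2 (by intro x _ hx; simpa using hx)
    omega
  · rintro ⟨h1, h2⟩
    refine ⟨m.degree, by omega, ?_, h2⟩
    rw [Finsupp.degree_apply]
    exact (Finset.sum_subset h2 (by intro x _ hx; simpa using hx)).symm

lemma card_expo {s : Type*} [DecidableEq s] (t : Finset s) (N : ℕ) :
    (expo t N).card = (N + t.card).choose t.card := by
  have h1 : (expo t N).card = ∑ j ∈ Finset.range (N + 1), (t.card + j - 1).choose j := by
    rw [expo, Finset.card_biUnion]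
    · simp only [Finset.card_finsuppAntidiag_nat_eq_choose]
    · intro i _ j _ hij
      rw [Function.onFun, Finset.disjoint_left]
      intro m hm hm'
      rw [Finset.mem_finsuppAntidiag] at hm hm'
      exact hij (hm.1.symm.trans hm'.1)
  rw [h1]
  have h2 : ∀ N, ∑ j ∈ Finset.range (N + 1), (t.card + j - 1).choose j = (N + t.card).choose N := by
    intro N
    induction N with
    | zero => simp
    | succ N ih =>
      rw [Finset.sum_range_succ, ih, show t.card + (N + 1) - 1 = N + t.card by omega,
        show N + 1 + t.card = (N + t.card) + 1 by omega, Nat.choose_succ_succ]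
  rw [h2]
  exact Nat.choose_symm_add

lemma finrank_restrict (K : Type*) [Field K] (s : Type*) [Fintype s] (N : ℕ) :
    Module.finrank K (restrictTotalDegree s K N) = (N + Fintype.card s).choose (Fintype.card s) := by
  classical
  have hset : {m : s →₀ ℕ | (m.sum fun _ e => e) ≤ N} = ↑(expo (Finset.univ : Finset s) N) := by
    ext m
    rw [Finset.mem_coe, mem_expo]
    simp only [Finset.subset_univ, and_true]
    rfl
  have hb := Module.finrank_eq_nat_card_basis (basisRestrictSupport K
    {m : s →₀ ℕ | (m.sum fun _ e => e) ≤ N})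
  have h2 : Module.finrank K (restrictTotalDegree s K N)
    = Nat.card {m : s →₀ ℕ | (m.sum fun _ e => e) ≤ N} := hb
  rw [h2, hset, ← Finset.card_univ, ← card_expo (Finset.univ : Finset s) N]
  simp

lemma choose_growth (k M e : ℕ) : e * (M + k).choose k + (M + (k + 1)).choose (k + 1)
    ≤ (M + e + (k + 1)).choose (k + 1) := by
  induction e with
  | zero => simp
  | succ e ih =>
    rw [show M + (e + 1) + (k + 1) = (M + e + (k + 1)) + 1 by omega, Nat.choose_succ_succ']
    have : (M + k).choose k ≤ (M + e + (k + 1)).choose k := Nat.choose_le_choose k (by omega)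
    rw [add_mul]
    omega

lemma dim_count {K : Type*} [Field K] {s : Type*} [Fintype s] (k d e : ℕ)
    (hs : Fintype.card s = k + 1) (z : s)
    (L G : MvPolynomial s K →ₗ[K] MvPolynomial s K)
    (hL : ∀ p N, p.totalDegree ≤ N → (L p).totalDegree ≤ d * N)
    (hG : ∀ p, p ≠ 0 → X z ∣ L p → ∃ q, p = G q ∧ p.totalDegree = e + q.totalDegree) :
    e ≤ d ^ k := by
  classical
  apply numerics
  intro M
  set V := restrictTotalDegree s K (M + e) with hV
  set S := expo (Finset.univ.erase z) (d * (M + e)) with hS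
  let l : V →ₗ[K] (S → K) := (LinearMap.pi fun u : S => (lcoeff K u.1) ∘ₗ L) ∘ₗ V.subtype
  have hrn := l.finrank_range_add_finrank_ker
  have hcS : S.card = (d * (M + e) + k).choose k := by
    rw [hS, card_expo, Finset.card_erase_of_mem (Finset.mem_univ z), Finset.card_univ, hs]
    rfl
  have hr : Module.finrank K (LinearMap.range l) ≤ S.card := by
    refine (Submodule.finrank_le _).trans ?_
    simp
  have hk : Module.finrank K (LinearMap.ker l) ≤ (M + (k + 1)).choose (k + 1) := by
    rw [← Submodule.finrank_map_subtype_eq V (LinearMap.ker l)]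
    have hle : (LinearMap.ker l).map V.subtype ≤ (restrictTotalDegree s K M).map G := by
      rintro _ ⟨⟨p, hp⟩, hpk, rfl⟩
      rw [hV, mem_restrictTotalDegree] at hp
      show p ∈ _
      by_cases hp0 : p = 0
      · rw [hp0]; exact Submodule.zero_mem _
      have hdvd : X z ∣ L p := by
        rw [X_dvd_iff_modMonomial_eq_zero]
        ext u
        rw [coeff_zero]
        by_cases hu : Finsupp.single z 1 ≤ u
        · exact coeff_modMonomial_of_le _ hu
        · rw [coeff_modMonomial_of_not_le _ hu]
          by_cases hdeg : u.degree ≤ d * (M + e)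
          · have huS : u ∈ S := by
              rw [hS, mem_expo]
              refine ⟨hdeg, fun x hx => ?_⟩
              rw [Finset.mem_erase]
              refine ⟨?_, Finset.mem_univ _⟩
              rintro rfl
              apply hu
              rw [Finsupp.single_le_iff]
              rw [Finsupp.mem_support_iff] at hx
              omega
            have := congrFun (LinearMap.mem_ker.mp hpk) ⟨u, huS⟩
            simpa [l] using this
          · apply coeff_eq_zero_of_totalDegree_lt
            have := hL p _ hp
            rw [Finsupp.degree_apply] at hdeg
            omega
      obtain ⟨q, hq, hq2⟩ := hG p hp0 hdvd
      refine ⟨q, ?_, hq.symm⟩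
      rw [SetLike.mem_coe, mem_restrictTotalDegree]
      omega
    refine (Submodule.finrank_mono hle).trans ((Submodule.finrank_map_le _ _).trans ?_)
    rw [finrank_restrict, hs]
  have hVr : Module.finrank K V = (M + e + (k + 1)).choose (k + 1) := by
    rw [hV, finrank_restrict, hs]
  have := choose_growth k M e
  omega

end Count

section Main

lemma field_case {K : Type*} [Field K] {n : ℕ} (hn : 1 ≤ n)
    (φ : WeylAlgebra K n ≃ₐ[K] WeylAlgebra K n) (i : Fin n) :
    (sym K n (φ.symm (wX K i))).totalDegree ≤ weylHomDeg φ.toAlgHom ^ (2 * n - 1) ∧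
    (sym K n (φ.symm (wD K i))).totalDegree ≤ weylHomDeg φ.toAlgHom ^ (2 * n - 1) := by
  have hs : Fintype.card (Fin n ⊕ Fin n) = (2 * n - 1) + 1 := by simp; omega
  have hL : ∀ p N, p.totalDegree ≤ N →
      ((sym K n ∘ₗ φ.toLinearMap ∘ₗ tau K n) p).totalDegree ≤ weylHomDeg φ.toAlgHom * N := by
    intro p N h
    exact hom_deg_le φ.toAlgHom (by rwa [sym_tau])
  constructor
  · refine dim_count _ _ _ hs (.inl i) (sym K n ∘ₗ φ.toLinearMap ∘ₗ tau K n)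
      (sym K n ∘ₗ LinearMap.mulLeft K (φ.symm (wX K i)) ∘ₗ tau K n) hL ?_
    rintro p hp ⟨r, hr⟩
    have h1 : φ (tau K n p) = wX K i * tau K n r := by
      apply sym_inj
      rw [sym_X_mul, sym_tau]; exact hr
    have h2 : tau K n p = φ.symm (wX K i) * φ.symm (tau K n r) := by
      rw [← map_mul, ← h1, AlgEquiv.symm_apply_apply]
    have h3 : p = sym K n (φ.symm (wX K i) * φ.symm (tau K n r)) := by rw [← h2, sym_tau]
    refine ⟨sym K n (φ.symm (tau K n r)), ?_, ?_⟩
    · simp only [LinearMap.comp_apply, tau_sym, LinearMap.mulLeft_apply]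
      exact h3
    · conv_lhs => rw [h3]
      apply sym_mul_eq
      · intro h0; apply hp; rw [h3, h0, zero_mul, map_zero]
      · intro h0; apply hp; rw [h3, h0, mul_zero, map_zero]
  · refine dim_count _ _ _ hs (.inr i) (sym K n ∘ₗ φ.toLinearMap ∘ₗ tau K n)
      (sym K n ∘ₗ LinearMap.mulRight K (φ.symm (wD K i)) ∘ₗ tau K n) hL ?_
    rintro p hp ⟨r, hr⟩
    have h1 : φ (tau K n p) = tau K n r * wD K i := by
      apply sym_inj
      rw [sym_mul_D, sym_tau]; exact hr
    have h2 : tau K n p = φ.symm (tau K n r) * φ.symm (wD K i) := by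
      rw [← map_mul, ← h1, AlgEquiv.symm_apply_apply]
    have h3 : p = sym K n (φ.symm (tau K n r) * φ.symm (wD K i)) := by rw [← h2, sym_tau]
    refine ⟨sym K n (φ.symm (tau K n r)), ?_, ?_⟩
    · simp only [LinearMap.comp_apply, tau_sym, LinearMap.mulRight_apply]
      exact h3
    · conv_lhs => rw [h3]
      rw [add_comm]
      apply sym_mul_eq
      · intro h0; apply hp; rw [h3, h0, zero_mul, map_zero]
      · intro h0; apply hp; rw [h3, h0, mul_zero, map_zero]

end Main

end WeylAux

/-- Let `R` be a reduced commutative ring and `n ≥ 1`.  If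
`φ : A_n(R) → A_n(R)` is an automorphism of `R`-algebras, then
`deg(φ⁻¹) ≤ deg(φ)^(2n−1)`. -/
theorem weylAlgebra_automorphism_inverse_degree_bound (R : Type*) [CommRing R] [IsReduced R]
    (n : ℕ) (hn : 1 ≤ n) (φ : WeylAlgebra R n ≃ₐ[R] WeylAlgebra R n) :
    weylHomDeg φ.symm.toAlgHom ≤ weylHomDeg φ.toAlgHom ^ (2 * n - 1) := by
  classical
  refine Finset.sup_le fun i _ => max_le ?_ ?_
  · rw [WeylAux.wdeg_eq]
    by_cases h0 : WeylAux.sym R n (φ.symm.toAlgHom (wX R i)) = 0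
    · rw [h0]; simp
    obtain ⟨I, hI, hle⟩ := WeylAux.exists_residue _ h0
    refine hle.trans ?_
    have h1 := (WeylAux.field_case hn (WeylAux.bcEquiv I.ResidueField φ) i).1
    have h2 : (WeylAux.bcEquiv I.ResidueField φ).symm (wX I.ResidueField i)
        = WeylAux.bc I.ResidueField (φ.symm.toAlgHom (wX R i)) := by
      rw [← WeylAux.bcHom_bc, WeylAux.bc_X]; rfl
    rw [h2, WeylAux.sym_bc] at h1
    exact h1.trans (Nat.pow_le_pow_left (WeylAux.bcHom_deg I.ResidueField φ.toAlgHom) _)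
  · rw [WeylAux.wdeg_eq]
    by_cases h0 : WeylAux.sym R n (φ.symm.toAlgHom (wD R i)) = 0
    · rw [h0]; simp
    obtain ⟨I, hI, hle⟩ := WeylAux.exists_residue _ h0
    refine hle.trans ?_
    have h1 := (WeylAux.field_case hn (WeylAux.bcEquiv I.ResidueField φ) i).2
    have h2 : (WeylAux.bcEquiv I.ResidueField φ).symm (wD I.ResidueField i)
        = WeylAux.bc I.ResidueField (φ.symm.toAlgHom (wD R i)) := by
      rw [← WeylAux.bcHom_bc, WeylAux.bc_D]; rfl
    rw [h2, WeylAux.sym_bc] at h1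
    exact h1.trans (Nat.pow_le_pow_left (WeylAux.bcHom_deg I.ResidueField φ.toAlgHom) _)
end

section
/- For all positive integers n and d there exists a bound D = D(n, d) depending only on n and d with the following property: for every field k of characteristic p > D, every k-algebra endomorphism φ of the n-th Weyl algebra A = A_n(k) with deg(φ) ≤ d such that the bimodule ₍φ₎A₍φ₎ is finitely generated is an isomorphism. -/
universe u

namespace WA
open MvPolynomial

/-- The degree valuation on a polynomial ring over a field. -/
noncomputable def degVal (ι k : Type*) [Field k] :
    Valuation (MvPolynomial ι k) (WithZero (Multiplicative ℤ)) := by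
  classical
  exact
  { toFun := fun a => if a = 0 then 0 else WithZero.exp (a.totalDegree : ℤ)
    map_zero' := by simp
    map_one' := by simp
    map_mul' := by
      intro a b
      by_cases ha : a = 0
      · simp [ha]
      by_cases hb : b = 0
      · simp [hb]
      simp [ha, hb, totalDegree_mul_of_isDomain ha hb, WithZero.exp_add]
    map_add_le_max' := by
      intro a b
      by_cases ha : a = 0
      · simp [ha]
      by_cases hb : b = 0
      · simp [hb]
      by_cases hab : a + b = 0
      · simp [hab]
      have := totalDegree_add a b
      simp only [ha, hb, hab, if_false, le_max_iff, WithZero.exp_le_exp]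
      rcases le_max_iff.1 this with h | h
      · left; exact_mod_cast h
      · right; exact_mod_cast h }

theorem degVal_le {ι k : Type*} [Field k] {a b : MvPolynomial ι k} (ha : a ≠ 0) (hb : b ≠ 0) :
    degVal ι k a ≤ degVal ι k b ↔ a.totalDegree ≤ b.totalDegree := by
  classical
  have h1 : degVal ι k a = WithZero.exp (a.totalDegree : ℤ) := by
    show (if a = 0 then 0 else WithZero.exp (a.totalDegree : ℤ)) = _
    rw [if_neg ha]
  have h2 : degVal ι k b = WithZero.exp (b.totalDegree : ℤ) := by
    show (if b = 0 then 0 else WithZero.exp (b.totalDegree : ℤ)) = _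
    rw [if_neg hb]
  rw [h1, h2, WithZero.exp_le_exp]
  exact_mod_cast Iff.rfl

theorem degVal_ne_zero {ι k : Type*} [Field k] {a : MvPolynomial ι k} (ha : a ≠ 0) :
    degVal ι k a ≠ 0 := by
  classical
  show (if a = 0 then 0 else WithZero.exp (a.totalDegree : ℤ)) ≠ 0
  rw [if_neg ha]
  simp

theorem exists_val_ext {ι k Ω : Type*} [Field k] [Field Ω] (g : MvPolynomial ι k →+* Ω)
    (hg : Function.Injective g) : ∃ A : ValuationSubring Ω, ∀ a b : MvPolynomial ι k,
      a ≠ 0 → b ≠ 0 →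
        (A.valuation (g a) ≤ A.valuation (g b) ↔ a.totalDegree ≤ b.totalDegree) := by
  classical
  let P := MvPolynomial ι k
  let K := FractionRing P
  have hS : nonZeroDivisors P ≤ (degVal ι k).supp.primeCompl := by
    intro a ha h
    exact degVal_ne_zero (nonZeroDivisors.ne_zero ha) ((degVal ι k).mem_supp_iff a |>.1 h)
  let v : Valuation K _ := (degVal ι k).extendToLocalization hS K
  let O := v.valuationSubring
  let G : K →+* Ω := IsFractionRing.lift hg
  have hG : ∀ a : P, G (algebraMap P K a) = g a := fun a => IsFractionRing.lift_algebraMap hg a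
  have hv : ∀ a : P, v (algebraMap P K a) = degVal ι k a := fun a =>
    Valuation.extendToLocalization_apply_map_apply _ hS K a
  obtain ⟨A, hA, hloc⟩ := IsLocalRing.exists_factor_valuationRing (G.comp O.subtype)
  refine ⟨A, ?_⟩
  have key1 : ∀ x : K, v x ≤ 1 → A.valuation (G x) ≤ 1 := by
    intro x hx
    rw [ValuationSubring.valuation_le_one_iff]
    exact hA ⟨x, hx⟩
  have key2 : ∀ x : K, v x < 1 → A.valuation (G x) < 1 := by
    intro x hx
    by_contra hcon
    have hle := key1 x hx.le
    have h1 : A.valuation (G x) = 1 := le_antisymm hle (not_lt.1 hcon)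
    have hmem : G x ∈ A := (ValuationSubring.valuation_le_one_iff _ _).1 hle
    have hu : IsUnit (⟨G x, hmem⟩ : A) := (ValuationSubring.valuation_eq_one_iff A ⟨G x, hmem⟩).2 h1
    have hux : IsUnit (⟨x, hx.le⟩ : O) := hloc.map_nonunit _ hu
    obtain ⟨⟨y, z, h, h'⟩, rfl'⟩ := hux
    have hz : v (z : K) ≤ 1 := z.2
    have hxy : (y : K) = x := congrArg Subtype.val rfl'
    have : (y : K) * z = 1 := congrArg Subtype.val h
    have h3 : v x * v z = 1 := by rw [← hxy, ← map_mul, this, map_one]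
    have : v x * v z < 1 := lt_of_le_of_lt (mul_le_of_le_one_right' hz) hx
    exact absurd h3 this.ne
  intro a b ha hb
  have hb' : g b ≠ 0 := fun h => hb (hg (by rw [h, map_zero]))
  have hvb : A.valuation (g b) ≠ 0 := by simpa using hb'
  have hKb : algebraMap P K b ≠ 0 := by
    simpa using hb
  have e1 : G (algebraMap P K a / algebraMap P K b) = g a / g b := by
    rw [map_div₀, hG, hG]
  have e2 : v (algebraMap P K a / algebraMap P K b) = degVal ι k a / degVal ι k b := by
    rw [map_div₀, hv, hv]
  have hdb : 0 < degVal ι k b := zero_lt_iff.2 (degVal_ne_zero hb)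
  rw [← degVal_le ha hb]
  constructor
  · intro h
    by_contra hcon
    rw [not_le] at hcon
    have ha' : g a ≠ 0 := fun h => ha (hg (by rw [h, map_zero]))
    have e3 : G (algebraMap P K b / algebraMap P K a) = g b / g a := by
      rw [map_div₀, hG, hG]
    have e4 : v (algebraMap P K b / algebraMap P K a) = degVal ι k b / degVal ι k a := by
      rw [map_div₀, hv, hv]
    have := key2 (algebraMap P K b / algebraMap P K a) (by
      rw [e4]; exact (div_lt_one₀ (hdb.trans hcon)).2 hcon)
    rw [e3, map_div₀, div_lt_one₀ (zero_lt_iff.2 (by simpa using ha'))] at this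
    exact absurd h (not_le.2 this)
  · intro h
    have := key1 (algebraMap P K a / algebraMap P K b) (by
      rw [e2]; exact (div_le_one₀ hdb).2 h)
    rwa [e1, map_div₀, div_le_one₀ (zero_lt_iff.2 hvb)] at this

/-- A root of a polynomial with leading coefficient at least one is bounded. -/
theorem val_root_le {Ω Γ : Type*} [Field Ω] [LinearOrderedCommGroupWithZero Γ]
    (v : Valuation Ω Γ) (G : Polynomial Ω) (c : Γ) (hc : 1 ≤ c)
    (hlead : 1 ≤ v G.leadingCoeff) (hcoef : ∀ i, v (G.coeff i) ≤ c) (z : Ω)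
    (hz : G.eval z = 0) : v z ≤ c := by
  by_contra hcon
  rw [not_le] at hcon
  have hz1 : 1 < v z := lt_of_le_of_lt hc hcon
  have hz0 : 0 < v z := zero_lt_one.trans hz1
  rw [Polynomial.eval_eq_sum_range, Finset.sum_range_succ] at hz
  by_cases hn : G.natDegree = 0
  · rw [hn] at hz
    simp at hz
    have : G.leadingCoeff = 0 := by rw [Polynomial.leadingCoeff, hn, hz]
    rw [this, map_zero] at hlead
    exact absurd hlead (by simp)
  have h1 : v (∑ i ∈ Finset.range G.natDegree, G.coeff i * z ^ i) < v z ^ G.natDegree := by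
    apply Valuation.map_sum_lt
    · exact (pow_pos hz0 _).ne'
    intro i hi
    rw [Finset.mem_range] at hi
    rw [map_mul, map_pow]
    calc v (G.coeff i) * v z ^ i ≤ c * v z ^ i := mul_le_mul_left (hcoef i) _
      _ < v z * v z ^ i := by
        exact mul_lt_mul_of_pos_right hcon (pow_pos hz0 _)
      _ = v z ^ (i+1) := by rw [pow_succ']
      _ ≤ v z ^ G.natDegree := pow_le_pow_right₀ hz1.le hi
  have h2 : v z ^ G.natDegree ≤ v (G.coeff G.natDegree * z ^ G.natDegree) := by
    rw [map_mul, map_pow]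
    exact le_mul_of_one_le_left' hlead
  have h3 := eq_neg_of_add_eq_zero_left hz
  rw [h3, Valuation.map_neg] at h1
  exact absurd (h1.trans_le h2) (lt_irrefl _)

/-- Coefficients of a split monic polynomial are bounded in terms of the roots. -/
theorem val_coeff_prod_le {Ω Γ : Type*} [Field Ω] [LinearOrderedCommGroupWithZero Γ]
    (v : Valuation Ω Γ) (c : Γ) (hc : 1 ≤ c) (s : Multiset Ω) (hs : ∀ r ∈ s, v r ≤ c) (i : ℕ) :
    v ((s.map fun r => Polynomial.X - Polynomial.C r).prod.coeff i) ≤ c ^ s.card := by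
  induction s using Multiset.induction_on generalizing i with
  | empty =>
    simp only [Multiset.map_zero, Multiset.prod_zero, Multiset.card_zero, pow_zero]
    rw [Polynomial.coeff_one]
    split_ifs <;> simp
  | cons a s ih =>
    simp only [Multiset.map_cons, Multiset.prod_cons, Multiset.card_cons]
    have ih' := ih (fun r hr => hs r (Multiset.mem_cons_of_mem hr))
    have ha := hs a (Multiset.mem_cons_self _ _)
    rw [sub_mul, Polynomial.coeff_sub, Polynomial.coeff_C_mul]
    refine (Valuation.map_sub _ _ _).trans (max_le ?_ ?_)
    · cases i with
      | zero => simp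
      | succ i =>
        rw [Polynomial.coeff_X_mul]
        exact (ih' i).trans (pow_le_pow_right₀ hc (Nat.le_succ _))
    · rw [map_mul, pow_succ']
      exact mul_le_mul' ha (ih' i)

/-- The Newton-type lemma. -/
theorem exists_power_sum {Ω : Type*} [Field Ω] (A : ValuationSubring Ω) (S : Type*) [Fintype S]
    (p : ℕ) [Fact p.Prime] [CharP Ω p] (hS : Fintype.card S < p) (t : S → Ω) (s₀ : S)
    (h0 : t s₀ ≠ 0) (hmax : ∀ s, A.valuation (t s) ≤ A.valuation (t s₀)) :
    ∃ j : ℕ, A.valuation (∑ s, t s ^ (j + 1)) = A.valuation (t s₀) ^ (j + 1) := by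
  classical
  have hv0 : 0 < A.valuation (t s₀) := zero_lt_iff.2 (by simpa using h0)
  have hmem : ∀ s, t s / t s₀ ∈ A := by
    intro s
    rw [← ValuationSubring.valuation_le_one_iff, map_div₀, div_le_one₀ hv0]
    exact hmax s
  let r : S → A := fun s => ⟨t s / t s₀, hmem s⟩
  let q : S → IsLocalRing.ResidueField A := fun s => IsLocalRing.residue A (r s)
  have : CharP A p := by
    refine (RingHom.charP_iff A.subtype Subtype.val_injective p).2 inferInstance
  have : CharP (IsLocalRing.ResidueField A) p := by
    refine charP_of_injective_ringHom
      (f := ZMod.castHom (m := p) (dvd_refl p) A |> (IsLocalRing.residue A).comp) ?_ p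
    exact RingHom.injective _
  by_contra hcon
  push Not at hcon
  have hzero : ∀ j : ℕ, ∑ s, q s ^ (j + 1) = 0 := by
    intro j
    by_contra hne
    apply hcon j
    have e : ∑ s, q s ^ (j + 1) = IsLocalRing.residue A (∑ s, r s ^ (j + 1)) := by
      simp [q]
    rw [e] at hne
    have hu : IsUnit (∑ s, r s ^ (j + 1)) := by
      by_contra hnu
      exact hne ((IsLocalRing.residue_eq_zero_iff _).2 hnu)
    have h1 := (ValuationSubring.valuation_eq_one_iff A _).1 hu
    have e2 : ((∑ s, r s ^ (j + 1) : A) : Ω) = (∑ s, t s ^ (j + 1)) / t s₀ ^ (j + 1) := by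
      push_cast
      rw [Finset.sum_div]
      refine Finset.sum_congr rfl fun s _ => ?_
      simp [r, div_pow]
    rw [e2, map_div₀, map_pow] at h1
    exact (div_eq_one_iff_eq (pow_pos hv0 _).ne').1 h1
  have hpoly : ∀ Q : Polynomial (IsLocalRing.ResidueField A),
      ∑ s, (q s) * Q.eval (q s) = 0 := by
    intro Q
    simp_rw [Polynomial.eval_eq_sum_range, Finset.mul_sum]
    rw [Finset.sum_comm]
    apply Finset.sum_eq_zero
    intro j _
    have : ∀ s, q s * (Q.coeff j * q s ^ j) = Q.coeff j * q s ^ (j+1) := fun s => by ring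
    simp_rw [this]
    rw [← Finset.mul_sum, hzero, mul_zero]
  have hq1 : q s₀ = 1 := by
    have : r s₀ = 1 := Subtype.ext (div_self h0)
    simp [q, this]
  let Q : Polynomial (IsLocalRing.ResidueField A) :=
    ∏ a ∈ (Finset.univ.image q).erase 1, (Polynomial.X - Polynomial.C a)
  have hQ := hpoly Q
  have hQ1 : Q.eval 1 ≠ 0 := by
    simp only [Q, Polynomial.eval_prod, Finset.prod_ne_zero_iff]
    intro a ha
    simp only [Polynomial.eval_sub, Polynomial.eval_X, Polynomial.eval_C]
    exact sub_ne_zero.2 (Finset.ne_of_mem_erase ha).symm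
  have hsum : ∑ s, (q s) * Q.eval (q s) =
      ((Finset.univ.filter fun s => q s = 1).card : IsLocalRing.ResidueField A) * Q.eval 1 := by
    rw [← Finset.sum_filter_add_sum_filter_not Finset.univ (fun s => q s = 1)]
    rw [Finset.sum_congr rfl (g := fun _ => Q.eval 1), Finset.sum_const, nsmul_eq_mul,
      Finset.sum_eq_zero, add_zero]
    · intro s hs
      have hs' : q s ≠ 1 := (Finset.mem_filter.1 hs).2
      have : Q.eval (q s) = 0 := by
        simp only [Q, Polynomial.eval_prod]
        apply Finset.prod_eq_zero (i := q s)
        · simp [hs']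
        · simp
      rw [this, mul_zero]
    · intro s hs
      rw [(Finset.mem_filter.1 hs).2, one_mul]
  rw [hsum] at hQ
  rcases mul_eq_zero.1 hQ with h | h
  · rw [CharP.cast_eq_zero_iff _ p] at h
    have hpos : 0 < (Finset.univ.filter fun s => q s = 1).card :=
      Finset.card_pos.2 ⟨s₀, by simp [hq1]⟩
    have := Nat.le_of_dvd hpos h
    have h2 := Finset.card_filter_le (Finset.univ : Finset S) (fun s => q s = 1)
    rw [Finset.card_univ] at h2
    omega
  · exact hQ1 h

end WA


namespace WA
open MvPolynomial

/-- Existence of algebraic relations of bounded degree. -/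
theorem exists_relation {ι k : Type*} [Fintype ι] [Field k] (d : ℕ)
    (f : MvPolynomial ι k →ₐ[k] MvPolynomial ι k) (hf : ∀ i, (f (X i)).totalDegree ≤ d) (j : ι) :
    ∃ G : Polynomial (MvPolynomial ι k), G ≠ 0 ∧
      G.natDegree < (Fintype.card ι * d + 1) ^ Fintype.card ι + 1 ∧
      (∀ i, (G.coeff i).totalDegree ≤
        Fintype.card ι * ((Fintype.card ι * d + 1) ^ Fintype.card ι + 1)) ∧
      G.eval₂ (f : MvPolynomial ι k →+* MvPolynomial ι k) (X j) = 0 := by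
  classical
  set m := Fintype.card ι with hm
  set s := (m * d + 1) ^ m + 1 with hs
  set t := (m * d + 1) * s with ht
  let ex : (ι → Fin s) → (ι →₀ ℕ) := fun α => Finsupp.equivFunOnFinite.symm fun i => (α i : ℕ)
  have hex : Function.Injective ex := by
    intro α β h
    funext i
    have := DFunLike.congr_fun h i
    exact Fin.ext (by simpa [ex] using this)
  have hexdeg : ∀ α, (∑ i, ex α i) ≤ m * (s - 1) := by
    intro α
    calc (∑ i, ex α i) ≤ ∑ _i : ι, (s - 1) := by
          apply Finset.sum_le_sum
          intro i _
          have := (α i).2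
          simp only [ex, Finsupp.equivFunOnFinite_symm_apply_apply]
          omega
      _ = m * (s - 1) := by simp [hm]
  let ev : (((ι → Fin s) × Fin s) → k) →ₗ[k] MvPolynomial ι k :=
    Fintype.linearCombination k (fun x => f (monomial (ex x.1) 1) * X j ^ (x.2 : ℕ))
  let L : (((ι → Fin s) × Fin s) → k) →ₗ[k] ((ι → Fin t) → k) :=
    LinearMap.pi fun β => (lcoeff k (Finsupp.equivFunOnFinite.symm fun i => (β i : ℕ))).comp ev
  have hfin : Module.finrank k ((ι → Fin t) → k) <
      Module.finrank k (((ι → Fin s) × Fin s) → k) := by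
    rw [Module.finrank_fintype_fun_eq_card, Module.finrank_fintype_fun_eq_card]
    simp only [Fintype.card_prod, Fintype.card_fun, Fintype.card_fin, ← hm]
    rw [ht, mul_pow, mul_comm]
    apply Nat.mul_lt_mul_of_pos_left _ (by positivity)
    omega
  have hker := LinearMap.ker_ne_bot_of_finrank_lt (f := L) hfin
  obtain ⟨c, hc, hc0⟩ := Submodule.exists_mem_ne_zero_of_ne_bot hker
  rw [LinearMap.mem_ker] at hc
  have hfmon : ∀ u : ι →₀ ℕ, (f (monomial u 1)).totalDegree ≤ (∑ i, u i) * d := by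
    intro u
    rw [monomial_eq, map_mul, Finsupp.prod_fintype _ _ (by simp), map_prod, C_1, map_one, one_mul]
    refine (totalDegree_finsetProd _ _).trans ?_
    rw [Finset.sum_mul]
    apply Finset.sum_le_sum
    intro i _
    rw [map_pow]
    exact (totalDegree_pow _ _).trans (Nat.mul_le_mul_left _ (hf i))
  have hdeg : (ev c).totalDegree < t := by
    have : (ev c).totalDegree ≤ m * (s - 1) * d + (s - 1) := by
      simp only [ev, Fintype.linearCombination_apply]
      refine totalDegree_finsetSum_le fun x _ => ?_
      refine (totalDegree_smul_le _ _).trans ((totalDegree_mul _ _).trans (add_le_add ?_ ?_))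
      · exact (hfmon _).trans (Nat.mul_le_mul_right _ (hexdeg _))
      · rw [totalDegree_X_pow]
        have := x.2.2
        omega
    refine this.trans_lt ?_
    rw [ht]
    obtain ⟨s', hs'⟩ : ∃ s', s = s' + 1 := ⟨_, hs⟩
    rw [hs']
    simp only [Nat.add_sub_cancel]
    nlinarith
  have hev : ev c = 0 := by
    ext u
    rw [coeff_zero]
    by_contra hne
    have hu : u ∈ (ev c).support := mem_support_iff.2 hne
    have hu2 : ∀ i, u i < t := by
      intro i
      refine lt_of_le_of_lt ?_ hdeg
      refine le_trans ?_ (le_totalDegree hu)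
      rw [Finsupp.sum_fintype _ _ (by simp)]
      exact Finset.single_le_sum (f := fun i => u i) (fun _ _ => Nat.zero_le _) (Finset.mem_univ i)
    have := congrFun hc (fun i => ⟨u i, hu2 i⟩)
    apply hne
    simp only [L, LinearMap.pi_apply, LinearMap.comp_apply, lcoeff_apply, Pi.zero_apply] at this
    convert! this using 2
    ext i
    simp
  let G : Polynomial (MvPolynomial ι k) :=
    ∑ x : (ι → Fin s) × Fin s, Polynomial.monomial (x.2 : ℕ) (monomial (ex x.1) (c x))
  have hGc : ∀ i : ℕ, G.coeff i =
      ∑ x : (ι → Fin s) × Fin s, if (x.2 : ℕ) = i then monomial (ex x.1) (c x) else 0 := by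
    intro i
    simp only [G, Polynomial.finsetSum_coeff, Polynomial.coeff_monomial]
  refine ⟨G, ?_, ?_, ?_, ?_⟩
  · intro hG
    apply hc0
    funext ⟨α, i⟩
    have h1 : (G.coeff (i : ℕ)).coeff (ex α) = 0 := by rw [hG]; simp
    rw [hGc, coeff_sum, Finset.sum_eq_single (α, i)] at h1
    · simpa using h1
    · rintro ⟨β, l⟩ _ hne
      by_cases hl : l = i
      · subst hl
        have : ex β ≠ ex α := fun h => hne (by rw [hex h])
        simp [coeff_monomial, this]
      · have : (l : ℕ) ≠ i := fun h => hl (Fin.ext h)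
        simp [this]
    · simp
  · have : G.natDegree ≤ s - 1 := by
      apply Polynomial.natDegree_sum_le_of_forall_le
      intro x _
      refine (Polynomial.natDegree_monomial_le _).trans ?_
      have := x.2.2
      omega
    omega
  · intro i
    rw [hGc]
    refine totalDegree_finsetSum_le fun x _ => ?_
    split_ifs
    · refine (totalDegree_monomial_le _ _).trans ?_
      rw [Finsupp.sum_fintype _ _ (by simp)]
      exact (hexdeg x.1).trans (Nat.mul_le_mul_left _ (Nat.sub_le _ _))
    · simp
  · rw [← hev]
    simp only [G, ev, Polynomial.eval₂_finsetSum, Polynomial.eval₂_monomial,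
      Fintype.linearCombination_apply]
    refine Finset.sum_congr rfl fun x _ => ?_
    have : monomial (ex x.1) (c x) = c x • monomial (ex x.1) (1 : k) := by
      rw [smul_monomial, smul_eq_mul, mul_one]
    rw [this, RingHom.coe_coe, map_smul, smul_mul_assoc]

/-- A finite endomorphism of a polynomial ring is injective. -/
theorem injective_of_finite {ι k : Type*} [Finite ι] [Field k]
    (f : MvPolynomial ι k →ₐ[k] MvPolynomial ι k)
    (hf : (f : MvPolynomial ι k →+* MvPolynomial ι k).Finite) : Function.Injective f := by
  let x : ι → MvPolynomial ι k := fun i => f (X i)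
  have hx : aeval x = f := by ext i; simp [x]
  have hIntg : Algebra.IsIntegral (Algebra.adjoin k (Set.range x)) (MvPolynomial ι k) := by
    constructor
    intro z
    have h1 : (f : MvPolynomial ι k →+* MvPolynomial ι k).IsIntegralElem z := hf.to_isIntegral z
    obtain ⟨Q, hQ, hQz⟩ := h1
    let g : MvPolynomial ι k →+* Algebra.adjoin k (Set.range x) :=
      (f : MvPolynomial ι k →+* MvPolynomial ι k).codRestrict _ (by
        intro a
        rw [← hx, Algebra.adjoin_range_eq_range_aeval]
        exact ⟨a, rfl⟩)
    refine ⟨Q.map g, hQ.map g, ?_⟩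
    rw [Polynomial.eval₂_map]
    exact hQz
  have : Algebra.IsAlgebraic (Algebra.adjoin k (Set.range x)) (MvPolynomial ι k) :=
    Algebra.IsIntegral.isAlgebraic
  have hb : IsTranscendenceBasis k x := by
    apply Algebra.IsAlgebraic.isTranscendenceBasis_of_lift_le_trdeg_of_finite
    rw [MvPolynomial.trdeg_of_isDomain]
    simp
  have := hb.1
  rw [AlgebraicIndependent, hx] at this
  exact this

/-- Orthogonality of `p`-th power expansions with respect to the total degree. -/
theorem totalDegree_orth {ι k : Type*} [Fintype ι] [Field k] (p : ℕ) [Fact p.Prime] [CharP k p]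
    (S : Finset (ι →₀ ℕ)) (hS : ∀ s ∈ S, ∀ i, s i < p) (τ : (ι →₀ ℕ) → MvPolynomial ι k)
    (s : ι →₀ ℕ) (hs : s ∈ S) (hτ : τ s ≠ 0) :
    (∑ t ∈ S, monomial t 1 * τ t ^ p) ≠ 0 ∧ (monomial s 1 * τ s ^ p).totalDegree ≤
      (∑ t ∈ S, monomial t 1 * τ t ^ p).totalDegree := by
  classical
  have hp : p ≠ 0 := (Fact.out : p.Prime).ne_zero
  have hcoef : ∀ u, coeff (s + p • u) (∑ t ∈ S, monomial t 1 * τ t ^ p) = coeff u (τ s) ^ p := by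
    intro u
    rw [coeff_sum, Finset.sum_eq_single s]
    · rw [coeff_monomial_mul, one_mul, ← MvPolynomial.map_frobenius_expand (p := p), coeff_map,
        coeff_expand_smul _ hp, frobenius_def]
    · intro t ht hne
      rw [coeff_monomial_mul', one_mul]
      split_ifs with hle
      · obtain ⟨i, hi⟩ : ∃ i, t i ≠ s i := by
          by_contra h; push Not at h; exact hne (Finsupp.ext h)
        rw [← MvPolynomial.map_frobenius_expand (p := p), coeff_map, coeff_expand_of_not_dvd (i := i),
          map_zero]
        intro hdvd
        simp only [Finsupp.tsub_apply, Finsupp.add_apply, Finsupp.smul_apply, smul_eq_mul] at hdvd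
        have h1 := hS t ht i
        have h2 := hS s hs i
        have h3 := hle i
        simp only [Finsupp.add_apply, Finsupp.smul_apply, smul_eq_mul] at h3
        apply hi
        have h4 : (t i) ≡ s i + p * u i [MOD p] := (Nat.modEq_iff_dvd' h3).2 hdvd
        have h5 : s i + p * u i ≡ s i [MOD p] := by simp [Nat.ModEq]
        exact Nat.ModEq.eq_of_lt_of_lt (h4.trans h5) h1 h2
      · rfl
    · intro h; exact absurd hs h
  obtain ⟨u, hu, hudeg⟩ := Finset.exists_mem_eq_sup (τ s).support
    (by simpa [Finset.nonempty_iff_ne_empty] using hτ) (fun u => u.sum fun _ e => e)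
  have hmem : s + p • u ∈ (∑ t ∈ S, monomial t 1 * τ t ^ p).support := by
    rw [mem_support_iff, hcoef]
    exact pow_ne_zero _ (mem_support_iff.1 hu)
  refine ⟨fun h => by rw [h] at hmem; simp at hmem, ?_⟩
  refine le_trans ?_ (le_totalDegree hmem)
  refine (totalDegree_mul _ _).trans ?_
  rw [Finsupp.sum_add_index' (by simp) (by simp)]
  refine add_le_add (totalDegree_monomial_le _ _) ((totalDegree_pow _ _).trans ?_)
  have : (p • u).sum (fun _ e => e) = p * (u.sum fun _ e => e) := by
    rw [Finsupp.sum_smul_index (by simp), Finsupp.mul_sum]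
  rw [this]
  apply Nat.mul_le_mul_left
  exact hudeg.le

/-- An element of a polynomial ring which is algebraic over the constants is a constant. -/
theorem const_of_integral {ι k : Type*} [Field k] (z : MvPolynomial ι k) (Q : Polynomial k)
    (hQ : Q.Monic) (hz : Polynomial.aeval z Q = 0) : ∃ c, z = C c := by
  by_cases hd : z.totalDegree = 0
  · exact ⟨_, totalDegree_eq_zero_iff_eq_C.1 hd⟩
  exfalso
  have hz0 : z ≠ 0 := by rintro rfl; simp at hd
  rw [Polynomial.aeval_eq_sum_range, Finset.sum_range_succ, hQ.coeff_natDegree, one_smul] at hz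
  have h1 : (z ^ Q.natDegree).totalDegree = Q.natDegree * z.totalDegree := by
    generalize Q.natDegree = n
    induction n with
    | zero => simp
    | succ n ih => rw [pow_succ, totalDegree_mul_of_isDomain (pow_ne_zero _ hz0) hz0, ih]; ring
  have h2 := eq_neg_of_add_eq_zero_right hz
  by_cases hn : Q.natDegree = 0
  · rw [hn] at h2; simp at h2
  have h3 : (z ^ Q.natDegree).totalDegree ≤ (Q.natDegree - 1) * z.totalDegree := by
    rw [h2, totalDegree_neg]
    refine totalDegree_finsetSum_le fun i hi => ?_
    rw [Finset.mem_range] at hi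
    refine (totalDegree_smul_le _ _).trans ((totalDegree_pow _ _).trans ?_)
    exact Nat.mul_le_mul_right _ (by omega)
  rw [h1] at h3
  have := Nat.le_of_mul_le_mul_right h3 (Nat.pos_of_ne_zero hd)
  omega

end WA


namespace WA
open MvPolynomial

section core

theorem core_orth {ι k Q K L Ω : Type*} [Fintype ι] [Field k] [CommRing Q] [IsDomain Q]
    [Algebra (MvPolynomial ι k) Q] [Field K] [Field L] [Field Ω]
    [Algebra (MvPolynomial ι k) K] [IsFractionRing (MvPolynomial ι k) K]
    [Algebra Q L] [IsFractionRing Q L] [Algebra K L] [Algebra (MvPolynomial ι k) L]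
    [IsScalarTower (MvPolynomial ι k) Q L] [IsScalarTower (MvPolynomial ι k) K L]
    [Algebra K Ω] [IsAlgClosed Ω]
    [Algebra.IsIntegral (MvPolynomial ι k) Q]
    [FiniteDimensional K L] [Algebra.IsSeparable K L]
    (p : ℕ) [Fact p.Prime] [CharP k p] (hcard : Fintype.card (L →ₐ[K] Ω) < p)
    (A : ValuationSubring Ω) (c : MvPolynomial ι k →+* Ω)
    (hc : ∀ a, c a = algebraMap K Ω (algebraMap _ K a))
    (hA : ∀ a b : MvPolynomial ι k, a ≠ 0 → b ≠ 0 →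
        a.totalDegree ≤ b.totalDegree → A.valuation (c a) ≤ A.valuation (c b))
    (N : Q → A.ValueGroup) (hle : ∀ z (σ : L →ₐ[K] Ω), A.valuation (σ (algebraMap Q L z)) ≤ N z)
    (hex : ∀ z, ∃ σ : L →ₐ[K] Ω, N z = A.valuation (σ (algebraMap Q L z)))
    (S : Finset (ι →₀ ℕ)) (hS : ∀ s ∈ S, ∀ i, s i < p) (g : (ι →₀ ℕ) → Q)
    (s : ι →₀ ℕ) (hs : s ∈ S) :
    A.valuation (c (monomial s 1)) * N (g s) ^ p ≤
      N (∑ t ∈ S, algebraMap _ Q (monomial t (1:k)) * g t ^ p) := by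
  classical
  set y := ∑ t ∈ S, algebraMap _ Q (monomial t (1:k)) * g t ^ p with hy
  have hp0 : p ≠ 0 := (Fact.out : p.Prime).ne_zero
  have : CharP Ω p := charP_of_injective_ringHom
    (f := c.comp (C : k →+* MvPolynomial ι k)) (RingHom.injective _) p
  have hT : ∀ z : Q, ∃ t : MvPolynomial ι k,
      c t = ∑ σ : L →ₐ[K] Ω, σ (algebraMap Q L z) := by
    intro z
    have h1 : IsIntegral (MvPolynomial ι k) (Algebra.trace K L (algebraMap Q L z)) :=
      Algebra.isIntegral_trace ((Algebra.IsIntegral.isIntegral z).algebraMap)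
    obtain ⟨t, ht⟩ := IsIntegrallyClosed.isIntegral_iff.1 h1
    exact ⟨t, by rw [hc, ht, trace_eq_sum_embeddings]⟩
  choose T hT using hT
  by_cases hz : g s = 0
  · obtain ⟨σ, h⟩ := hex (g s)
    rw [h, hz, map_zero, map_zero, map_zero, zero_pow hp0, mul_zero]
    exact zero_le
  obtain ⟨σ₀, hσ₀⟩ := hex (g s)
  have hz' : algebraMap Q L (g s) ≠ 0 := by simpa using hz
  have hz0 : σ₀ (algebraMap Q L (g s)) ≠ 0 := by simpa using hz
  obtain ⟨j, hj⟩ := exists_power_sum A (L →ₐ[K] Ω) p hcard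
    (fun σ => σ (algebraMap Q L (g s))) σ₀ hz0 (fun σ => by rw [← hσ₀]; exact hle _ σ)
  have hNpos : N (g s) ≠ 0 := by rw [hσ₀]; simpa using hz
  rw [← hσ₀] at hj
  have hTs : c (T (g s * g s ^ j)) =
      ∑ σ : L →ₐ[K] Ω, σ (algebraMap Q L (g s)) ^ (j+1) := by
    rw [hT]
    refine Finset.sum_congr rfl fun σ _ => ?_
    rw [← pow_succ', map_pow, map_pow]
  have hT0 : T (g s * g s ^ j) ≠ 0 := by
    intro h
    rw [h, map_zero] at hTs
    rw [← hTs, map_zero] at hj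
    exact pow_ne_zero _ hNpos hj.symm
  obtain ⟨h1, h2⟩ := totalDegree_orth p S hS (fun t => T (g t * g s ^ j)) s hs hT0
  have h3 := hA _ _ (mul_ne_zero (by simp) (pow_ne_zero _ hT0)) h1 h2
  rw [map_mul c, map_pow c, hTs, map_mul, map_pow, hj] at h3
  have h4 : c (∑ t ∈ S, monomial t 1 * T (g t * g s ^ j) ^ p) =
      ∑ σ : L →ₐ[K] Ω, σ (algebraMap Q L (y * (g s ^ j) ^ p)) := by
    rw [map_sum]
    have : ∀ t, c (monomial t 1 * T (g t * g s ^ j) ^ p) = ∑ σ : L →ₐ[K] Ω,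
        c (monomial t 1) * σ (algebraMap Q L ((g t * g s ^ j) ^ p)) := by
      intro t
      rw [map_mul, map_pow, hT, sum_pow_char, Finset.mul_sum]
      simp only [map_pow]
    simp_rw [this]
    rw [Finset.sum_comm]
    refine Finset.sum_congr rfl fun σ _ => ?_
    rw [hy, Finset.sum_mul, map_sum, map_sum]
    refine Finset.sum_congr rfl fun t _ => ?_
    have : σ (algebraMap Q L (algebraMap (MvPolynomial ι k) Q (monomial t 1))) =
        c (monomial t 1) := by
      rw [← IsScalarTower.algebraMap_apply, IsScalarTower.algebraMap_apply _ K L, σ.commutes, hc]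
    rw [mul_assoc, map_mul, map_mul, this, mul_pow]
  have h5 : A.valuation (c (∑ t ∈ S, monomial t 1 * T (g t * g s ^ j) ^ p)) ≤
      N y * (N (g s) ^ j) ^ p := by
    rw [h4]
    apply Valuation.map_sum_le
    intro σ _
    rw [map_mul, map_mul, map_mul, map_pow, map_pow, map_pow, map_pow, map_pow, map_pow]
    exact mul_le_mul' (hle _ _) (pow_le_pow_left' (pow_le_pow_left' (hle _ _) _) _)
  have h6 := h3.trans h5
  rw [← pow_mul, ← pow_mul, add_mul, one_mul, pow_add, mul_comm (N (g s) ^ (j * p)), ← mul_assoc] at h6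
  exact (mul_le_mul_iff_left₀ (zero_lt_iff.2 (pow_ne_zero _ hNpos))).1 h6

theorem core_const {ι k Q K L Ω : Type*} [Fintype ι] [Field k] [CommRing Q] [IsDomain Q]
    [Algebra (MvPolynomial ι k) Q] [Field K] [Field L] [Field Ω]
    [Algebra (MvPolynomial ι k) K] [IsFractionRing (MvPolynomial ι k) K]
    [Algebra Q L] [IsFractionRing Q L] [Algebra K L] [Algebra (MvPolynomial ι k) L]
    [IsScalarTower (MvPolynomial ι k) Q L] [IsScalarTower (MvPolynomial ι k) K L]
    [Algebra K Ω] [IsAlgClosed Ω]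
    [Algebra.IsIntegral (MvPolynomial ι k) Q]
    [FiniteDimensional K L] [Algebra.IsSeparable K L]
    (p R : ℕ) (hcard : R * Fintype.card (L →ₐ[K] Ω) < p)
    (A : ValuationSubring Ω) (c : MvPolynomial ι k →+* Ω)
    (hc : ∀ a, c a = algebraMap K Ω (algebraMap _ K a))
    (γ : A.ValueGroup) (hγ : 1 < γ)
    (hA : ∀ a : MvPolynomial ι k, a ≠ 0 → A.valuation (c a) = γ ^ a.totalDegree)
    (z : Q) (hz : ∀ σ : L →ₐ[K] Ω, A.valuation (σ (algebraMap Q L z)) ^ p ≤ γ ^ R) :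
    ∃ q : Polynomial k, q.Monic ∧
      q.eval₂ ((algebraMap (MvPolynomial ι k) Q).comp C) z = 0 := by
  classical
  have hIntg : IsIntegral (MvPolynomial ι k) z := Algebra.IsIntegral.isIntegral z
  set q := minpoly (MvPolynomial ι k) z with hq
  have hqm : q.Monic := minpoly.monic hIntg
  have hqK : minpoly K (algebraMap Q L z) = q.map (algebraMap (MvPolynomial ι k) K) := by
    have hIntg' : IsIntegral (MvPolynomial ι k) (algebraMap Q L z) := hIntg.algebraMap
    rw [minpoly.isIntegrallyClosed_eq_field_fractions K L hIntg, ← hq]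
  have hp : p ≠ 0 := by omega
  have hqΩ : q.map c = (q.map (algebraMap (MvPolynomial ι k) K)).map (algebraMap K Ω) := by
    rw [Polynomial.map_map]; congr 1; ext a <;> simp [hc]
  have hsplit := IsAlgClosed.splits (q.map c)
  have hprod := hsplit.eq_prod_roots_of_monic (hqm.map c)
  have hroots : ∀ r ∈ (q.map c).roots, ∃ σ : L →ₐ[K] Ω, σ (algebraMap Q L z) = r := by
    intro r hr
    have : r ∈ (minpoly K (algebraMap Q L z)).rootSet Ω := by
      rw [Polynomial.mem_rootSet]
      refine ⟨minpoly.ne_zero (Algebra.IsIntegral.isIntegral _), ?_⟩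
      rw [Polynomial.aeval_def, hqK, ← Polynomial.eval_map, ← hqΩ]
      exact (Polynomial.mem_roots'.1 hr).2
    rw [← Algebra.IsAlgebraic.range_eval_eq_rootSet_minpoly Ω (algebraMap Q L z)] at this
    exact this
  have hcardr : (q.map c).roots.card ≤ Fintype.card (L →ₐ[K] Ω) := by
    refine (Polynomial.card_roots' _).trans ?_
    rw [hqΩ, Polynomial.natDegree_map, ← hqK, AlgHom.card K L Ω]
    exact minpoly.natDegree_le _
  have hcoef : ∀ i, (q.coeff i).totalDegree = 0 := by
    intro i
    by_contra hne
    have hne0 : q.coeff i ≠ 0 := by intro h; simp [h] at hne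
    have h1 : γ ≤ A.valuation ((q.map c).coeff i) := by
      rw [Polynomial.coeff_map, hA _ hne0]
      exact le_self_pow₀ hγ.le hne
    obtain ⟨M, hM1, hMp, hM⟩ : ∃ M : A.ValueGroup, 1 ≤ M ∧ M ^ p ≤ γ ^ R ∧
        ∀ r ∈ (q.map c).roots, A.valuation r ≤ M := by
      have := Finset.exists_max_image (insert none (Finset.univ.image (some : (L →ₐ[K] Ω) → _)))
        (fun o => o.elim 1 (fun σ => A.valuation (σ (algebraMap Q L z)))) ⟨none, by simp⟩
      obtain ⟨o, _, ho⟩ := this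
      refine ⟨o.elim 1 (fun σ => A.valuation (σ (algebraMap Q L z))), ?_, ?_, ?_⟩
      · exact ho none (by simp)
      · cases o with
        | none => simpa using one_le_pow₀ hγ.le
        | some σ => exact hz σ
      · intro r hr
        obtain ⟨σ, rfl⟩ := hroots r hr
        exact ho (some σ) (by simp)
    have h2 := val_coeff_prod_le A.valuation M hM1 _ hM i
    rw [← hprod] at h2
    have h3 : γ ^ p ≤ γ ^ (R * Fintype.card (L →ₐ[K] Ω)) := by
      calc γ ^ p ≤ (M ^ (q.map c).roots.card) ^ p := pow_le_pow_left' (h1.trans h2) p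
        _ = (M ^ p) ^ (q.map c).roots.card := by rw [← pow_mul, ← pow_mul, mul_comm]
        _ ≤ (γ ^ R) ^ (q.map c).roots.card := pow_le_pow_left' hMp _
        _ = γ ^ (R * (q.map c).roots.card) := by rw [pow_mul]
        _ ≤ _ := pow_le_pow_right₀ hγ.le (Nat.mul_le_mul_left _ hcardr)
    have := (pow_le_pow_iff_right₀ hγ).1 h3
    omega
  have hlift : q ∈ Polynomial.lifts (C : k →+* MvPolynomial ι k) := by
    rw [Polynomial.lifts_iff_coeff_lifts]
    intro i
    exact ⟨_, (totalDegree_eq_zero_iff_eq_C.1 (hcoef i)).symm⟩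
  obtain ⟨q', hq', _, hm⟩ := Polynomial.lifts_and_degree_eq_and_monic hlift hqm
  refine ⟨q', hm, ?_⟩
  rw [← Polynomial.eval₂_map, hq', ← Polynomial.aeval_def, hq, minpoly.aeval]

end core
end WA


namespace WA
open MvPolynomial
universe u'

/-- The data of the norm at infinity attached to a finite homomorphism. -/
structure NData {ι k Q : Type*} [Fintype ι] [Field k] [CommRing Q] (p R : ℕ)
    (f : MvPolynomial ι k →+* Q) (x : ι → Q) (Γ : Type*) [LinearOrderedCommGroupWithZero Γ] where
  N : Q → Γ
  γ : Γ
  hγ : 1 < γ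
  zero : N 0 = 0
  ne_zero : ∀ z, z ≠ 0 → N z ≠ 0
  add : ∀ z w, N (z + w) ≤ max (N z) (N w)
  neg : ∀ z, N (-z) = N z
  mul : ∀ z w, N (z * w) ≤ N z * N w
  const_le : ∀ c, N (f (C c)) ≤ 1
  mon_le : ∀ s : ι →₀ ℕ, N (f (monomial s 1)) ≤ γ ^ s.degree
  gen_le : ∀ j, N (x j) ≤ γ ^ R
  orth : ∀ (S : Finset (ι →₀ ℕ)), (∀ s ∈ S, ∀ i, s i < p) → ∀ (g : (ι →₀ ℕ) → Q), ∀ s ∈ S,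
    γ ^ s.degree * N (g s) ^ p ≤ N (∑ t ∈ S, f (monomial t 1) * g t ^ p)
  const : ∀ z, N z ^ p ≤ γ ^ R → ∃ q : Polynomial k, q.Monic ∧ q.eval₂ (f.comp C) z = 0

theorem core_gen {ι : Type} {k Q : Type u'} [Fintype ι] [Nonempty ι] [Field k] [CommRing Q]
    [IsDomain Q] (p : ℕ) [Fact p.Prime] [CharP k p] (f : MvPolynomial ι k →+* Q)
    (hf : Function.Injective f) (hfin : f.Finite) (x : ι → Q)
    (hx : ∀ z, ∃ a : MvPolynomial ι k, z = eval₂ (f.comp C) x a) (s0 R : ℕ)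
    (G : ι → Polynomial (MvPolynomial ι k)) (hG0 : ∀ j, G j ≠ 0)
    (hGdeg : ∀ j, (G j).natDegree < s0) (hGc : ∀ j i, ((G j).coeff i).totalDegree ≤ R)
    (hGx : ∀ j, (G j).eval₂ f (x j) = 0) (hp1 : s0 ≤ p) (hp2 : s0 ^ Fintype.card ι < p)
    (hp3 : R * s0 ^ Fintype.card ι < p) :
    ∃ (Γ : Type u') (_ : LinearOrderedCommGroupWithZero Γ), Nonempty (NData p R f x Γ) := by
  classical
  let := f.toAlgebra
  have hfa : algebraMap (MvPolynomial ι k) Q = f := rfl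
  have hfin' : Module.Finite (MvPolynomial ι k) Q := hfin
  have : FaithfulSMul (MvPolynomial ι k) Q := (faithfulSMul_iff_algebraMap_injective _ _).2 hf
  let K := FractionRing (MvPolynomial ι k)
  let L := FractionRing Q
  have : FaithfulSMul (MvPolynomial ι k) L := by
    rw [faithfulSMul_iff_algebraMap_injective, IsScalarTower.algebraMap_eq _ Q L]
    exact (IsFractionRing.injective Q L).comp hf
  let : Algebra K L := FractionRing.liftAlgebra _ _
  have hst : IsScalarTower (MvPolynomial ι k) K L := FractionRing.isScalarTower_liftAlgebra _ _
  let Ω := AlgebraicClosure K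
  have hxint : ∀ j, IsIntegral K (algebraMap Q L (x j)) := by
    intro j
    have h1 : IsIntegral (MvPolynomial ι k) (x j) := Algebra.IsIntegral.isIntegral _
    have h2 : IsIntegral (MvPolynomial ι k) (algebraMap Q L (x j)) := h1.algebraMap
    exact h2.tower_top
  have htop : IntermediateField.adjoin K (Set.range fun j => algebraMap Q L (x j)) = ⊤ := by
    rw [eq_top_iff]
    intro z _
    obtain ⟨a, b, _, rfl⟩ := IsFractionRing.div_surjective Q z
    have key : ∀ z : Q, algebraMap Q L z ∈
        IntermediateField.adjoin K (Set.range fun j => algebraMap Q L (x j)) := by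
      intro z
      obtain ⟨a, rfl⟩ := hx z
      rw [eval₂_eq, map_sum]
      refine sum_mem fun s _ => ?_
      rw [map_mul, map_prod]
      refine mul_mem ?_ (prod_mem fun i _ => ?_)
      · rw [RingHom.comp_apply, ← hfa, ← IsScalarTower.algebraMap_apply,
          IsScalarTower.algebraMap_apply _ K L]
        exact IntermediateField.algebraMap_mem _ _
      · rw [map_pow]
        exact pow_mem (IntermediateField.subset_adjoin _ _ (Set.mem_range_self i)) _
    exact div_mem (key a) (key b)
  have hfd : FiniteDimensional K L := by
    have := IntermediateField.finiteDimensional_adjoin (K := K) (L := L)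
      (S := Set.range fun j => algebraMap Q L (x j)) (by rintro _ ⟨j, rfl⟩; exact hxint j)
    rw [htop] at this
    exact LinearEquiv.finiteDimensional (IntermediateField.topEquiv (F := K) (E := L)).toLinearEquiv
  have hGK0 : ∀ j, (G j).map (algebraMap _ K) ≠ 0 := fun j =>
    (Polynomial.map_ne_zero_iff (IsFractionRing.injective _ K)).2 (hG0 j)
  have hGK : ∀ j, Polynomial.aeval (algebraMap Q L (x j)) ((G j).map (algebraMap _ K)) = 0 := by
    intro j
    rw [Polynomial.aeval_map_algebraMap, Polynomial.aeval_algebraMap_apply, Polynomial.aeval_def, hfa, hGx,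
      map_zero]
  have : CharP K p := charP_of_injective_ringHom
    (f := (algebraMap (MvPolynomial ι k) K).comp C) (RingHom.injective _) p
  have hsep : Algebra.IsSeparable K L := by
    have h1 : Algebra.IsSeparable K
        (IntermediateField.adjoin K (Set.range fun j => algebraMap Q L (x j))) := by
      rw [IntermediateField.isSeparable_adjoin_iff_isSeparable]
      rintro _ ⟨j, rfl⟩
      have hirr := minpoly.irreducible (hxint j)
      rcases Polynomial.separable_or p hirr with h | ⟨_, g, hg, he⟩
      · exact h
      · exfalso
        have h1 := Polynomial.natDegree_le_of_dvd (minpoly.dvd K _ (hGK j)) (hGK0 j)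
        rw [← he, Polynomial.natDegree_expand] at h1
        have h2 : 0 < g.natDegree := hg.natDegree_pos
        have h3 := (Polynomial.natDegree_map_le (f := algebraMap _ K) (p := G j))
        have h4 := hGdeg j
        nlinarith
    rw [htop] at h1
    exact AlgEquiv.Algebra.isSeparable (IntermediateField.topEquiv (F := K) (E := L))
  let c : MvPolynomial ι k →+* Ω := (algebraMap K Ω).comp (algebraMap _ K)
  have hcinj : Function.Injective c :=
    (algebraMap K Ω).injective.comp (IsFractionRing.injective _ K)
  obtain ⟨A, hA⟩ := exists_val_ext c hcinj
  obtain ⟨i0⟩ := ‹Nonempty ι›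
  set γ := A.valuation (c (X i0)) with hγdef
  have hAeq : ∀ a : MvPolynomial ι k, a ≠ 0 → A.valuation (c a) = γ ^ a.totalDegree := by
    intro a ha
    have hX : (X i0 ^ a.totalDegree : MvPolynomial ι k) ≠ 0 := pow_ne_zero _ (X_ne_zero _)
    rw [hγdef, ← map_pow, ← map_pow]
    apply le_antisymm
    · rw [hA _ _ ha hX, totalDegree_X_pow]
    · rw [hA _ _ hX ha, totalDegree_X_pow]
  have hγ : 1 < γ := by
    have h1 := hA (X i0) 1 (X_ne_zero _) one_ne_zero
    rw [map_one, map_one, totalDegree_X, totalDegree_one, ← hγdef] at h1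
    by_contra h
    exact absurd (h1.1 (not_lt.1 h)) (by norm_num)
  have hAle : ∀ (a : MvPolynomial ι k) n, a.totalDegree ≤ n → A.valuation (c a) ≤ γ ^ n := by
    intro a n ha
    by_cases h0 : a = 0
    · simp [h0]
    · rw [hAeq a h0]; exact pow_le_pow_right₀ hγ.le ha
  have hdegmon : ∀ s : ι →₀ ℕ, (monomial s (1:k)).totalDegree = s.degree := by
    intro s
    rw [totalDegree_monomial _ one_ne_zero]; rfl
  have hσc : ∀ (σ : L →ₐ[K] Ω) a, σ (algebraMap Q L (f a)) = c a := by
    intro σ a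
    rw [← hfa, ← IsScalarTower.algebraMap_apply, IsScalarTower.algebraMap_apply _ K L, σ.commutes]
    rfl
  have hroot : ∀ (σ : L →ₐ[K] Ω) j, ((G j).map c).eval (σ (algebraMap Q L (x j))) = 0 := by
    intro σ j
    have h := congrArg σ (hGK j)
    rw [map_zero, ← Polynomial.aeval_algHom_apply, Polynomial.aeval_def, ← Polynomial.eval_map,
      Polynomial.map_map] at h
    exact h
  have hcard : Fintype.card (L →ₐ[K] Ω) ≤ s0 ^ Fintype.card ι := by
    let emb : (L →ₐ[K] Ω) → (∀ j : ι, ((G j).map c).roots.toFinset) := fun σ j =>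
      ⟨σ (algebraMap Q L (x j)), by
        rw [Multiset.mem_toFinset, Polynomial.mem_roots
          ((Polynomial.map_ne_zero_iff hcinj).2 (hG0 j))]
        exact hroot σ j⟩
    have hemb : Function.Injective emb := by
      intro σ τ h
      have h1 : ∀ j, σ (algebraMap Q L (x j)) = τ (algebraMap Q L (x j)) := fun j =>
        congrArg Subtype.val (congrFun h j)
      have h2 : IntermediateField.adjoin K (Set.range fun j => algebraMap Q L (x j)) ≤
          (AlgHom.equalizer σ τ : Subalgebra K L).toIntermediateField (fun z hz => by
            rw [AlgHom.mem_equalizer] at hz ⊢; rw [map_inv₀, map_inv₀, hz]) := by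
        rw [IntermediateField.adjoin_le_iff]
        rintro _ ⟨j, rfl⟩
        exact h1 j
      rw [htop] at h2
      ext z
      exact h2 (IntermediateField.mem_top (x := z))
    refine (Fintype.card_le_of_injective emb hemb).trans ?_
    rw [Fintype.card_pi, Fintype.card, ← Finset.prod_const]
    refine Finset.prod_le_prod' fun j _ => ?_
    rw [Fintype.card_coe]
    refine (Multiset.toFinset_card_le _).trans ((Polynomial.card_roots' _).trans ?_)
    exact (Polynomial.natDegree_map_le).trans (hGdeg j).le
  have hne : Nonempty (L →ₐ[K] Ω) := ⟨IsAlgClosed.lift⟩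
  have hNex : ∀ z : Q, ∃ m : A.ValueGroup, (∃ σ : L →ₐ[K] Ω, m = A.valuation (σ (algebraMap Q L z))) ∧
      ∀ σ : L →ₐ[K] Ω, A.valuation (σ (algebraMap Q L z)) ≤ m := by
    intro z
    obtain ⟨σ, h⟩ := Finite.exists_max (fun σ : L →ₐ[K] Ω => A.valuation (σ (algebraMap Q L z)))
    exact ⟨_, ⟨σ, rfl⟩, h⟩
  choose N hNe hNle using hNex
  have hNub : ∀ z b, (∀ σ : L →ₐ[K] Ω, A.valuation (σ (algebraMap Q L z)) ≤ b) → N z ≤ b := by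
    intro z b h
    obtain ⟨σ, hσ⟩ := hNe z
    rw [hσ]; exact h σ
  refine ⟨A.ValueGroup, inferInstance, ⟨{
    N := N, γ := γ, hγ := hγ, zero := ?_, ne_zero := ?_, add := ?_, neg := ?_, mul := ?_,
    const_le := ?_, mon_le := ?_, gen_le := ?_, orth := ?_, const := ?_ }⟩⟩
  · obtain ⟨σ, hσ⟩ := hNe 0
    rw [hσ]; simp
  · intro z hz
    obtain ⟨σ, hσ⟩ := hNe z
    rw [hσ]; simpa using hz
  · intro z w
    refine hNub _ _ fun σ => ?_
    rw [map_add, map_add]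
    exact (Valuation.map_add _ _ _).trans (max_le_max (hNle _ _) (hNle _ _))
  · have : ∀ z, N (-z) ≤ N z := fun z => hNub _ _ fun σ => by
      rw [map_neg, map_neg, Valuation.map_neg]; exact hNle _ _
    intro z
    exact le_antisymm (this z) (by simpa using this (-z))
  · intro z w
    refine hNub _ _ fun σ => ?_
    rw [map_mul, map_mul, map_mul]
    exact mul_le_mul' (hNle _ _) (hNle _ _)
  · intro a
    refine hNub _ _ fun σ => ?_
    rw [hσc]
    simpa using hAle (C a) 0 (by simp)
  · intro s
    refine hNub _ _ fun σ => ?_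
    rw [hσc]
    exact hAle _ _ (hdegmon s).le
  · intro j
    refine hNub _ _ fun σ => ?_
    refine val_root_le A.valuation ((G j).map c) _ (one_le_pow₀ hγ.le) ?_ ?_ _ (hroot σ j)
    · rw [Polynomial.leadingCoeff_map_of_injective hcinj,
        hAeq _ (Polynomial.leadingCoeff_ne_zero.2 (hG0 j))]
      exact one_le_pow₀ hγ.le
    · intro i
      rw [Polynomial.coeff_map]
      exact hAle _ _ (hGc j i)
  · intro S hS g s hs
    have h := core_orth (K := K) (L := L) p (hcard.trans_lt hp2) A c (fun _ => rfl)
      (fun a b ha hb h => (hA a b ha hb).2 h) N hNle hNe S hS g s hs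
    rw [hAeq _ (by simp), hdegmon] at h
    exact h
  · intro z hz
    exact core_const (K := K) (L := L) p R
      ((Nat.mul_le_mul_left _ hcard).trans_lt hp3) A c (fun _ => rfl) γ hγ hAeq z
      (fun σ => (pow_le_pow_left' (hNle z σ) p).trans hz)

theorem core (ι : Type) [Fintype ι] [Nonempty ι] (d : ℕ) : ∃ D R : ℕ, ∀ (k : Type u') [Field k]
    (p : ℕ) [Fact p.Prime] [CharP k p], D < p →
    ∀ f : MvPolynomial ι k →ₐ[k] MvPolynomial ι k,
      (f : MvPolynomial ι k →+* MvPolynomial ι k).Finite → (∀ i, (f (X i)).totalDegree ≤ d) →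
      Function.Injective f ∧ ∃ (Γ : Type u') (_ : LinearOrderedCommGroupWithZero Γ),
        Nonempty (NData p R (f : MvPolynomial ι k →+* MvPolynomial ι k) X Γ) := by
  set s0 := (Fintype.card ι * d + 1) ^ Fintype.card ι + 1 with hs0
  set R := Fintype.card ι * s0 with hR
  refine ⟨s0 + s0 ^ Fintype.card ι + R * s0 ^ Fintype.card ι, R, ?_⟩
  intro k _ p _ _ hp f hfin hd
  have hinj := injective_of_finite f hfin
  refine ⟨hinj, ?_⟩
  choose G hG0 hG1 hG2 hG3 using exists_relation d f hd
  refine core_gen p _ hinj hfin X (fun z => ⟨z, ?_⟩) s0 R G hG0 hG1 hG2 hG3 (by omega) (by omega)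
    (by omega)
  have : (f : MvPolynomial ι k →+* MvPolynomial ι k).comp C = C := by
    ext c : 1
    exact f.commutes c
  have e : z = eval₂ ((f : MvPolynomial ι k →+* MvPolynomial ι k).comp C) X z := by
    rw [this, eval₂_eta]
  exact e

end WA


namespace WA
open MvPolynomial

/-- Homomorphisms from polynomial rings to noncommutative algebras. -/
theorem comm_lift {σ k B : Type*} [CommRing k] [Ring B] [Algebra k B] (x : σ → B)
    (hx : ∀ i j, x i * x j = x j * x i) :
    ∃ α : MvPolynomial σ k →ₐ[k] B, ∀ i, α (X i) = x i := by
  let _ : CommRing (Algebra.adjoin k (Set.range x)) :=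
    Algebra.adjoinCommRingOfComm k (by rintro _ ⟨i, rfl⟩ _ ⟨j, rfl⟩; exact hx i j)
  let α : MvPolynomial σ k →ₐ[k] Algebra.adjoin k (Set.range x) :=
    aeval fun i => ⟨x i, Algebra.subset_adjoin ⟨i, rfl⟩⟩
  refine ⟨(Algebra.adjoin k (Set.range x)).val.comp α, fun i => ?_⟩
  simp [α]

theorem pderiv_comm' {σ k : Type*} [CommRing k] (i j : σ) (q : MvPolynomial σ k) :
    pderiv i (pderiv j q) = pderiv j (pderiv i q) := by
  classical
  have : ⁅(pderiv i : Derivation k (MvPolynomial σ k) (MvPolynomial σ k)), pderiv j⁆ = (0 : Derivation k (MvPolynomial σ k) (MvPolynomial σ k)) := by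
    apply derivation_ext
    intro l
    rw [Derivation.commutator_apply, pderiv_X, pderiv_X]
    simp only [Pi.single_apply]
    split_ifs <;> simp
  have h := DFunLike.congr_fun this q
  rw [Derivation.commutator_apply] at h
  exact sub_eq_zero.1 h

section weyl
variable {k : Type*} [Field k] {n : ℕ}

/-- The generators of the Weyl algebra. -/
noncomputable def wY (k : Type*) [Field k] {n : ℕ} : Fin n ⊕ Fin n → WeylAlgebra k n :=
  Sum.elim (wX k) (wD k)

theorem wXX (i j : Fin n) : wX k i * wX k j = wX k j * wX k i := by
  simp only [wX, ← map_mul]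
  exact RingQuot.mkAlgHom_rel k (WeylRel.xx i j)

theorem wDD (i j : Fin n) : wD k i * wD k j = wD k j * wD k i := by
  simp only [wD, ← map_mul]
  exact RingQuot.mkAlgHom_rel k (WeylRel.dd i j)

theorem wDX (i j : Fin n) : wD k i * wX k j = wX k j * wD k i + if i = j then 1 else 0 := by
  have h := RingQuot.mkAlgHom_rel k (WeylRel.dx (R := k) (n := n) i j)
  rw [map_mul, map_add, map_mul] at h
  simp only [wD, wX, h]
  congr 1
  split_ifs <;> simp

/-- The generators generate. -/
theorem wY_induction {p : WeylAlgebra k n → Prop} (h1 : p 1) (hsmul : ∀ (c : k) a, p a → p (algebraMap k _ c * a))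
    (hadd : ∀ a b, p a → p b → p (a + b)) (hY : ∀ i a, p a → p (wY k i * a)) (a) : p a := by
  obtain ⟨b, rfl⟩ := RingQuot.mkAlgHom_surjective k (WeylRel k n) a
  have key : ∀ (b : FreeAlgebra k (Fin n ⊕ Fin n)) (c : WeylAlgebra k n), p c →
      p (RingQuot.mkAlgHom k (WeylRel k n) b * c) := by
    intro b
    induction b using FreeAlgebra.induction with
    | grade0 r =>
      intro c hcc
      rw [AlgHom.commutes]
      exact hsmul _ _ hcc
    | grade1 x =>
      intro c hcc
      cases x with
      | inl i => exact hY (.inl i) c hcc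
      | inr i => exact hY (.inr i) c hcc
    | mul a b ha hb => intro c hcc; rw [map_mul, mul_assoc]; exact ha _ (hb _ hcc)
    | add a b ha hb => intro c hcc; rw [map_add, add_mul]; exact hadd _ _ (ha _ hcc) (hb _ hcc)
  simpa using key b 1 h1

/-- The operators defining the normal symbol representation. -/
noncomputable def rhoGen (k : Type*) [Field k] (n : ℕ) : Fin n ⊕ Fin n →
    Module.End k (MvPolynomial (Fin n ⊕ Fin n) k) :=
  Sum.elim (fun i => LinearMap.mulLeft k (X (.inl i)))
    (fun i => (pderiv (.inl i)).toLinearMap + LinearMap.mulLeft k (X (.inr i)))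

/-- The normal symbol representation. -/
noncomputable def rho (k : Type*) [Field k] (n : ℕ) :
    WeylAlgebra k n →ₐ[k] Module.End k (MvPolynomial (Fin n ⊕ Fin n) k) :=
  RingQuot.liftAlgHom k ⟨FreeAlgebra.lift k (rhoGen k n), by
    intro a b h
    cases h with
    | xx i j =>
      simp only [map_mul, FreeAlgebra.lift_ι_apply]
      refine LinearMap.ext fun q => ?_
      simp only [rhoGen, Sum.elim_inl, Module.End.mul_apply, LinearMap.mulLeft_apply]
      ring
    | dd i j =>
      simp only [map_mul, FreeAlgebra.lift_ι_apply]
      refine LinearMap.ext fun q => ?_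
      have hcomm : pderiv (Sum.inl i) (pderiv (Sum.inl j) q) =
          pderiv (Sum.inl j) (pderiv (Sum.inl i) q) := pderiv_comm' _ _ _
      simp [rhoGen, Derivation.leibniz, hcomm, pderiv_X]
      ring
    | dx i j =>
      simp only [map_mul, map_add, FreeAlgebra.lift_ι_apply]
      refine LinearMap.ext fun q => ?_
      split_ifs with hij
      · subst hij
        simp [rhoGen, Derivation.leibniz]
        ring
      · have h0 : pderiv (Sum.inl i) (X (Sum.inl j) : MvPolynomial (Fin n ⊕ Fin n) k) = 0 :=
          pderiv_X_of_ne (by simpa using Ne.symm hij)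
        simp [rhoGen, Derivation.leibniz, h0]
        ring⟩

theorem rho_Y (i) : rho k n (wY k i) = rhoGen k n i := by
  cases i with
  | inl i => simp [rho, wY, wX]
  | inr i => simp [rho, wY, wD]

theorem rho_inl (i : Fin n) (q) : rho k n (wY k (.inl i)) q = X (.inl i) * q := by
  rw [rho_Y]; simp [rhoGen]

theorem rho_inr (i : Fin n) (q) :
    rho k n (wY k (.inr i)) q = pderiv (.inl i) q + X (.inr i) * q := by
  rw [rho_Y]; simp [rhoGen]

/-- The normal symbol. -/
noncomputable def psi (k : Type*) [Field k] (n : ℕ) :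
    WeylAlgebra k n →ₗ[k] MvPolynomial (Fin n ⊕ Fin n) k :=
  (LinearMap.applyₗ (1 : MvPolynomial (Fin n ⊕ Fin n) k)).comp (rho k n).toLinearMap

theorem psi_apply (a : WeylAlgebra k n) : psi k n a = rho k n a 1 := rfl

theorem psi_one : psi k n 1 = 1 := by rw [psi_apply, map_one (rho k n)]; rfl

theorem rho_mul (a b : WeylAlgebra k n) (q) : rho k n (a * b) q = rho k n a (rho k n b q) := by
  rw [map_mul (rho k n)]; rfl

theorem rho_smul (c : k) (q) : rho k n (algebraMap k _ c) q = C c * q := by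
  rw [AlgHom.commutes, ← smul_eq_C_mul]; rfl

theorem psi_mul (a b : WeylAlgebra k n) : psi k n (a * b) = rho k n a (psi k n b) := by
  rw [psi_apply, rho_mul]; rfl

theorem rho_mul_inr (a : WeylAlgebra k n) (i : Fin n) (q) :
    rho k n a (q * X (.inr i)) = rho k n a q * X (.inr i) := by
  induction a using wY_induction generalizing q with
  | h1 => simp
  | hsmul c a ha => rw [rho_mul, rho_mul, rho_smul, rho_smul, ha]; ring
  | hadd a b ha hb => simp [ha, hb, add_mul]
  | hY j a ha =>
    rw [rho_mul, rho_mul, ha]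
    cases j with
    | inl j => rw [rho_inl, rho_inl, mul_assoc]
    | inr j =>
      rw [rho_inr, rho_inr, pderiv_mul, pderiv_X_of_ne (by simp)]
      ring

theorem psi_mul_inr (a : WeylAlgebra k n) (i : Fin n) :
    psi k n (a * wY k (.inr i)) = psi k n a * X (.inr i) := by
  have h1 : psi k n (wY k (.inr i)) = 1 * X (.inr i) := by
    rw [psi_apply, rho_inr]; simp
  rw [psi_mul, h1, rho_mul_inr, psi_apply]

theorem wY_inl (i : Fin n) : wY k (.inl i) = wX k i := rfl
theorem wY_inr (i : Fin n) : wY k (.inr i) = wD k i := rfl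

/-- The twisted derivations on the Weyl algebra dual to the generators. -/
noncomputable def wDer (k : Type*) [Field k] {n : ℕ} (i : Fin n ⊕ Fin n) (a : WeylAlgebra k n) :
    WeylAlgebra k n :=
  Sum.elim (fun i => wY k (.inr i) * a - a * wY k (.inr i))
    (fun i => a * wY k (.inl i) - wY k (.inl i) * a) i

theorem rho_comm (a : WeylAlgebra k n) (i : Fin n) (q) :
    rho k n (a * wY k (.inl i) - wY k (.inl i) * a) q =
      pderiv (.inr i) (rho k n a q) - rho k n a (pderiv (.inr i) q) := by
  induction a using wY_induction generalizing q with
  | h1 => simp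
  | hsmul c a ha =>
    rw [mul_assoc, ← mul_assoc (wY k (.inl i)), ← Algebra.commutes c (wY k (.inl i)), mul_assoc,
      ← mul_sub, rho_mul, rho_mul, rho_mul, rho_smul, rho_smul, rho_smul, pderiv_C_mul, ha]
    ring
  | hadd a b ha hb =>
    have : (a + b) * wY k (.inl i) - wY k (.inl i) * (a + b) =
      (a * wY k (.inl i) - wY k (.inl i) * a) + (b * wY k (.inl i) - wY k (.inl i) * b) := by
      noncomm_ring
    rw [this, map_add, LinearMap.add_apply, ha, hb]
    simp
    ring
  | hY j a ha =>
    have : wY k j * a * wY k (.inl i) - wY k (.inl i) * (wY k j * a) =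
      wY k j * (a * wY k (.inl i) - wY k (.inl i) * a) +
        (wY k j * wY k (.inl i) - wY k (.inl i) * wY k j) * a := by
      rw [mul_sub, sub_mul]
      simp only [mul_assoc]
      abel
    rw [this, map_add, LinearMap.add_apply, rho_mul, rho_mul, rho_mul, rho_mul, ha]
    cases j with
    | inl j =>
      rw [wY_inl, wY_inl, wXX, sub_self, map_zero, LinearMap.zero_apply, ← wY_inl, rho_inl, rho_inl,
        rho_inl, pderiv_mul, pderiv_X_of_ne (by simp)]
      ring
    | inr j =>
      rw [wY_inl, wY_inr, wDX, add_sub_cancel_left, ← wY_inr, rho_inr, rho_inr, rho_inr, map_add,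
        pderiv_mul, map_sub, pderiv_comm' (Sum.inl j)]
      split_ifs with hij
      · subst hij
        rw [pderiv_X_self]
        simp
        ring
      · rw [pderiv_X_of_ne (by simpa using hij)]
        simp
        ring

theorem psi_wDer (i) (a : WeylAlgebra k n) : psi k n (wDer k i a) = pderiv i (psi k n a) := by
  cases i with
  | inl i =>
    simp only [wDer, Sum.elim_inl]
    rw [map_sub, psi_mul_inr, psi_mul, rho_inr]
    ring
  | inr i =>
    simp only [wDer, Sum.elim_inr]
    rw [psi_apply, rho_comm, pderiv_one, map_zero, sub_zero, psi_apply]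

end weyl
end WA


namespace WA
open MvPolynomial

section weyl2
variable {k : Type*} [Field k] {n : ℕ}

theorem wY_full_induction {p : WeylAlgebra k n → Prop} (hc : ∀ c, p (algebraMap k _ c))
    (hadd : ∀ a b, p a → p b → p (a + b)) (hmul : ∀ a b, p a → p b → p (a * b))
    (hY : ∀ i, p (wY k i)) (a) : p a :=
  wY_induction (by simpa using hc 1) (fun c _ ha => hmul _ _ (hc c) ha) hadd
    (fun i _ ha => hmul _ _ (hY i) ha) a

/-- Standard monomials. -/
noncomputable def mon (k : Type*) [Field k] {n : ℕ} (s : Fin n ⊕ Fin n →₀ ℕ) : WeylAlgebra k n :=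
  stdMon k (fun i => s (.inl i)) (fun i => s (.inr i))

/-- Normal ordering. -/
theorem exists_alpha_beta (k : Type*) [Field k] (n : ℕ) :
    ∃ α β : MvPolynomial (Fin n) k →ₐ[k] WeylAlgebra k n,
    (∀ i, α (X i) = wX k i) ∧ (∀ i, β (X i) = wD k i) := by
  obtain ⟨α, hα⟩ := comm_lift (k := k) (wX k (n := n)) wXX
  obtain ⟨β, hβ⟩ := comm_lift (k := k) (wD k (n := n)) wDD
  exact ⟨α, β, hα, hβ⟩

/-- A chosen normal ordering of the `x` part. -/
noncomputable def al (k : Type*) [Field k] (n : ℕ) : MvPolynomial (Fin n) k →ₐ[k] WeylAlgebra k n :=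
  (exists_alpha_beta k n).choose

/-- A chosen normal ordering of the `∂` part. -/
noncomputable def be (k : Type*) [Field k] (n : ℕ) : MvPolynomial (Fin n) k →ₐ[k] WeylAlgebra k n :=
  (exists_alpha_beta k n).choose_spec.choose

theorem al_X (i) : al k n (X i) = wX k i := (exists_alpha_beta k n).choose_spec.choose_spec.1 i
theorem be_X (i) : be k n (X i) = wD k i := (exists_alpha_beta k n).choose_spec.choose_spec.2 i

theorem stdMon_eq (u v : Fin n → ℕ) : stdMon k u v =
    al k n (monomial (Finsupp.equivFunOnFinite.symm u) 1) *
      be k n (monomial (Finsupp.equivFunOnFinite.symm v) 1) := by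
  have h : ∀ (w : Fin n → ℕ) (γ : MvPolynomial (Fin n) k →ₐ[k] WeylAlgebra k n),
      γ (monomial (Finsupp.equivFunOnFinite.symm w) 1) =
        (List.ofFn fun i => γ (X i) ^ w i).prod := by
    intro w γ
    rw [monomial_eq, C_1, one_mul, Finsupp.prod_fintype _ _ (by simp), ← List.prod_ofFn,
      map_list_prod, List.map_ofFn]
    congr 2
    funext i
    simp
  rw [h, h, stdMon]
  simp only [al_X, be_X]

theorem wD_al (i) (q) : wD k i * al k n q = al k n q * wD k i + al k n (pderiv i q) := by
  classical
  induction q using MvPolynomial.induction_on with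
  | C a => 
    have : al k n (C a) = algebraMap k _ a := (al k n).commutes a
    rw [this, ← Algebra.commutes, pderiv_C, map_zero, add_zero]
  | add p q hp hq =>
    rw [map_add, mul_add, hp, hq, add_mul, map_add, map_add]; abel
  | mul_X p j hp =>
    rw [map_mul, ← mul_assoc, hp, add_mul, mul_assoc, al_X, wDX, mul_add, pderiv_mul, map_add,
      map_mul, map_mul, al_X, pderiv_X, mul_assoc]
    by_cases hij : i = j
    · subst hij; simp; abel
    · simp [hij]

theorem al_be_mem (q r : MvPolynomial (Fin n) k) :
    al k n q * be k n r ∈ Submodule.span k (Set.range (mon k (n := n))) := by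
  induction q using MvPolynomial.induction_on' with
  | monomial u a =>
    induction r using MvPolynomial.induction_on' with
    | monomial v b =>
      have e1 : monomial u a = a • monomial u (1 : k) := by
        rw [smul_monomial, smul_eq_mul, mul_one]
      have e2 : monomial v b = b • monomial v (1 : k) := by
        rw [smul_monomial, smul_eq_mul, mul_one]
      rw [e1, e2, map_smul, map_smul, smul_mul_smul_comm]
      apply Submodule.smul_mem
      apply Submodule.subset_span
      refine ⟨Finsupp.equivFunOnFinite.symm (Sum.elim u v), ?_⟩
      rw [mon, stdMon_eq]
      congr 3
      · congr 1; ext i; simp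
      · congr 1; ext i; simp
    | add r r' h h' => rw [map_add, mul_add]; exact add_mem h h'
  | add q q' h h' => rw [map_add, add_mul]; exact add_mem h h'

theorem span_mon (a : WeylAlgebra k n) : a ∈ Submodule.span k (Set.range (mon k (n := n))) := by
  have h1 : a ∈ AddSubmonoid.closure {b | ∃ q r, b = al k n q * be k n r} := by
    induction a using wY_induction with
    | h1 => exact AddSubmonoid.subset_closure ⟨1, 1, by simp⟩
    | hsmul c a ha =>
      induction ha using AddSubmonoid.closure_induction with
      | mem x hx =>
        obtain ⟨q, r, rfl⟩ := hx
        refine AddSubmonoid.subset_closure ⟨C c * q, r, ?_⟩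
        have : al k n (C c) = algebraMap k _ c := (al k n).commutes c
        rw [map_mul, this, mul_assoc]
      | zero => rw [mul_zero]; exact zero_mem _
      | add x y _ _ hx hy => rw [mul_add]; exact add_mem hx hy
    | hadd a b ha hb => exact add_mem ha hb
    | hY i a ha =>
      induction ha using AddSubmonoid.closure_induction with
      | mem x hx =>
        obtain ⟨q, r, rfl⟩ := hx
        cases i with
        | inl i =>
          refine AddSubmonoid.subset_closure ⟨X i * q, r, ?_⟩
          rw [map_mul, al_X, wY_inl, mul_assoc]
        | inr i =>
          rw [wY_inr, ← mul_assoc, wD_al, add_mul]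
          refine add_mem (AddSubmonoid.subset_closure ⟨q, X i * r, ?_⟩)
            (AddSubmonoid.subset_closure ⟨_, _, rfl⟩)
          rw [map_mul, be_X, mul_assoc]
      | zero => rw [mul_zero]; exact zero_mem _
      | add x y _ _ hx hy => rw [mul_add]; exact add_mem hx hy
  induction h1 using AddSubmonoid.closure_induction with
  | mem x hx => obtain ⟨q, r, rfl⟩ := hx; exact al_be_mem q r
  | zero => exact zero_mem _
  | add x y _ _ hx hy => exact add_mem hx hy

theorem psi_al (q) (a : WeylAlgebra k n) :
    psi k n (al k n q * a) = rename Sum.inl q * psi k n a := by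
  induction q using MvPolynomial.induction_on generalizing a with
  | C c =>
    have : al k n (C c) = algebraMap k _ c := (al k n).commutes c
    rw [this, psi_mul, rho_smul, rename_C]
  | add p q hp hq => rw [map_add, add_mul, map_add, hp, hq, map_add, add_mul]
  | mul_X p j hp =>
    rw [map_mul (al k n), mul_assoc, hp, al_X, ← wY_inl, psi_mul, rho_inl, map_mul (rename Sum.inl), rename_X, mul_assoc]

theorem psi_be (r) (a : WeylAlgebra k n) :
    psi k n (a * be k n r) = psi k n a * rename Sum.inr r := by
  induction r using MvPolynomial.induction_on generalizing a with
  | C c =>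
    have : be k n (C c) = algebraMap k _ c := (be k n).commutes c
    rw [this, ← Algebra.commutes, psi_mul, rho_smul, rename_C, mul_comm]
  | add p q hp hq => rw [map_add, mul_add, map_add, hp, hq, map_add, mul_add]
  | mul_X p j hp =>
    rw [map_mul (be k n), ← mul_assoc, be_X, ← wY_inr, psi_mul_inr, hp, map_mul (rename Sum.inr), rename_X, mul_assoc]

theorem psi_mon (s) : psi k n (mon k s) = monomial s 1 := by
  have := psi_al (k := k) (n := n)
    (monomial (Finsupp.equivFunOnFinite.symm fun i => s (Sum.inl i)) 1)
    (be k n (monomial (Finsupp.equivFunOnFinite.symm fun i => s (Sum.inr i)) 1))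
  rw [mon, stdMon_eq, this, ← one_mul (be k n _), psi_be, psi_one, one_mul, rename_monomial,
    rename_monomial, monomial_mul, one_mul]
  refine congrArg (fun s => monomial s (1 : k)) (Finsupp.ext fun i => ?_)
  cases i with
  | inl i =>
    rw [Finsupp.add_apply, Finsupp.mapDomain_apply Sum.inl_injective, Finsupp.mapDomain_of_notMem_range]
    · simp
    · simp
  | inr i =>
    rw [Finsupp.add_apply, Finsupp.mapDomain_apply Sum.inr_injective, Finsupp.mapDomain_of_notMem_range]
    · simp
    · simp

/-- The inverse of the symbol map. -/
noncomputable def sig (k : Type*) [Field k] (n : ℕ) :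
    MvPolynomial (Fin n ⊕ Fin n) k →ₗ[k] WeylAlgebra k n :=
  (basisMonomials (Fin n ⊕ Fin n) k).constr k (mon k)

theorem sig_monomial (s) : sig k n (monomial s 1) = mon k s := by
  have := (basisMonomials (Fin n ⊕ Fin n) k).constr_basis k (mon k) s
  rw [coe_basisMonomials] at this
  exact this

theorem sig_psi (a : WeylAlgebra k n) : sig k n (psi k n a) = a := by
  have h := span_mon a
  induction h using Submodule.span_induction with
  | mem x hx => obtain ⟨s, rfl⟩ := hx; rw [psi_mon, sig_monomial]
  | zero => simp
  | add x y _ _ hx hy => rw [map_add, map_add, hx, hy]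
  | smul c x _ hx => rw [map_smul, map_smul, hx]

theorem psi_sig (q) : psi k n (sig k n q) = q := by
  have : (psi k n).comp (sig k n) = LinearMap.id := by
    apply (basisMonomials (Fin n ⊕ Fin n) k).ext
    intro s
    rw [coe_basisMonomials]
    simp only [LinearMap.comp_apply, LinearMap.id_apply]
    rw [sig_monomial, psi_mon]
  exact DFunLike.congr_fun this q

theorem psi_injective : Function.Injective (psi k n) :=
  Function.LeftInverse.injective sig_psi

theorem eq_sum_mon (a : WeylAlgebra k n) :
    a = ∑ s ∈ (psi k n a).support, coeff s (psi k n a) • mon k s := by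
  conv_lhs => rw [← sig_psi a, ← support_sum_monomial_coeff (psi k n a), map_sum]
  refine Finset.sum_congr rfl fun s _ => ?_
  rw [← sig_monomial, ← map_smul, smul_monomial, smul_eq_mul, mul_one]

/-- `p`-th powers of the generators commute with everything -/
theorem wY_pow_comm (p : ℕ) [CharP k p] (i) (a : WeylAlgebra k n) :
    wY k i ^ p * a = a * wY k i ^ p := by
  have key : ∀ i j : Fin n ⊕ Fin n, ∃ c : k, wY k i * wY k j = wY k j * wY k i + algebraMap k _ c := by
    intro i j
    rcases i with i | i <;> rcases j with j | j
    · exact ⟨0, by rw [wY_inl, wY_inl, wXX, map_zero, add_zero]⟩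
    · refine ⟨if j = i then -1 else 0, ?_⟩
      rw [wY_inl, wY_inr, wDX]; split_ifs <;> simp
    · refine ⟨if i = j then 1 else 0, ?_⟩
      rw [wY_inl, wY_inr, wDX]; split_ifs <;> simp
    · exact ⟨0, by rw [wY_inr, wY_inr, wDD, map_zero, add_zero]⟩
  have key2 : ∀ (i j : Fin n ⊕ Fin n) (c : k), wY k i * wY k j = wY k j * wY k i + algebraMap k _ c →
      ∀ m : ℕ, wY k i ^ (m + 1) * wY k j = wY k j * wY k i ^ (m + 1) +
        algebraMap k _ ((m + 1 : ℕ) * c) * wY k i ^ m := by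
    intro i j c h m
    induction m with
    | zero => simp [h]
    | succ m ih =>
      rw [pow_succ' _ (m + 1), mul_assoc, ih, mul_add, ← mul_assoc, h, ← mul_assoc (wY k i),
        ← Algebra.commutes _ (wY k i), mul_assoc (algebraMap k _ _) (wY k i), ← pow_succ', add_mul,
        mul_assoc, ← pow_succ', add_assoc, ← add_mul, ← map_add]
      congr 3
      push_cast; ring
  induction a using wY_full_induction with
  | hc c => rw [Algebra.commutes]
  | hadd a b ha hb => rw [mul_add, add_mul, ha, hb]
  | hmul a b ha hb => rw [← mul_assoc, ha, mul_assoc, hb, mul_assoc]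
  | hY j =>
    obtain ⟨c, hc⟩ := key i j
    rcases p with _ | p
    · simp
    · rw [key2 i j c hc p, CharP.cast_eq_zero, zero_mul, map_zero, zero_mul, add_zero]

theorem exists_zeta (k : Type*) [Field k] (n p : ℕ) : ∃ ζ : MvPolynomial (Fin n ⊕ Fin n) k →ₐ[k] WeylAlgebra k n,
    CharP k p → ∀ i, ζ (X i) = wY k i ^ p := by
  by_cases h : CharP k p
  · obtain ⟨ζ, hζ⟩ := comm_lift (k := k) (fun i : Fin n ⊕ Fin n => wY k i ^ p)
      (fun i j => wY_pow_comm p i _)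
    exact ⟨ζ, fun _ => hζ⟩
  · obtain ⟨ζ, _⟩ := comm_lift (k := k) (fun i : Fin n ⊕ Fin n => (0 : WeylAlgebra k n)) (by simp)
    exact ⟨ζ, fun h' => absurd h' h⟩

/-- The embedding of the center. -/
noncomputable def zeta (k : Type*) [Field k] (n p : ℕ) :
    MvPolynomial (Fin n ⊕ Fin n) k →ₐ[k] WeylAlgebra k n := (exists_zeta k n p).choose

variable (p : ℕ) [CharP k p]

theorem zeta_X (i) : zeta k n p (X i) = wY k i ^ p := (exists_zeta k n p).choose_spec inferInstance i

theorem zeta_C (c : k) : zeta k n p (C c) = algebraMap k _ c := (zeta k n p).commutes c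

theorem zeta_comm (g) (a : WeylAlgebra k n) : zeta k n p g * a = a * zeta k n p g := by
  induction g using MvPolynomial.induction_on with
  | C c => rw [zeta_C, Algebra.commutes]
  | add g h hg hh => rw [map_add, add_mul, mul_add, hg, hh]
  | mul_X g i hg => rw [map_mul, mul_assoc, zeta_X, wY_pow_comm, ← mul_assoc, hg, mul_assoc]

theorem psi_zeta_mul (g) (a : WeylAlgebra k n) :
    psi k n (zeta k n p g * a) = expand p g * psi k n a := by
  have hl : ∀ (i : Fin n) m (a : WeylAlgebra k n),
      psi k n (wY k (.inl i) ^ m * a) = X (.inl i) ^ m * psi k n a := by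
    intro i m
    induction m with
    | zero => simp
    | succ m ih => intro a; rw [pow_succ, mul_assoc, ih, psi_mul, rho_inl, pow_succ, mul_assoc]
  have hr : ∀ (i : Fin n) m (a : WeylAlgebra k n),
      psi k n (a * wY k (.inr i) ^ m) = X (.inr i) ^ m * psi k n a := by
    intro i m
    induction m with
    | zero => simp
    | succ m ih => intro a; rw [pow_succ, ← mul_assoc, psi_mul_inr, ih, pow_succ]; ring
  induction g using MvPolynomial.induction_on generalizing a with
  | C c => rw [zeta_C, psi_mul, rho_smul]; simp
  | add g h hg hh => rw [map_add, add_mul, map_add, hg, hh, map_add, add_mul]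
  | mul_X g i hg =>
    rw [map_mul (zeta k n p), mul_assoc, hg, zeta_X, map_mul (expand p), expand_X, mul_assoc]
    congr 1
    cases i with
    | inl i => rw [hl]
    | inr i => rw [wY_pow_comm, hr]

theorem psi_zeta (g) : psi k n (zeta k n p g) = expand p g := by
  have := psi_zeta_mul p g (1 : WeylAlgebra k n)
  rwa [mul_one, psi_one, mul_one] at this

theorem zeta_injective (hp : p ≠ 0) : Function.Injective (zeta k n p) := by
  intro g h e
  have := congrArg (psi k n) e
  rw [psi_zeta, psi_zeta] at this
  exact expand_injective (Nat.pos_of_ne_zero hp) this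

theorem zeta_torsion (hp : p ≠ 0) (g) (hg : g ≠ 0) (a : WeylAlgebra k n)
    (h : zeta k n p g * a = 0) : a = 0 := by
  have := congrArg (psi k n) h
  rw [psi_zeta_mul, map_zero, mul_eq_zero] at this
  rcases this with h | h
  · exact absurd ((expand_eq_zero (Nat.pos_of_ne_zero hp)).1 h) hg
  · exact psi_injective (by rw [h, map_zero])

theorem center_eq (hp : p.Prime) (a : WeylAlgebra k n) (h : ∀ i, wDer k i a = 0) :
    ∃ g, a = zeta k n p g := by
  have hd : ∀ i, pderiv i (psi k n a) = 0 := fun i => by rw [← psi_wDer, h, map_zero]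
  have hdvd : ∀ s ∈ (psi k n a).support, ∀ i, p ∣ s i := by
    intro s hs i
    by_cases hsi : s i = 0
    · simp [hsi]
    have h1 := congrArg (coeff (s - Finsupp.single i 1)) (hd i)
    rw [coeff_pderiv, coeff_zero, tsub_add_cancel_of_le (by simpa using Nat.one_le_iff_ne_zero.2 hsi)] at h1
    rcases mul_eq_zero.1 h1 with h2 | h2
    · exact absurd h2 (mem_support_iff.1 hs)
    · rw [← CharP.cast_eq_zero_iff k p, ← h2]
      simp only [Finsupp.tsub_apply, Finsupp.single_eq_same]
      rw [← Nat.cast_succ]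
      congr 1
      omega
  refine ⟨∑ s ∈ (psi k n a).support, monomial (s.mapRange (· / p) (by simp)) (coeff s (psi k n a)),
    psi_injective ?_⟩
  rw [psi_zeta, map_sum]
  conv_lhs => rw [← support_sum_monomial_coeff (psi k n a)]
  refine Finset.sum_congr rfl fun s hs => ?_
  rw [expand_monomial]
  refine congrArg (fun t => monomial t (coeff s (psi k n a))) (Finsupp.ext fun i => ?_)
  simp only [Finsupp.smul_apply, Finsupp.mapRange_apply, smul_eq_mul]
  exact (Nat.mul_div_cancel' (hdvd s hs i)).symm

end weyl2
end WA


namespace WA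
open MvPolynomial

section filt
variable {k : Type*} [Field k]

/-- Polynomials of degree less than `s`. -/
def Flt (ι k : Type*) [Field k] (s : ℕ) : Submodule k (MvPolynomial ι k) where
  carrier := {q | ∀ t, coeff t q ≠ 0 → t.degree < s}
  zero_mem' := by intro t h; simp at h
  add_mem' := by
    intro a b ha hb t h
    rw [coeff_add] at h
    by_cases h1 : coeff t a = 0
    · exact hb t (by rwa [h1, zero_add] at h)
    · exact ha t h1
  smul_mem' := by
    intro c a ha t h
    rw [coeff_smul] at h
    exact ha t (right_ne_zero_of_smul h)

variable {ι : Type*}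

theorem mem_Flt {s : ℕ} {q : MvPolynomial ι k} : q ∈ Flt ι k s ↔ ∀ t, coeff t q ≠ 0 → t.degree < s :=
  Iff.rfl

theorem Flt_mono {s t : ℕ} (h : s ≤ t) : Flt ι k s ≤ Flt ι k t :=
  fun _ hq u hu => (hq u hu).trans_le h

theorem Flt_mul {s t : ℕ} {q r : MvPolynomial ι k} (hq : q ∈ Flt ι k (s + 1)) (hr : r ∈ Flt ι k t) :
    q * r ∈ Flt ι k (s + t) := by
  classical
  intro u hu
  rw [coeff_mul] at hu
  obtain ⟨⟨a, b⟩, hab, h⟩ := Finset.exists_ne_zero_of_sum_ne_zero hu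
  rw [Finset.HasAntidiagonal.mem_antidiagonal] at hab
  have h1 := hq a (left_ne_zero_of_mul h)
  have h2 := hr b (right_ne_zero_of_mul h)
  rw [← hab, map_add]
  dsimp only at *
  omega

theorem Flt_mul' {s t : ℕ} {q r : MvPolynomial ι k} (hq : q ∈ Flt ι k s) (hr : r ∈ Flt ι k (t + 1)) :
    q * r ∈ Flt ι k (s + t) := by
  rw [mul_comm, add_comm]; exact Flt_mul hr hq

theorem Flt_monomial {s : ℕ} {u : ι →₀ ℕ} (h : u.degree < s) (c : k) : monomial u c ∈ Flt ι k s := by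
  classical
  intro t ht
  rw [coeff_monomial] at ht
  split_ifs at ht with e
  · rwa [← e]
  · simp at ht

theorem Flt_C (c : k) : (C c : MvPolynomial ι k) ∈ Flt ι k 1 := Flt_monomial (by simp) c

theorem Flt_X (i : ι) : (X i : MvPolynomial ι k) ∈ Flt ι k 2 := Flt_monomial (by simp) 1

theorem Flt_pderiv {s : ℕ} {q : MvPolynomial ι k} (hq : q ∈ Flt ι k (s + 1)) (i : ι) :
    pderiv i q ∈ Flt ι k s := by
  intro u hu
  rw [coeff_pderiv] at hu
  have := hq _ (left_ne_zero_of_mul hu)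
  rw [map_add] at this
  simp at this
  exact this

theorem Flt_totalDegree {s : ℕ} {q : MvPolynomial ι k} (hq : q ∈ Flt ι k (s + 1)) :
    q.totalDegree ≤ s :=
  Finset.sup_le fun t ht => Nat.le_of_lt_succ (hq t (mem_support_iff.1 ht))

variable {n : ℕ}

/-- The predicate of being of order at most `s`. -/
def TT (s : ℕ) (a : WeylAlgebra k n) : Prop :=
  psi k n a ∈ Flt (Fin n ⊕ Fin n) k (s + 1) ∧
    ∀ t q, q ∈ Flt (Fin n ⊕ Fin n) k (t + 1) → rho k n a q - psi k n a * q ∈ Flt _ k (s + t)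

theorem TT_mono {s t : ℕ} (h : s ≤ t) {a : WeylAlgebra k n} (ha : TT s a) : TT t a :=
  ⟨Flt_mono (by omega) ha.1, fun r q hq => Flt_mono (by omega) (ha.2 r q hq)⟩

theorem TT_add {s : ℕ} {a b : WeylAlgebra k n} (ha : TT s a) (hb : TT s b) : TT s (a + b) := by
  refine ⟨by rw [map_add]; exact add_mem ha.1 hb.1, fun t q hq => ?_⟩
  have := add_mem (ha.2 t q hq) (hb.2 t q hq)
  convert this using 1
  rw [map_add, map_add, LinearMap.add_apply]
  ring

theorem TT_const (c : k) : TT 0 (algebraMap k (WeylAlgebra k n) c) := by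
  have h : psi k n (algebraMap k (WeylAlgebra k n) c) = C c := by
    rw [psi_apply, rho_smul, mul_one]
  refine ⟨by rw [h]; exact Flt_C c, fun t q _ => ?_⟩
  rw [h, rho_smul, sub_self]
  exact zero_mem _

theorem TT_Y (i) : TT 1 (wY k i : WeylAlgebra k n) := by
  cases i with
  | inl i =>
    have h : psi k n (wY k (.inl i)) = X (.inl i) := by rw [psi_apply, rho_inl, mul_one]
    refine ⟨by rw [h]; exact Flt_X _, fun t q _ => ?_⟩
    rw [h, rho_inl, sub_self]
    exact zero_mem _
  | inr i =>
    have h : psi k n (wY k (.inr i)) = X (.inr i) := by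
      rw [psi_apply, rho_inr, mul_one, pderiv_one, zero_add]
    refine ⟨by rw [h]; exact Flt_X _, fun t q hq => ?_⟩
    rw [h, rho_inr, add_sub_cancel_right]
    exact Flt_mono (by omega) (Flt_pderiv hq _)

theorem TT_mul {s t : ℕ} {a b : WeylAlgebra k n} (ha : TT s a) (hb : TT t b) : TT (s + t) (a * b) := by
  have h1 : psi k n (a * b) - psi k n a * psi k n b ∈ Flt _ k (s + t) := by
    rw [psi_mul]; exact ha.2 t _ hb.1
  refine ⟨?_, fun r q hq => ?_⟩
  · have h2 : psi k n a * psi k n b ∈ Flt _ k (s + (t + 1)) := Flt_mul ha.1 hb.1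
    have := add_mem (Flt_mono (by omega) h1) h2
    rwa [sub_add_cancel] at this
  · have e1 := hb.2 r q hq
    have e2 : rho k n b q ∈ Flt _ k (t + r + 1) := by
      have := add_mem (Flt_mono (by omega : t + r ≤ t + (r + 1)) e1) (Flt_mul hb.1 hq)
      rwa [sub_add_cancel] at this
    have e3 := ha.2 _ _ e2
    have e4 := Flt_mul ha.1 e1
    have e5 := Flt_mul' h1 hq
    rw [← add_assoc] at e3 e4
    have := sub_mem (add_mem e3 e4) e5
    convert this using 1
    rw [rho_mul]
    ring

theorem TT_mon_aux (γ : MvPolynomial (Fin n) k →ₐ[k] WeylAlgebra k n) (h : ∀ i, TT 1 (γ (X i)))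
    (u : Fin n →₀ ℕ) : TT u.degree (γ (monomial u 1)) := by
  induction u using Finsupp.induction_linear with
  | zero => simpa using TT_const (n := n) (1 : k)
  | add u v hu hv =>
    rw [← one_mul (1 : k), ← monomial_mul, map_mul, map_add]
    exact TT_mul hu hv
  | single i m =>
    rw [← X_pow_eq_monomial, map_pow, Finsupp.degree_single]
    induction m with
    | zero => simpa using TT_const (n := n) (1 : k)
    | succ m ih => rw [pow_succ]; exact TT_mul ih (h i)

theorem TT_stdMon (u v : Fin n → ℕ) : TT (∑ i, u i + ∑ i, v i) (stdMon k u v) := by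
  have h1 := TT_mon_aux (al k n) (fun i => by rw [al_X, ← wY_inl]; exact TT_Y _)
    (Finsupp.equivFunOnFinite.symm u)
  have h2 := TT_mon_aux (be k n) (fun i => by rw [be_X, ← wY_inr]; exact TT_Y _)
    (Finsupp.equivFunOnFinite.symm v)
  rw [Finsupp.degree_eq_sum] at h1 h2
  rw [stdMon_eq]
  exact TT_mul h1 h2

theorem TT_mon (s : Fin n ⊕ Fin n →₀ ℕ) : TT s.degree (mon k s) := by
  have := TT_stdMon (k := k) (fun i => s (Sum.inl i)) (fun i => s (Sum.inr i))
  rwa [← Fintype.sum_sum_type, ← Finsupp.degree_eq_sum] at this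

theorem TT_smul (c : k) {s : ℕ} {a : WeylAlgebra k n} (ha : TT s a) : TT s (c • a) := by
  rw [Algebra.smul_def]
  have := TT_mul (TT_const c) ha
  rwa [zero_add] at this

theorem TT_zero {s : ℕ} : TT s (0 : WeylAlgebra k n) := by
  have := TT_const (n := n) (0 : k)
  rw [map_zero] at this
  exact TT_mono (by omega) this

theorem TT_of_psi {s : ℕ} {a : WeylAlgebra k n} (h : psi k n a ∈ Flt _ k (s + 1)) : TT s a := by
  rw [eq_sum_mon a]
  refine Finset.sum_induction _ (TT s) (fun _ _ => TT_add) TT_zero fun u hu => ?_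
  exact TT_smul _ (TT_mono (Nat.le_of_lt_succ (h u (mem_support_iff.1 hu))) (TT_mon u))

theorem psi_mul_sub {s t : ℕ} {a b : WeylAlgebra k n} (ha : psi k n a ∈ Flt _ k (s + 1))
    (hb : psi k n b ∈ Flt _ k (t + 1)) :
    psi k n (a * b) - psi k n a * psi k n b ∈ Flt _ k (s + t) := by
  rw [psi_mul]; exact (TT_of_psi ha).2 t _ hb

theorem psi_mul_mem {s t : ℕ} {a b : WeylAlgebra k n} (ha : psi k n a ∈ Flt _ k (s + 1))
    (hb : psi k n b ∈ Flt _ k (t + 1)) :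
    psi k n (a * b) ∈ Flt _ k (s + t + 1) := (TT_mul (TT_of_psi ha) (TT_of_psi hb)).1

theorem psi_comm_mem {s t : ℕ} {a b : WeylAlgebra k n} (ha : psi k n a ∈ Flt _ k (s + 1))
    (hb : psi k n b ∈ Flt _ k (t + 1)) :
    psi k n (a * b - b * a) ∈ Flt _ k (s + t) := by
  have h1 := psi_mul_sub ha hb
  have h2 := psi_mul_sub hb ha
  rw [add_comm t] at h2
  have := sub_mem h1 h2
  convert this using 1
  rw [map_sub]
  ring

theorem psi_pow_sub {s : ℕ} {a : WeylAlgebra k n} (ha : psi k n a ∈ Flt _ k (s + 1)) (j : ℕ) :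
    psi k n (a ^ j) - psi k n a ^ j ∈ Flt _ k (j * s) ∧ psi k n (a ^ j) ∈ Flt _ k (j * s + 1) := by
  induction j with
  | zero =>
    rw [pow_zero, pow_zero, psi_one, sub_self, zero_mul]
    exact ⟨zero_mem _, Flt_C 1⟩
  | succ j ih =>
    have h1 := psi_mul_sub ih.2 ha
    have h2 := Flt_mul' ih.1 ha
    rw [pow_succ, pow_succ, add_mul, one_mul]
    refine ⟨?_, psi_mul_mem ih.2 ha⟩
    convert add_mem h1 h2 using 1
    ring

theorem mon_pow_sub (p : ℕ) [CharP k p] (s : Fin n ⊕ Fin n →₀ ℕ) :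
    psi k n (mon k s ^ p - zeta k n p (monomial s 1)) ∈ Flt _ k (p * s.degree) := by
  have h := (psi_pow_sub (TT_mon (k := k) s).1 p).1
  rw [map_sub, psi_zeta, expand_monomial]
  rwa [psi_mon, monomial_pow, one_pow] at h

theorem psi_of_wdeg {a : WeylAlgebra k n} {d : ℕ} (h : wdeg a ≤ d) :
    psi k n a ∈ Flt _ k (d + 1) := by
  have hne : {d : ℕ | a ∈ Submodule.span k {g | ∃ u v : Fin n → ℕ,
      (∑ i, u i) + (∑ i, v i) ≤ d ∧ g = stdMon k u v}}.Nonempty := by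
    refine ⟨(psi k n a).totalDegree, ?_⟩
    have : ∀ b, b = a → b ∈ Submodule.span k {g | ∃ u v : Fin n → ℕ,
      (∑ i, u i) + (∑ i, v i) ≤ (psi k n a).totalDegree ∧ g = stdMon k u v} := by
      intro b hb
      rw [eq_sum_mon b, hb]
      refine sum_mem fun s hs => Submodule.smul_mem _ _ (Submodule.subset_span ⟨_, _, ?_, rfl⟩)
      rw [← Fintype.sum_sum_type (fun i => s i), ← Finsupp.degree_eq_sum]
      exact le_totalDegree hs
    exact this a rfl
  have h1 := Nat.sInf_mem hne
  have h2 : ∀ b, b ∈ Submodule.span k {g | ∃ u v : Fin n → ℕ,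
      (∑ i, u i) + (∑ i, v i) ≤ wdeg a ∧ g = stdMon k u v} → TT (wdeg a) b := by
    intro b hb
    induction hb using Submodule.span_induction with
    | mem x hx => obtain ⟨u, v, huv, rfl⟩ := hx; exact TT_mono huv (TT_stdMon u v)
    | zero => exact TT_zero
    | add x y _ _ hx hy => exact TT_add hx hy
    | smul c x _ hx => exact TT_smul c hx
  exact (TT_mono h (h2 a h1)).1

end filt
end WA


namespace WA
open MvPolynomial

section theta
variable {k : Type*} [Field k] {n : ℕ} (p : ℕ) [CharP k p]
  (φ : WeylAlgebra k n →ₐ[k] WeylAlgebra k n)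

theorem psi_nat_mul (m : ℕ) (a : WeylAlgebra k n) : psi k n ((m : WeylAlgebra k n) * a) = C (m : k) * psi k n a := by
  have : (m : WeylAlgebra k n) = algebraMap k _ (m : k) := by simp
  rw [this, psi_mul, rho_smul]

theorem wDer_mon (i) (s : Fin n ⊕ Fin n →₀ ℕ) :
    wDer k i (mon k s) = ((s i : ℕ) : WeylAlgebra k n) * mon k (s - Finsupp.single i 1) := by
  apply psi_injective
  rw [psi_wDer, psi_nat_mul, psi_mon, psi_mon, pderiv_monomial, C_mul_monomial, one_mul, mul_one]

/-- The sum `∑ ζ(h_s) φ(y^s)`. -/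
noncomputable def Th : MvPolynomial (Fin n ⊕ Fin n) (MvPolynomial (Fin n ⊕ Fin n) k) →+ WeylAlgebra k n :=
  (Finsupp.liftAddHom fun s : Fin n ⊕ Fin n →₀ ℕ =>
    (AddMonoidHom.mulRight (φ (mon k s))).comp
      ((zeta k n p : MvPolynomial (Fin n ⊕ Fin n) k →+* WeylAlgebra k n) :
        MvPolynomial (Fin n ⊕ Fin n) k →+ WeylAlgebra k n)).comp
    ((basisMonomials (Fin n ⊕ Fin n) (MvPolynomial (Fin n ⊕ Fin n) k)).repr.toLinearMap.toAddMonoidHom)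

omit [CharP k p] in
theorem Th_monomial (s c) : Th p φ (monomial s c) = zeta k n p c * φ (mon k s) := by
  have h1 : monomial s c = c • (basisMonomials (Fin n ⊕ Fin n) (MvPolynomial (Fin n ⊕ Fin n) k)) s := by
    rw [coe_basisMonomials, smul_monomial, smul_eq_mul, mul_one]
  have h2 : (basisMonomials (Fin n ⊕ Fin n) (MvPolynomial (Fin n ⊕ Fin n) k)).repr (monomial s c) =
      Finsupp.single s c := by
    rw [h1, map_smul, Module.Basis.repr_self, Finsupp.smul_single, smul_eq_mul, mul_one]
  change Finsupp.liftAddHom _ ((basisMonomials (Fin n ⊕ Fin n) (MvPolynomial (Fin n ⊕ Fin n) k)).repr (monomial s c)) = _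
  rw [h2, Finsupp.liftAddHom_apply_single]
  rfl

omit [CharP k p] in
theorem mon_zero : mon k (0 : Fin n ⊕ Fin n →₀ ℕ) = 1 := by
  apply psi_injective
  rw [psi_mon, psi_one]; rfl

omit [CharP k p] in
theorem Th_C (c) : Th p φ (C c) = zeta k n p c := by
  rw [C_apply, Th_monomial, mon_zero, map_one, mul_one]

omit [CharP k p] in
theorem Th_C_mul (c h) : Th p φ (C c * h) = zeta k n p c * Th p φ h := by
  induction h using MvPolynomial.induction_on' with
  | monomial s d => rw [C_mul_monomial, Th_monomial, Th_monomial, map_mul, mul_assoc]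
  | add h h' e e' => rw [mul_add, map_add, map_add, e, e', mul_add]

omit [CharP k p] in
theorem Th_eq_sum (h) : Th p φ h = ∑ s ∈ h.support, zeta k n p (coeff s h) * φ (mon k s) := by
  conv_lhs => rw [← support_sum_monomial_coeff h, map_sum]
  exact Finset.sum_congr rfl fun s _ => Th_monomial p φ _ _

/-- Commutators with the images of the generators. -/
noncomputable def wE (i : Fin n ⊕ Fin n) (a : WeylAlgebra k n) : WeylAlgebra k n :=
  Sum.elim (fun i => φ (wY k (.inr i)) * a - a * φ (wY k (.inr i)))
    (fun i => a * φ (wY k (.inl i)) - φ (wY k (.inl i)) * a) i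

theorem wE_add (i) (a b : WeylAlgebra k n) : wE φ i (a + b) = wE φ i a + wE φ i b := by
  cases i <;> simp only [wE, Sum.elim_inl, Sum.elim_inr, mul_add, add_mul] <;> abel

theorem wE_zero (i) : wE φ i (0 : WeylAlgebra k n) = 0 := by
  cases i <;> simp [wE]

theorem wE_phi (i) (a : WeylAlgebra k n) : wE φ i (φ a) = φ (wDer k i a) := by
  cases i <;> simp [wE, wDer]

theorem wE_zeta_mul (i g) (a : WeylAlgebra k n) : wE φ i (zeta k n p g * a) = zeta k n p g * wE φ i a := by
  cases i with
  | inl i =>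
    simp only [wE, Sum.elim_inl, mul_sub]
    rw [← mul_assoc, ← zeta_comm, mul_assoc, mul_assoc]
  | inr i =>
    simp only [wE, Sum.elim_inr, mul_sub]
    rw [← mul_assoc (φ _), ← zeta_comm p g (φ _), mul_assoc, mul_assoc]

theorem wE_Th (i h) : wE φ i (Th p φ h) = Th p φ (pderiv i h) := by
  induction h using MvPolynomial.induction_on' with
  | monomial s c =>
    rw [Th_monomial, wE_zeta_mul, wE_phi, wDer_mon, pderiv_monomial, Th_monomial, map_mul φ,
      map_mul (zeta k n p), map_natCast, map_natCast, mul_assoc]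
  | add h h' e e' => rw [map_add, wE_add, e, e', map_add, map_add]

/-- All exponents are less than `p`. -/
def Red (k : Type*) [Field k] (n p : ℕ) : AddSubgroup (MvPolynomial (Fin n ⊕ Fin n) (MvPolynomial (Fin n ⊕ Fin n) k)) where
  carrier := {h | ∀ s, coeff s h ≠ 0 → ∀ i, s i < p}
  zero_mem' := by intro t h; simp at h
  add_mem' := by
    intro a b ha hb t h
    rw [coeff_add] at h
    by_cases h1 : coeff t a = 0
    · exact hb t (by rwa [h1, zero_add] at h)
    · exact ha t h1
  neg_mem' := by
    intro a ha t h
    rw [coeff_neg] at h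
    exact ha t (neg_ne_zero.1 h)

omit [CharP k p] in
theorem mem_Red {h} : h ∈ Red k n p ↔ ∀ s, coeff s h ≠ 0 → ∀ i, s i < p := Iff.rfl

omit [CharP k p] in
theorem Red_monomial {s : Fin n ⊕ Fin n →₀ ℕ} (hs : ∀ i, s i < p) (c) : monomial s c ∈ Red k n p := by
  classical
  intro t ht
  rw [coeff_monomial] at ht
  split_ifs at ht with e
  · rwa [← e]
  · simp at ht

omit [CharP k p] in
theorem Red_C (hp : 0 < p) (c) : C c ∈ Red k n p := Red_monomial p (fun _ => by simpa using hp) c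

omit [CharP k p] in
theorem Red_C_mul (c) {h} (hh : h ∈ Red k n p) : C c * h ∈ Red k n p := by
  intro t ht
  rw [coeff_C_mul] at ht
  exact hh t (right_ne_zero_of_mul ht)

omit [CharP k p] in
theorem Red_pderiv (i) {h} (hh : h ∈ Red k n p) : pderiv i h ∈ Red k n p := by
  intro t ht j
  rw [coeff_pderiv] at ht
  have := hh _ (left_ne_zero_of_mul ht) j
  simp only [Finsupp.add_apply] at this
  omega

theorem cast_ne_zero_P {m : ℕ} (h0 : m ≠ 0) (h : m < p) : (m : MvPolynomial (Fin n ⊕ Fin n) k) ≠ 0 := by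
  intro h1
  rw [CharP.cast_eq_zero_iff _ p] at h1
  exact absurd (Nat.le_of_dvd (Nat.pos_of_ne_zero h0) h1) (by omega)

omit [CharP k p] in
theorem coeff_from_pderiv {R : Type*} [CommRing R] {ι : Type*} (s : ι →₀ ℕ) (i) (hsi : s i ≠ 0)
    (h : MvPolynomial ι R) : coeff (s - Finsupp.single i 1) (pderiv i h) = coeff s h * (s i : R) := by
  rw [coeff_pderiv, tsub_add_cancel_of_le (by simpa using Nat.one_le_iff_ne_zero.2 hsi)]
  congr 1
  simp only [Finsupp.tsub_apply, Finsupp.single_eq_same]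
  rw [← Nat.cast_succ]
  congr 1
  omega

omit [CharP k p] in
theorem degree_pderiv {R : Type*} [CommRing R] {ι : Type*} (i : ι) (N : ℕ)
    (h : MvPolynomial ι R) (hh : ∀ s, coeff s h ≠ 0 → s.degree < N + 1) :
    ∀ s, coeff s (pderiv i h) ≠ 0 → s.degree < N := by
  intro s hs
  rw [coeff_pderiv] at hs
  have := hh _ (left_ne_zero_of_mul hs)
  rw [map_add, Finsupp.degree_single] at this
  omega

theorem Th_injective (hp : p.Prime) {h} (hh : h ∈ Red k n p) (h0 : Th p φ h = 0) : h = 0 := by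
  have key : ∀ N : ℕ, ∀ h ∈ Red k n p, (∀ s, coeff s h ≠ 0 → s.degree < N) → Th p φ h = 0 → h = 0 := by
    intro N
    induction N with
    | zero =>
      intro h _ hd _
      ext1 s
      by_contra hs
      exact absurd (hd s hs) (by simp)
    | succ N ih =>
      intro h hh hd h0
      have h1 : ∀ i, pderiv i h = 0 := fun i => ih _ (Red_pderiv p i hh) (degree_pderiv i N h hd)
        (by rw [← wE_Th, h0, wE_zero])
      have h2 : ∀ s, s ≠ 0 → coeff s h = 0 := by
        intro s hs
        by_contra hne
        obtain ⟨i, hi⟩ := Finsupp.ne_iff.1 hs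
        have h3 := coeff_from_pderiv s i hi h
        rw [h1, coeff_zero] at h3
        exact mul_ne_zero hne (cast_ne_zero_P p hi (hh s hne i)) h3.symm
      have h3 : h = C (coeff 0 h) := by
        ext1 s
        rw [coeff_C]
        split_ifs with e
        · rw [e]
        · exact h2 s (Ne.symm e)
      rw [h3, Th_C] at h0
      have := zeta_injective p hp.ne_zero (h0.trans (map_zero _).symm)
      rw [h3, this, C_0]
  have hN : ∀ s, coeff s h ≠ 0 → s.degree < h.totalDegree + 1 := fun s hs =>
    Nat.lt_succ_of_le (le_totalDegree (mem_support_iff.2 hs))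
  exact key _ h hh hN h0

/-- Exponents less than `p` as finsupps. -/
noncomputable def fe (b : Fin n ⊕ Fin n → Fin p) : Fin n ⊕ Fin n →₀ ℕ :=
  Finsupp.equivFunOnFinite.symm fun i => (b i : ℕ)

omit [CharP k p] in
theorem fe_lt (b : Fin n ⊕ Fin n → Fin p) (i) : fe p b i < p := by simp [fe]

omit [CharP k p] in
theorem fe_injective : Function.Injective (fe p (n := n)) := by
  intro b b' h
  funext i
  have := DFunLike.congr_fun h i
  simp only [fe, Finsupp.equivFunOnFinite_symm_apply_apply] at this
  exact Fin.ext this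

/-- Reduced polynomial from coefficients. -/
noncomputable def redOf (v : (Fin n ⊕ Fin n → Fin p) → MvPolynomial (Fin n ⊕ Fin n) k) :
    MvPolynomial (Fin n ⊕ Fin n) (MvPolynomial (Fin n ⊕ Fin n) k) :=
  ∑ b, monomial (fe p b) (v b)

omit [CharP k p] in
theorem redOf_mem (v) : redOf p v ∈ Red k n p :=
  sum_mem fun b _ => Red_monomial p (fe_lt p b) _

omit [CharP k p] in
theorem coeff_redOf (v : (Fin n ⊕ Fin n → Fin p) → MvPolynomial (Fin n ⊕ Fin n) k) (b) :
    coeff (fe p b) (redOf p v) = v b := by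
  classical
  rw [redOf, coeff_sum, Finset.sum_eq_single b]
  · rw [coeff_monomial, if_pos rfl]
  · intro b' _ hb
    rw [coeff_monomial, if_neg fun h => hb (fe_injective p h)]
  · simp

omit [CharP k p] in
theorem coeff_redOf_mem (v : (Fin n ⊕ Fin n → Fin p) → MvPolynomial (Fin n ⊕ Fin n) k)
    (M : AddSubgroup (MvPolynomial (Fin n ⊕ Fin n) k)) (hv : ∀ b, v b ∈ M) (s) :
    coeff s (redOf p v) ∈ M := by
  classical
  rw [redOf, coeff_sum]
  refine sum_mem fun b _ => ?_
  rw [coeff_monomial]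
  split_ifs
  · exact hv b
  · exact zero_mem _

omit [CharP k p] in
theorem Th_redOf (v) : Th p φ (redOf p v) = ∑ b, zeta k n p (v b) * φ (mon k (fe p b)) := by
  rw [redOf, map_sum]
  exact Finset.sum_congr rfl fun b _ => Th_monomial p φ _ _

theorem mon_split (q r : Fin n ⊕ Fin n →₀ ℕ) :
    mon k (p • q + r) = zeta k n p (monomial q 1) * mon k r := by
  apply psi_injective
  rw [psi_zeta_mul, psi_mon, psi_mon, expand_monomial, monomial_mul, one_mul]

omit [CharP k p] in
theorem exp_split (hp : 0 < p) (s : Fin n ⊕ Fin n →₀ ℕ) : ∃ (q : Fin n ⊕ Fin n →₀ ℕ) (b : Fin n ⊕ Fin n → Fin p),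
    s = p • q + fe p b := by
  refine ⟨s.mapRange (· / p) (by simp), fun i => ⟨s i % p, Nat.mod_lt _ hp⟩, ?_⟩
  ext i
  simp [fe, Nat.div_add_mod]

theorem span_id (hp : 0 < p) (a : WeylAlgebra k n) :
    ∃ v : (Fin n ⊕ Fin n → Fin p) → MvPolynomial (Fin n ⊕ Fin n) k,
      a = ∑ b, zeta k n p (v b) * mon k (fe p b) := by
  classical
  have h : ∀ a ∈ Submodule.span k (Set.range (mon k (n := n))),
    ∃ v : (Fin n ⊕ Fin n → Fin p) → MvPolynomial (Fin n ⊕ Fin n) k,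
      a = ∑ b, zeta k n p (v b) * mon k (fe p b) := by
    intro a ha
    induction ha using Submodule.span_induction with
    | mem x hx =>
      obtain ⟨s, rfl⟩ := hx
      obtain ⟨q, b, rfl⟩ := exp_split p hp s
      refine ⟨Pi.single b (monomial q 1), ?_⟩
      rw [mon_split, Finset.sum_eq_single b]
      · simp
      · intro b' _ hb
        rw [Pi.single_eq_of_ne hb, map_zero, zero_mul]
      · simp
    | zero => exact ⟨0, by simp⟩
    | add x y _ _ hx hy =>
      obtain ⟨v, rfl⟩ := hx
      obtain ⟨w, rfl⟩ := hy
      refine ⟨v + w, ?_⟩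
      rw [← Finset.sum_add_distrib]
      exact Finset.sum_congr rfl fun b _ => by rw [Pi.add_apply, map_add, add_mul]
    | smul c x _ hx =>
      obtain ⟨v, rfl⟩ := hx
      refine ⟨fun b => C c * v b, ?_⟩
      rw [Algebra.smul_def, Finset.mul_sum]
      exact Finset.sum_congr rfl fun b _ => by rw [map_mul, zeta_C, mul_assoc]
  exact h a (span_mon a)

theorem rank_arg (hp : p.Prime) (a : WeylAlgebra k n) :
    ∃ z ≠ 0, ∃ h ∈ Red k n p, zeta k n p z * a = Th p φ h := by
  classical
  choose M hM using fun b => span_id p hp.pos (φ (mon k (fe p b)))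
  let MM : Matrix (Fin n ⊕ Fin n → Fin p) (Fin n ⊕ Fin n → Fin p) (MvPolynomial (Fin n ⊕ Fin n) k) :=
    Matrix.of fun b' b => M b b'
  have hTh : ∀ v, Th p φ (redOf p v) = ∑ b', zeta k n p (MM.mulVec v b') * mon k (fe p b') := by
    intro v
    rw [Th_redOf]
    simp only [hM, Finset.mul_sum, Matrix.mulVec, dotProduct, map_sum, Finset.sum_mul]
    rw [Finset.sum_comm]
    refine Finset.sum_congr rfl fun b' _ => Finset.sum_congr rfl fun b _ => ?_
    rw [← mul_assoc, ← map_mul, mul_comm]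
    rfl
  have hdet : MM.det ≠ 0 := by
    intro h0
    obtain ⟨v, hv, hv0⟩ := Matrix.exists_mulVec_eq_zero_iff.2 h0
    have h1 := hTh v
    rw [hv0] at h1
    simp only [Pi.zero_apply, map_zero, zero_mul, Finset.sum_const_zero] at h1
    have h2 := Th_injective p φ hp (redOf_mem p v) h1
    apply hv
    funext b
    rw [← coeff_redOf p v b, h2, coeff_zero]
    rfl
  obtain ⟨g, hg⟩ := span_id p hp.pos a
  refine ⟨MM.det, hdet, redOf p (MM.adjugate.mulVec g), redOf_mem p _, ?_⟩
  rw [hTh, Matrix.mulVec_mulVec, Matrix.mul_adjugate, hg, Finset.mul_sum]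
  refine Finset.sum_congr rfl fun b _ => ?_
  rw [Matrix.smul_mulVec, Matrix.one_mulVec, Pi.smul_apply, smul_eq_mul, map_mul, mul_assoc]

omit [CharP k p] in
theorem wDer_of_comm {a : WeylAlgebra k n} (h : ∀ b, a * b = b * a) (i) : wDer k i a = 0 := by
  cases i <;> simp [wDer, h]

theorem phi_zeta_comm (hp : p.Prime) (g) (a : WeylAlgebra k n) :
    φ (zeta k n p g) * a = a * φ (zeta k n p g) := by
  obtain ⟨z, hz, h, _, e⟩ := rank_arg p φ hp a
  have h1 : ∀ h, φ (zeta k n p g) * Th p φ h = Th p φ h * φ (zeta k n p g) := by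
    intro h
    induction h using MvPolynomial.induction_on' with
    | monomial s c =>
      rw [Th_monomial, ← mul_assoc, ← zeta_comm p c (φ _), mul_assoc, mul_assoc, ← map_mul, ← map_mul,
        zeta_comm p g]
    | add h h' e e' => rw [map_add, mul_add, add_mul, e, e']
  have h2 : zeta k n p z * (φ (zeta k n p g) * a - a * φ (zeta k n p g)) = 0 := by
    rw [mul_sub, ← mul_assoc, zeta_comm p z (φ _), mul_assoc, ← mul_assoc _ a, e, h1, sub_self]
  exact sub_eq_zero.1 (zeta_torsion p hp.ne_zero z hz _ h2)

theorem exists_f (hp : p.Prime) : ∃ f : MvPolynomial (Fin n ⊕ Fin n) k →ₐ[k] MvPolynomial (Fin n ⊕ Fin n) k,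
    ∀ g, φ (zeta k n p g) = zeta k n p (f g) := by
  choose F hF using fun i => center_eq p hp (φ (zeta k n p (X i)))
    (wDer_of_comm (phi_zeta_comm p φ hp (X i)))
  refine ⟨aeval F, fun g => ?_⟩
  have : (φ.comp (zeta k n p)) = (zeta k n p).comp (aeval F) := by
    apply MvPolynomial.algHom_ext
    intro i
    rw [AlgHom.comp_apply, AlgHom.comp_apply, aeval_X, hF]
  exact DFunLike.congr_fun this g

theorem exists_Th (hp : p.Prime) (a : WeylAlgebra k n) : ∃ h ∈ Red k n p, a = Th p φ h := by
  have key : ∀ N : ℕ, ∀ a z h, z ≠ 0 → h ∈ Red k n p → (∀ s, coeff s h ≠ 0 → s.degree < N) →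
      zeta k n p z * a = Th p φ h → ∃ h ∈ Red k n p, a = Th p φ h := by
    intro N
    induction N with
    | zero =>
      intro a z h hz _ hd e
      have h0 : h = 0 := by
        ext1 s
        by_contra hs
        exact absurd (hd s hs) (by simp)
      rw [h0, map_zero] at e
      exact ⟨0, zero_mem _, by rw [map_zero]; exact zeta_torsion p hp.ne_zero z hz a e⟩
    | succ N ih =>
      intro a z h hz hh hd e
      have h1 : ∀ i, ∃ h' ∈ Red k n p, wE φ i a = Th p φ h' := fun i =>
        ih (wE φ i a) z (pderiv i h) hz (Red_pderiv p i hh) (degree_pderiv i N h hd)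
          (by rw [← wE_Th, ← wE_zeta_mul, e])
      choose H hH hE using h1
      have h2 : ∀ i, C z * H i = pderiv i h := by
        intro i
        have : Th p φ (C z * H i - pderiv i h) = 0 := by
          rw [map_sub, Th_C_mul, ← hE, ← wE_Th, ← wE_zeta_mul, e, sub_self]
        exact sub_eq_zero.1 (Th_injective p φ hp
          (sub_mem (Red_C_mul p z (hH i)) (Red_pderiv p i hh)) this)
      have h3 : ∀ s, ∃ c, s ≠ 0 → coeff s h = z * c := by
        intro s
        by_cases hs : s = 0
        · exact ⟨0, fun h => absurd hs h⟩
        by_cases hne : coeff s h = 0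
        · exact ⟨0, fun _ => by rw [hne, mul_zero]⟩
        obtain ⟨i, hi⟩ := Finsupp.ne_iff.1 hs
        have h3 := coeff_from_pderiv s i hi h
        rw [← h2, coeff_C_mul] at h3
        have hk : ((s i : ℕ) : k) ≠ 0 := by
          intro h1
          rw [CharP.cast_eq_zero_iff _ p] at h1
          exact absurd (Nat.le_of_dvd (Nat.pos_of_ne_zero hi) h1) (by have := hh s hne i; omega)
        have hC : ((s i : ℕ) : MvPolynomial (Fin n ⊕ Fin n) k) * C ((s i : k)⁻¹) = 1 := by
          rw [← map_natCast C, ← C_mul, mul_inv_cancel₀ hk, C_1]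
        refine ⟨coeff (s - Finsupp.single i 1) (H i) * C ((s i : k)⁻¹), fun _ => ?_⟩
        rw [← mul_assoc, h3, mul_assoc, hC, mul_one]
      choose c hc using h3
      classical
      let h' : MvPolynomial (Fin n ⊕ Fin n) (MvPolynomial (Fin n ⊕ Fin n) k) :=
        ∑ s ∈ h.support.erase 0, monomial s (c s)
      have hh' : h' ∈ Red k n p := sum_mem fun s hs => Red_monomial p
        (hh s (mem_support_iff.1 (Finset.mem_of_mem_erase hs))) _
      have h4 : h = C z * h' + C (coeff 0 h) := by
        have h5 : C z * h' = ∑ s ∈ h.support.erase 0, monomial s (coeff s h) := by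
          rw [Finset.mul_sum]
          refine Finset.sum_congr rfl fun s hs => ?_
          rw [C_mul_monomial, hc s (Finset.ne_of_mem_erase hs)]
        rw [h5]
        conv_lhs => rw [← support_sum_monomial_coeff h]
        by_cases h0 : (0 : Fin n ⊕ Fin n →₀ ℕ) ∈ h.support
        · rw [← Finset.sum_erase_add _ _ h0]; rfl
        · rw [Finset.erase_eq_of_notMem h0, notMem_support_iff.1 h0, C_0, add_zero]
      have h6 : zeta k n p z * (a - Th p φ h') = zeta k n p (coeff 0 h) := by
        rw [mul_sub, e, ← Th_C_mul, ← map_sub, ← Th_C p φ]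
        congr 1
        conv_lhs => rw [h4]
        ring
      have h7 : ∀ b, (a - Th p φ h') * b = b * (a - Th p φ h') := by
        intro b
        apply sub_eq_zero.1
        apply zeta_torsion p hp.ne_zero z hz
        rw [mul_sub, ← mul_assoc, h6, ← mul_assoc, zeta_comm p z b, mul_assoc, h6, zeta_comm, sub_self]
      obtain ⟨c', hc'⟩ := center_eq p hp _ (wDer_of_comm h7)
      refine ⟨h' + C c', add_mem hh' (Red_C p hp.pos c'), ?_⟩
      rw [map_add, Th_C, ← hc']
      abel
  obtain ⟨z, hz, h, hh, e⟩ := rank_arg p φ hp a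
  exact key (h.totalDegree + 1) a z h hz hh (fun s hs =>
    Nat.lt_succ_of_le (le_totalDegree (mem_support_iff.2 hs))) e

theorem f_finite (hp : p.Prime) (f : MvPolynomial (Fin n ⊕ Fin n) k →ₐ[k] MvPolynomial (Fin n ⊕ Fin n) k)
    (hf : ∀ g, φ (zeta k n p g) = zeta k n p (f g))
    (hs : ∃ s : Finset (WeylAlgebra k n),
          AddSubgroup.closure {x : WeylAlgebra k n |
            ∃ g ∈ s, ∃ a b : WeylAlgebra k n, x = φ a * g * φ b} = ⊤) :
    (f : MvPolynomial (Fin n ⊕ Fin n) k →+* MvPolynomial (Fin n ⊕ Fin n) k).Finite := by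
  classical
  obtain ⟨S, hS⟩ := hs
  choose H hH hE using exists_Th (n := n) p φ hp
  let T : Finset (MvPolynomial (Fin n ⊕ Fin n) k) := S.biUnion fun g => (H g).support.image fun t => coeff t (H g)
  let M : AddSubgroup (MvPolynomial (Fin n ⊕ Fin n) k) :=
    AddSubgroup.closure {x | ∃ r, ∃ c ∈ T, x = f r * c}
  let G : AddSubgroup (WeylAlgebra k n) :=
    { carrier := {a | ∃ h ∈ Red k n p, a = Th p φ h ∧ ∀ t, coeff t h ∈ M}
      zero_mem' := ⟨0, zero_mem _, by simp, fun t => by rw [coeff_zero]; exact zero_mem _⟩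
      add_mem' := by
        rintro _ _ ⟨h, hh, rfl, hM⟩ ⟨h', hh', rfl, hM'⟩
        exact ⟨h + h', add_mem hh hh', by rw [map_add], fun t => by
          rw [coeff_add]; exact add_mem (hM t) (hM' t)⟩
      neg_mem' := by
        rintro _ ⟨h, hh, rfl, hM⟩
        exact ⟨-h, neg_mem hh, by rw [map_neg], fun t => by
          rw [coeff_neg]; exact neg_mem (hM t)⟩ }
  have h1 : ∀ c ∈ T, ∀ b, zeta k n p c * φ b ∈ G := by
    intro c hc b
    obtain ⟨v, rfl⟩ := span_id p hp.pos b
    refine ⟨redOf p fun b => f (v b) * c, redOf_mem p _, ?_, coeff_redOf_mem p _ M fun b =>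
      AddSubgroup.subset_closure ⟨v b, c, hc, rfl⟩⟩
    rw [Th_redOf, map_sum, Finset.mul_sum]
    refine Finset.sum_congr rfl fun b _ => ?_
    rw [map_mul φ, hf, ← mul_assoc, ← map_mul, mul_comm c]
  have h2 : G = ⊤ := by
    rw [eq_top_iff, ← hS, AddSubgroup.closure_le]
    rintro _ ⟨g, hg, a, b, rfl⟩
    rw [hE g, Th_eq_sum, Finset.mul_sum, Finset.sum_mul]
    refine sum_mem fun t ht => ?_
    rw [← mul_assoc, ← zeta_comm, mul_assoc, mul_assoc, ← map_mul, ← map_mul]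
    exact h1 _ (Finset.mem_biUnion.2 ⟨g, hg, Finset.mem_image_of_mem _ ht⟩) _
  have h3 : ∀ c, c ∈ M := by
    intro c
    have : zeta k n p c ∈ G := by rw [h2]; trivial
    obtain ⟨h, hh, e, hM⟩ := this
    rw [← Th_C p φ] at e
    have h4 : C c = h := sub_eq_zero.1 (Th_injective p φ hp (sub_mem (Red_C p hp.pos c) hh)
      (by rw [map_sub, e, sub_self]))
    have := hM 0
    rwa [← h4, coeff_zero_C] at this
  let N := @Submodule.span (MvPolynomial (Fin n ⊕ Fin n) k) (MvPolynomial (Fin n ⊕ Fin n) k) _ _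
      (f : MvPolynomial (Fin n ⊕ Fin n) k →+* MvPolynomial (Fin n ⊕ Fin n) k).toAlgebra.toModule (T : Set _)
  have h5 : ∀ c ∈ M, c ∈ N := by
    intro c hc
    induction hc using AddSubgroup.closure_induction with
    | mem x hx =>
      obtain ⟨r, c, hc, rfl⟩ := hx
      exact N.smul_mem r (@Submodule.subset_span _ _ _ _ (_) _ _ hc)
    | zero => exact N.zero_mem
    | add x y _ _ hx hy => exact N.add_mem hx hy
    | neg x _ hx => exact N.neg_mem hx
  have h6 : N = ⊤ := SetLike.ext fun c => ⟨fun _ => trivial, fun _ => h5 c (h3 c)⟩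
  exact (@Module.finite_def _ _ _ _ (_)).2 ⟨T, h6⟩

theorem f_degree (hp : p.Prime) (f : MvPolynomial (Fin n ⊕ Fin n) k →ₐ[k] MvPolynomial (Fin n ⊕ Fin n) k)
    (hf : ∀ g, φ (zeta k n p g) = zeta k n p (f g)) {d : ℕ} (hd : weylHomDeg φ ≤ d) (i) :
    (f (X i)).totalDegree ≤ d := by
  have h1 : psi k n (φ (wY k i)) ∈ Flt _ k (d + 1) := by
    apply psi_of_wdeg
    cases i with
    | inl i => 
      exact ((le_max_left _ _).trans (Finset.le_sup (f := fun i : Fin n => max (wdeg (φ (wX k i)))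
        (wdeg (φ (wD k i)))) (Finset.mem_univ i))).trans hd
    | inr i => 
      exact ((le_max_right _ _).trans (Finset.le_sup (f := fun i : Fin n => max (wdeg (φ (wX k i)))
        (wdeg (φ (wD k i)))) (Finset.mem_univ i))).trans hd
  have h2 := (psi_pow_sub h1 p).2
  rw [← map_pow, ← zeta_X, hf, psi_zeta] at h2
  have h3 := Flt_totalDegree h2
  rw [totalDegree_expand, mul_comm] at h3
  exact Nat.le_of_mul_le_mul_left h3 hp.pos

end theta
end WA


namespace WA


section rees

theorem rees_two {A : Type*} [Ring A] (p : ℕ) (hp : p.Prime) (hpA : (p : A) = 0) (G J : ℕ → AddSubgroup A)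
    (one : (1 : A) ∈ G 0) (mul : ∀ i j, ∀ a ∈ G i, ∀ b ∈ G j, a * b ∈ G (i + j))
    (hJG : ∀ i, J i ≤ G i) (GJ : ∀ i j, ∀ a ∈ G i, ∀ b ∈ J j, a * b ∈ J (i + j))
    (comm : ∀ i j, ∀ a ∈ G i, ∀ b ∈ G j, a * b - b * a ∈ J (i + j)) (a b : A) (ha : a ∈ G 1) (hb : b ∈ G 1) :
    (a + b) ^ p - (a ^ p + b ^ p) ∈ J p := by
  have JG : ∀ i j, ∀ a ∈ J i, ∀ b ∈ G j, a * b ∈ J (i + j) := by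
    intro i j a ha b hb
    have h1 := comm i j a (hJG i ha) b hb
    have h2 := GJ j i b hb a ha
    rw [add_comm j] at h2
    have := add_mem h1 h2
    rwa [sub_add_cancel] at this
  let S : Subring (Polynomial A) :=
    { carrier := {q | ∀ i, q.coeff i ∈ G i}
      zero_mem' := fun i => by rw [Polynomial.coeff_zero]; exact zero_mem _
      one_mem' := fun i => by
        rw [Polynomial.coeff_one]
        split_ifs with h
        · rw [h]; exact one
        · exact zero_mem _
      add_mem' := fun {a b} ha hb i => by rw [Polynomial.coeff_add]; exact add_mem (ha i) (hb i)
      neg_mem' := fun {a} ha i => by rw [Polynomial.coeff_neg]; exact neg_mem (ha i)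
      mul_mem' := fun {a b} ha hb i => by
        rw [Polynomial.coeff_mul]
        refine sum_mem fun x hx => ?_
        rw [← Finset.HasAntidiagonal.mem_antidiagonal.1 hx]
        exact mul _ _ _ (ha _) _ (hb _) }
  have hS : ∀ (q : S) i, q.1.coeff i ∈ G i := fun q => q.2
  let c : RingCon S :=
    { r := fun x y => ∀ i, (x.1 - y.1).coeff i ∈ J i
      iseqv := 
        { refl := fun x i => by rw [sub_self, Polynomial.coeff_zero]; exact zero_mem _
          symm := fun {x y} h i => by rw [← neg_sub, Polynomial.coeff_neg]; exact neg_mem (h i)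
          trans := fun {x y z} h h' i => by
            rw [← sub_add_sub_cancel _ y.1, Polynomial.coeff_add]; exact add_mem (h i) (h' i) }
      add' := fun {w x y z} h h' i => by
        have := add_mem (h i) (h' i)
        rw [← Polynomial.coeff_add] at this
        convert this using 2
        simp only [Subring.coe_add]
        abel
      mul' := fun {w x y z} h h' i => by
        have e : (w * y).1 - (x * z).1 = (w.1 - x.1) * y.1 + x.1 * (y.1 - z.1) := by
          simp only [Subring.coe_mul]; noncomm_ring
        rw [e, Polynomial.coeff_add, Polynomial.coeff_mul, Polynomial.coeff_mul]
        refine add_mem (sum_mem fun u hu => ?_) (sum_mem fun u hu => ?_)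
        · rw [← Finset.HasAntidiagonal.mem_antidiagonal.1 hu]
          exact JG _ _ _ (h _) _ (hS y _)
        · rw [← Finset.HasAntidiagonal.mem_antidiagonal.1 hu]
          exact GJ _ _ _ (hS x _) _ (h' _) }
  have hmem : ∀ a ∈ G 1, Polynomial.monomial 1 a ∈ S := by
    intro a ha i
    rw [Polynomial.coeff_monomial]
    split_ifs with h
    · rw [← h]; exact ha
    · exact zero_mem _
  let x : S := ⟨Polynomial.monomial 1 a, hmem a ha⟩
  let y : S := ⟨Polynomial.monomial 1 b, hmem b hb⟩
  have hcomm : Commute (x : c.Quotient) (y : c.Quotient) := by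
    have : ((x * y : S) : c.Quotient) = ((y * x : S) : c.Quotient) := by
      refine (RingCon.eq c).2 fun i => ?_
      change ((Polynomial.monomial 1 a) * (Polynomial.monomial 1 b) -
        (Polynomial.monomial 1 b) * (Polynomial.monomial 1 a) : Polynomial A).coeff i ∈ J i
      rw [Polynomial.monomial_mul_monomial, Polynomial.monomial_mul_monomial, ← map_sub,
        Polynomial.coeff_monomial]
      split_ifs with h
      · rw [← h]; exact comm 1 1 a ha b hb
      · exact zero_mem _
    exact this
  obtain ⟨r, hr⟩ := hcomm.exists_add_pow_prime_eq hp
  have hpQ : (p : c.Quotient) = 0 := by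
    have h1 : (p : S) = 0 := by
      apply Subtype.ext
      rw [Subring.coe_natCast, Subring.coe_zero, ← map_natCast Polynomial.C, hpA, map_zero]
    have : ((p : S) : c.Quotient) = ((0 : S) : c.Quotient) := by rw [h1]
    exact this
  rw [hpQ, zero_mul, zero_mul, zero_mul, add_zero] at hr
  have h2 : (((x + y) ^ p : S) : c.Quotient) = ((x ^ p + y ^ p : S) : c.Quotient) := hr
  have h3 := (RingCon.eq c).1 h2 p
  change ((Polynomial.monomial 1 a + Polynomial.monomial 1 b) ^ p - (Polynomial.monomial 1 a ^ p +
    Polynomial.monomial 1 b ^ p) : Polynomial A).coeff p ∈ J p at h3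
  rw [← map_add, Polynomial.monomial_pow, Polynomial.monomial_pow, Polynomial.monomial_pow, one_mul,
    ← map_add, ← map_sub, Polynomial.coeff_monomial, if_pos rfl] at h3
  exact h3

theorem rees_sum {A L : Type*} [Ring A] (p : ℕ) (hp : p.Prime) (hpA : (p : A) = 0) (G J : ℕ → AddSubgroup A)
    (one : (1 : A) ∈ G 0) (mul : ∀ i j, ∀ a ∈ G i, ∀ b ∈ G j, a * b ∈ G (i + j))
    (hJG : ∀ i, J i ≤ G i) (GJ : ∀ i j, ∀ a ∈ G i, ∀ b ∈ J j, a * b ∈ J (i + j))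
    (comm : ∀ i j, ∀ a ∈ G i, ∀ b ∈ G j, a * b - b * a ∈ J (i + j)) (S : Finset L) (a : L → A)
    (ha : ∀ l ∈ S, a l ∈ G 1) :
    (∑ l ∈ S, a l) ^ p - ∑ l ∈ S, a l ^ p ∈ J p := by
  classical
  induction S using Finset.induction_on with
  | empty => rw [Finset.sum_empty, Finset.sum_empty, zero_pow hp.ne_zero, sub_zero]; exact zero_mem _
  | insert l S hl ih =>
    rw [Finset.sum_insert hl, Finset.sum_insert hl]
    have h1 := ih fun l hl => ha l (Finset.mem_insert_of_mem hl)
    have h2 := rees_two p hp hpA G J one mul hJG GJ comm (a l) (∑ l ∈ S, a l)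
      (ha l (Finset.mem_insert_self _ _)) (sum_mem fun l hl => ha l (Finset.mem_insert_of_mem hl))
    convert add_mem h1 h2 using 1
    abel

end rees
end WA


namespace WA
open MvPolynomial

theorem closure_mul_mem {A : Type*} [Ring A] (S T : Set A) (H : AddSubgroup A)
    (h : ∀ x ∈ S, ∀ y ∈ T, x * y ∈ H) {a b : A} (ha : a ∈ AddSubgroup.closure S)
    (hb : b ∈ AddSubgroup.closure T) : a * b ∈ H := by
  induction ha using AddSubgroup.closure_induction with
  | zero => rw [zero_mul]; exact zero_mem _
  | add x y _ _ hx hy => rw [add_mul]; exact add_mem hx hy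
  | neg x _ hx => rw [neg_mul]; exact neg_mem hx
  | mem x hx =>
    induction hb using AddSubgroup.closure_induction with
    | zero => rw [mul_zero]; exact zero_mem _
    | add x y _ _ hx hy => rw [mul_add]; exact add_mem hx hy
    | neg x _ hx => rw [mul_neg]; exact neg_mem hx
    | mem y hy => exact h x hx y hy

theorem closure_comm_mem {A : Type*} [Ring A] (S T : Set A) (H : AddSubgroup A)
    (h : ∀ x ∈ S, ∀ y ∈ T, x * y - y * x ∈ H) {a b : A} (ha : a ∈ AddSubgroup.closure S)
    (hb : b ∈ AddSubgroup.closure T) : a * b - b * a ∈ H := by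
  induction ha using AddSubgroup.closure_induction with
  | zero => rw [zero_mul, mul_zero, sub_zero]; exact zero_mem _
  | add x y _ _ hx hy =>
    convert add_mem hx hy using 1
    noncomm_ring
  | neg x _ hx =>
    convert neg_mem hx using 1
    noncomm_ring
  | mem x hx =>
    induction hb using AddSubgroup.closure_induction with
    | zero => rw [zero_mul, mul_zero, sub_zero]; exact zero_mem _
    | add x y _ _ hx hy =>
      convert add_mem hx hy using 1
      noncomm_ring
    | neg x _ hx =>
      convert neg_mem hx using 1
      noncomm_ring
    | mem y hy => exact h x hx y hy

section final
variable {k : Type*} [Field k] {n : ℕ} (p : ℕ) [CharP k p]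
  (φ : WeylAlgebra k n →ₐ[k] WeylAlgebra k n)
  (f : MvPolynomial (Fin n ⊕ Fin n) k →ₐ[k] MvPolynomial (Fin n ⊕ Fin n) k)
  (hf : ∀ g, φ (zeta k n p g) = zeta k n p (f g)) {R : ℕ}
  {Γ : Type*} [LinearOrderedCommGroupWithZero Γ]
  (D : NData p R (f : MvPolynomial (Fin n ⊕ Fin n) k →+* MvPolynomial (Fin n ⊕ Fin n) k) X Γ)

theorem phi_injective (hp : p.Prime) (hinj : Function.Injective f)
    (hf : ∀ g, φ (zeta k n p g) = zeta k n p (f g)) : Function.Injective φ := by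
  rw [injective_iff_map_eq_zero]
  intro a ha
  obtain ⟨v, rfl⟩ := span_id p hp.pos a
  have h1 : Th p φ (redOf p fun b => f (v b)) = 0 := by
    rw [Th_redOf, ← ha, map_sum]
    exact Finset.sum_congr rfl fun b _ => by rw [map_mul φ, hf]
  have h2 := Th_injective p φ hp (redOf_mem p _) h1
  refine Finset.sum_eq_zero fun b _ => ?_
  have h3 := coeff_redOf p (fun b => f (v b)) b
  rw [h2, coeff_zero] at h3
  rw [hinj (h3.symm.trans (map_zero f).symm), map_zero, zero_mul]

/-- The filtration. -/
def GG (ρ : Γ) : AddSubgroup (WeylAlgebra k n) :=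
  AddSubgroup.closure {x | ∃ s a z, psi k n a ∈ Flt _ k (s + 1) ∧ D.γ ^ s * D.N z ^ p ≤ ρ ∧
    x = φ a * zeta k n p z}

omit [CharP k p] in
theorem GG_mem {s : ℕ} {a z} (ha : psi k n a ∈ Flt _ k (s + 1)) {ρ : Γ} (h : D.γ ^ s * D.N z ^ p ≤ ρ) :
    φ a * zeta k n p z ∈ GG p φ f D ρ := AddSubgroup.subset_closure ⟨s, a, z, ha, h, rfl⟩

omit [CharP k p] in
theorem gamma_pos : 0 < D.γ := zero_lt_one.trans D.hγ

omit [CharP k p] in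
/-- Elements of strictly smaller order. -/
theorem GG_mem' {s : ℕ} {a z} (ha : psi k n a ∈ Flt _ k s) {ρ : Γ} (h : D.γ ^ s * D.N z ^ p ≤ ρ) :
    φ a * zeta k n p z ∈ GG p φ f D (D.γ⁻¹ * ρ) := by
  cases s with
  | zero =>
    have : psi k n a = 0 := by
      ext1 t
      by_contra ht
      exact absurd (ha t ht) (by simp)
    have h0 : a = 0 := psi_injective (by rw [this, map_zero])
    rw [h0, map_zero, zero_mul]
    exact zero_mem _
  | succ s =>
    refine GG_mem p φ f D ha ?_
    have hγ := (gamma_pos p f D).ne'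
    calc D.γ ^ s * D.N z ^ p = D.γ⁻¹ * (D.γ ^ (s + 1) * D.N z ^ p) := by
          rw [pow_succ', ← mul_assoc, ← mul_assoc, inv_mul_cancel₀ hγ, one_mul]
      _ ≤ D.γ⁻¹ * ρ := mul_le_mul_right h _

omit [CharP k p] in
theorem GG_mono {ρ σ : Γ} (h : ρ ≤ σ) : GG p φ f D ρ ≤ GG p φ f D σ := by
  refine (AddSubgroup.closure_le _).2 ?_
  rintro _ ⟨s, a, z, ha, hs, rfl⟩
  exact GG_mem p φ f D ha (hs.trans h)

omit [CharP k p] in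
theorem val_mul {s t : ℕ} {z w ρ σ} (h : D.γ ^ s * D.N z ^ p ≤ ρ) (h' : D.γ ^ t * D.N w ^ p ≤ σ) :
    D.γ ^ (s + t) * D.N (z * w) ^ p ≤ ρ * σ := by
  calc D.γ ^ (s + t) * D.N (z * w) ^ p ≤ D.γ ^ (s + t) * (D.N z * D.N w) ^ p :=
        mul_le_mul_right (pow_le_pow_left' (D.mul z w) p) _
    _ = (D.γ ^ s * D.N z ^ p) * (D.γ ^ t * D.N w ^ p) := by rw [pow_add, mul_pow, mul_mul_mul_comm]
    _ ≤ ρ * σ := mul_le_mul' h h'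

theorem GG_mul {ρ σ : Γ} {a b} (ha : a ∈ GG p φ f D ρ) (hb : b ∈ GG p φ f D σ) :
    a * b ∈ GG p φ f D (ρ * σ) := by
  refine closure_mul_mem _ _ _ ?_ ha hb
  intro x hx y hy
  obtain ⟨s, a, z, ha, hs, rfl⟩ := hx
  obtain ⟨t, b, w, hb, ht, rfl⟩ := hy
  have e : φ a * zeta k n p z * (φ b * zeta k n p w) = φ (a * b) * zeta k n p (z * w) := by
    rw [map_mul φ, map_mul (zeta k n p), mul_assoc, ← mul_assoc (zeta k n p z), zeta_comm p z]
    simp only [mul_assoc]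
  rw [e]
  exact GG_mem p φ f D (psi_mul_mem ha hb) (val_mul p f D hs ht)

theorem GG_comm {ρ σ : Γ} {a b} (ha : a ∈ GG p φ f D ρ) (hb : b ∈ GG p φ f D σ) :
    a * b - b * a ∈ GG p φ f D (D.γ⁻¹ * (ρ * σ)) := by
  refine closure_comm_mem _ _ _ ?_ ha hb
  intro x hx y hy
  obtain ⟨s, a, z, ha, hs, rfl⟩ := hx
  obtain ⟨t, b, w, hb, ht, rfl⟩ := hy
  have e : ∀ a b z w, φ a * zeta k n p z * (φ b * zeta k n p w) = φ (a * b) * zeta k n p (z * w) := by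
    intro a b z w
    rw [map_mul φ, map_mul (zeta k n p), mul_assoc, ← mul_assoc (zeta k n p z), zeta_comm p z]
    simp only [mul_assoc]
  rw [e, e, mul_comm w z, ← sub_mul, ← map_sub]
  exact GG_mem' p φ f D (psi_comm_mem ha hb) (val_mul p f D hs ht)

theorem N_C (c : k) : D.N (C c) ≤ 1 := by
  have := D.const_le c
  rwa [AlgHom.coe_toRingHom, show f (C c) = C c from f.commutes c] at this

theorem N_pow (z) (m : ℕ) : D.N (z ^ m) ≤ D.N z ^ m := by
  induction m with
  | zero => rw [pow_zero, pow_zero, ← C_1]; exact N_C p f D 1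
  | succ m ih => rw [pow_succ, pow_succ]; exact (D.mul _ _).trans (mul_le_mul_left ih _)

/-- Elements with controlled coefficients. -/
def HH (hp : p ≠ 0) (ρ : Γ) : AddSubgroup (WeylAlgebra k n) where
  carrier := {x | ∃ h ∈ Red k n p, x = Th p φ h ∧ ∀ s : Fin n ⊕ Fin n →₀ ℕ, D.γ ^ s.degree * D.N (coeff s h) ^ p ≤ ρ}
  zero_mem' := ⟨0, zero_mem _, by rw [map_zero], fun s => by
    rw [coeff_zero, D.zero, zero_pow hp, mul_zero]; exact zero_le⟩
  add_mem' := by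
    rintro _ _ ⟨h, hh, rfl, hM⟩ ⟨h', hh', rfl, hM'⟩
    refine ⟨h + h', add_mem hh hh', by rw [map_add], fun s => ?_⟩
    rw [coeff_add]
    rcases le_max_iff.1 (D.add (coeff s h) (coeff s h')) with h1 | h1
    · exact (mul_le_mul_right (pow_le_pow_left' h1 p) _).trans (hM s)
    · exact (mul_le_mul_right (pow_le_pow_left' h1 p) _).trans (hM' s)
  neg_mem' := by
    rintro _ ⟨h, hh, rfl, hM⟩
    exact ⟨-h, neg_mem hh, by rw [map_neg], fun s => by rw [coeff_neg, D.neg]; exact hM s⟩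

include hf in
theorem GG_le_HH (hp : p.Prime) (ρ : Γ) : GG p φ f D ρ ≤ HH p φ f D hp.ne_zero ρ := by
  classical
  refine (AddSubgroup.closure_le _).2 ?_
  rintro _ ⟨s, a, z, ha, hs, rfl⟩
  rw [eq_sum_mon a, map_sum, Finset.sum_mul]
  refine sum_mem fun u hu => ?_
  obtain ⟨q, b, e⟩ := exp_split p hp.pos u
  set c := coeff u (psi k n a)
  have hdeg : u.degree ≤ s := Nat.le_of_lt_succ (ha u (mem_support_iff.1 hu))
  refine ⟨monomial (fe p b) (C c * (f (monomial q 1) * z)), Red_monomial p (fe_lt p b) _, ?_, ?_⟩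
  · rw [Th_monomial, map_smul, e, mon_split, map_mul φ, hf, map_mul, map_mul, zeta_C, Algebra.smul_def,
      mul_assoc, mul_assoc, mul_assoc, mul_assoc, zeta_comm p z]
  · intro t
    rw [coeff_monomial]
    split_ifs with ht
    · rw [← ht]
      have h1 : D.N (C c * (f (monomial q 1) * z)) ≤ D.γ ^ q.degree * D.N z :=
        calc _ ≤ D.N (C c) * (D.N (f (monomial q 1)) * D.N z) :=
              (D.mul _ _).trans (mul_le_mul_right (D.mul _ _) _)
          _ ≤ 1 * (D.γ ^ q.degree * D.N z) :=
              mul_le_mul' (N_C p f D c) (mul_le_mul_left (D.mon_le q) _)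
          _ = _ := one_mul _
      calc _ ≤ D.γ ^ (fe p b).degree * (D.γ ^ q.degree * D.N z) ^ p :=
            mul_le_mul_right (pow_le_pow_left' h1 p) _
        _ = D.γ ^ u.degree * D.N z ^ p := by
            rw [e, map_add, map_nsmul, mul_pow, pow_add, ← pow_mul, ← mul_assoc, smul_eq_mul,
              mul_comm p, mul_comm (D.γ ^ (fe p b).degree)]
        _ ≤ D.γ ^ s * D.N z ^ p := mul_le_mul_left (pow_le_pow_right₀ D.hγ.le hdeg) _
        _ ≤ ρ := hs
    · rw [D.zero, zero_pow hp.ne_zero, mul_zero]; exact zero_le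

include hf in
theorem GG_coeff (hp : p.Prime) (ρ : Γ) {h} (hh : h ∈ Red k n p) (hG : Th p φ h ∈ GG p φ f D ρ)
    (s : Fin n ⊕ Fin n →₀ ℕ) : D.γ ^ s.degree * D.N (coeff s h) ^ p ≤ ρ := by
  obtain ⟨h', hh', e, hb⟩ := GG_le_HH p φ f hf D hp ρ hG
  have : h = h' := sub_eq_zero.1 (Th_injective p φ hp (sub_mem hh hh') (by rw [map_sub, e, sub_self]))
  rw [this]; exact hb s

include hf D in
theorem gen_mem_range (hp : p.Prime) (j) : wY k j ∈ Set.range φ := by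
  classical
  obtain ⟨h, hh, e⟩ := exists_Th p φ hp (wY k j)
  have hne : h.support.Nonempty := by
    rw [Finset.nonempty_iff_ne_empty, Ne, support_eq_empty]
    rintro rfl
    rw [map_zero] at e
    have h1 := zeta_X (k := k) p j
    rw [e, zero_pow hp.ne_zero, ← map_zero (zeta k n p)] at h1
    exact X_ne_zero j (zeta_injective p hp.ne_zero h1)
  obtain ⟨s0, hs0, hmax⟩ := Finset.exists_max_image h.support
    (fun s => D.γ ^ s.degree * D.N (coeff s h) ^ p) hne
  set ρ := D.γ ^ s0.degree * D.N (coeff s0 h) ^ p with hρ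
  have hγ := gamma_pos p f D
  have hρ0 : 0 < ρ := by
    rw [zero_lt_iff]
    exact mul_ne_zero (pow_ne_zero _ hγ.ne') (pow_ne_zero _ (D.ne_zero _ (mem_support_iff.1 hs0)))
  have hγ1 : D.γ⁻¹ < 1 := inv_lt_one_of_one_lt₀ D.hγ
  set y := ∑ s ∈ h.support, f (monomial s 1) * coeff s h ^ p with hy
  -- the Frobenius computation
  have hpA : (p : WeylAlgebra k n) = 0 := by
    rw [← map_natCast (algebraMap k (WeylAlgebra k n)), CharP.cast_eq_zero, map_zero]
  have h1 := rees_sum p hp hpA (fun i => GG p φ f D (ρ ^ i)) (fun i => GG p φ f D (D.γ⁻¹ * ρ ^ i))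
    (by
      have : φ 1 * zeta k n p 1 ∈ GG p φ f D (ρ ^ 0) := by
        refine GG_mem p φ f D (s := 0) (by rw [psi_one]; exact Flt_C 1) ?_
        rw [pow_zero, pow_zero, one_mul]
        exact pow_le_one' (by rw [← C_1]; exact N_C p f D 1) p
      rwa [map_one, map_one, mul_one] at this)
    (by intro i j a ha b hb; rw [pow_add]; exact GG_mul p φ f D ha hb)
    (fun i => GG_mono p φ f D (by
      calc D.γ⁻¹ * ρ ^ i ≤ 1 * ρ ^ i := mul_le_mul_left hγ1.le _
        _ = _ := one_mul _))
    (by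
      intro i j a ha b hb
      have := GG_mul p φ f D ha hb
      rwa [mul_left_comm, ← pow_add] at this)
    (by intro i j a ha b hb; rw [pow_add]; exact GG_comm p φ f D ha hb)
    h.support (fun s => φ (mon k s) * zeta k n p (coeff s h))
    (by
      intro s hs
      rw [pow_one]
      exact GG_mem p φ f D (TT_mon s).1 (hmax s hs))
  have h2 : ∑ s ∈ h.support, φ (mon k s) * zeta k n p (coeff s h) = wY k j := by
    rw [e, Th_eq_sum]
    exact Finset.sum_congr rfl fun s _ => (zeta_comm p _ _).symm
  have h3 : ∑ s ∈ h.support, (φ (mon k s) * zeta k n p (coeff s h)) ^ p - zeta k n p y ∈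
      GG p φ f D (D.γ⁻¹ * ρ ^ p) := by
    rw [hy, map_sum, ← Finset.sum_sub_distrib]
    refine sum_mem fun s hs => ?_
    have e1 : (φ (mon k s) * zeta k n p (coeff s h)) ^ p - zeta k n p (f (monomial s 1) * coeff s h ^ p)
        = φ (mon k s ^ p - zeta k n p (monomial s 1)) * zeta k n p (coeff s h ^ p) := by
      rw [(show Commute (φ (mon k s)) (zeta k n p (coeff s h)) from (zeta_comm p _ _).symm).mul_pow,
        map_sub, hf, sub_mul, map_pow φ, map_pow (zeta k n p), map_mul (zeta k n p), map_pow (zeta k n p)]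
    rw [e1]
    refine GG_mem' p φ f D (mon_pow_sub p s) ?_
    calc D.γ ^ (p * s.degree) * D.N (coeff s h ^ p) ^ p
        ≤ D.γ ^ (p * s.degree) * (D.N (coeff s h) ^ p) ^ p :=
          mul_le_mul_right (pow_le_pow_left' (N_pow p f D _ p) p) _
      _ = (D.γ ^ s.degree * D.N (coeff s h) ^ p) ^ p := by rw [mul_pow, mul_comm p, pow_mul]
      _ ≤ ρ ^ p := pow_le_pow_left' (hmax s hs) p
  have h4 : Th p φ (C (X j - y)) ∈ GG p φ f D (D.γ⁻¹ * ρ ^ p) := by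
    rw [Th_C, map_sub, zeta_X]
    rw [h2] at h1
    convert add_mem h1 h3 using 1
    abel
  have h5 := GG_coeff p φ f hf D hp _ (Red_C p hp.pos _) h4 0
  rw [coeff_zero_C, map_zero, pow_zero, one_mul] at h5
  have h6 : ρ ≤ D.N y := D.orth h.support (fun s hs => hh s (mem_support_iff.1 hs)) (fun s => coeff s h) s0 hs0
  have h7 : D.N y ≤ max (D.N (X j)) (D.N (X j - y)) := by
    have := D.add (X j) (-(X j - y))
    rw [D.neg, neg_sub, add_sub_cancel] at this
    exact this
  have h8 : ρ ≤ D.γ ^ R := by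
    rcases le_max_iff.1 (h6.trans h7) with h9 | h9
    · exact h9.trans (D.gen_le j)
    · exfalso
      have h10 := (pow_le_pow_left' h9 p).trans h5
      have h11 : D.γ⁻¹ * ρ ^ p < ρ ^ p := by
        have := mul_lt_mul_of_pos_right hγ1 (pow_pos hρ0 p)
        rwa [one_mul] at this
      exact absurd h10 (not_le.2 h11)
  have h9 : ∀ s ∈ h.support, ∃ c, coeff s h = C c := by
    intro s hs
    have h10 : D.N (coeff s h) ^ p ≤ D.γ ^ R := by
      refine le_trans ?_ ((hmax s hs).trans h8)
      calc D.N (coeff s h) ^ p = 1 * D.N (coeff s h) ^ p := (one_mul _).symm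
        _ ≤ _ := mul_le_mul_left (one_le_pow₀ D.hγ.le) _
    obtain ⟨q, hq, hq0⟩ := D.const _ h10
    refine const_of_integral _ q hq ?_
    rw [Polynomial.aeval_def, ← hq0]
    congr 1
    ext1 c
    exact (f.commutes c).symm
  rw [e, Th_eq_sum]
  change _ ∈ φ.range
  refine sum_mem fun s hs => ?_
  obtain ⟨c, hc⟩ := h9 s hs
  rw [hc, zeta_C]
  exact mul_mem (φ.range.algebraMap_mem c) ⟨_, rfl⟩

include hf D in
theorem phi_surjective (hp : p.Prime) : Function.Surjective φ := by
  intro a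
  change a ∈ φ.range
  induction a using wY_full_induction with
  | hc c => exact φ.range.algebraMap_mem c
  | hadd a b ha hb => exact add_mem ha hb
  | hmul a b ha hb => exact mul_mem ha hb
  | hY j => exact gen_mem_range p φ f hf D hp j

end final
end WA


/-- For all positive integers `n` and `d` there is a bound `D = D(n, d)`
depending only on `n` and `d` such that: for every field `k` of characteristic `p > D` and
every `k`-algebra endomorphism `φ` of `A = A_n(k)` with `deg(φ) ≤ d` for which the bimodule
`₍φ₎A₍φ₎` is finitely generated (i.e. there are finitely many elements `g` such that every
element of `A` is a sum of elements `φ(a) g φ(b)`), `φ` is an isomorphism. -/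
theorem weylAlgebra_endomorphism_iso_of_fg_bimodule_large_char (n d : ℕ)
    (hn : 0 < n) (hd : 0 < d) :
    ∃ D : ℕ, ∀ (k : Type u) [Field k], ∀ (p : ℕ) [CharP k p], D < p →
      ∀ φ : WeylAlgebra k n →ₐ[k] WeylAlgebra k n, weylHomDeg φ ≤ d →
        (∃ s : Finset (WeylAlgebra k n),
          AddSubgroup.closure {x : WeylAlgebra k n |
            ∃ g ∈ s, ∃ a b : WeylAlgebra k n, x = φ a * g * φ b} = ⊤) →
        Function.Bijective φ := by
  have : Nonempty (Fin n ⊕ Fin n) := ⟨.inl ⟨0, hn⟩⟩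
  obtain ⟨D, R, H⟩ := WA.core.{u} (Fin n ⊕ Fin n) d
  refine ⟨D, fun k _ p _ hD φ hφ hs => ?_⟩
  have hp : p.Prime := (CharP.char_is_prime_or_zero k p).resolve_right (by omega)
  have : Fact p.Prime := ⟨hp⟩
  obtain ⟨f, hf⟩ := WA.exists_f p φ hp
  obtain ⟨hinj, Γ, _, ⟨N⟩⟩ := H k p hD f (WA.f_finite p φ hp f hf hs) (WA.f_degree p φ hp f hf hφ)
  exact ⟨WA.phi_injective p φ f hp hinj hf, WA.phi_surjective p φ f hf N hp⟩
end
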